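/- Let d ≥ 1 and a > 2b > 0. Then there exists a solution φ₀ of the nuclear NLS equation −∇·(∇φ/(1−φ²)) + (|∇φ|²/(1−φ²)²)φ − aφ³ + bφ = 0 on ℝ^d with 0 < φ₀ < 1 which is radial and strictly decreasing in |x|, tends to 0 at infinity, and is unique in the following sense: every C² solution φ of the same equation with 0 < φ(x) < 1 for all x and φ(x) → 0 as |x| → ∞ satisfies φ(x) = φ₀(x − x₀) for some x₀ ∈ ℝ^d. -/

import Mathlib

open MeasureTheory Real Filter

noncomputable section

/-- Partial derivative of a function on `ℝ^d` in the `i`-th coordinate direction. -/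
def pd {d : ℕ} (i : Fin d) (f : EuclideanSpace ℝ (Fin d) → ℝ)
    (x : EuclideanSpace ℝ (Fin d)) : ℝ :=
  fderiv ℝ f x (EuclideanSpace.single i 1)

/-- The nuclear NLS equation
`−∇·(∇φ/(1−φ²)) + (|∇φ|²/(1−φ²)²)φ − aφ³ + bφ = 0` on `ℝ^d`. -/
def NuclearNLS (d : ℕ) (a b : ℝ) (φ : EuclideanSpace ℝ (Fin d) → ℝ) : Prop :=
  ∀ x, -(∑ i, pd i (fun y => pd i φ y / (1 - φ y ^ 2)) x)
      + ((∑ i, (pd i φ x) ^ 2) / (1 - φ x ^ 2) ^ 2) * φ x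
      - a * φ x ^ 3 + b * φ x = 0

/-!
With `φ = sin u` the equation becomes `-Δu = f(u)`, where `f(u) = sin u cos u (a sin² u - b)`.

Existence is by shooting. Radial solutions with central value near the equilibrium `π / 2`, whose
energy is positive because `a > 2b`, cross zero, while those with small central value are trapped at
positive values. Both sets of central values are open, and a central value in neither of them yields
a decaying profile. A decaying solution is radial about its maximum by moving planes, as `f` is
decreasing near `0`.

For the uniqueness of the radial profile `U`, the Pohozaev identity and the monotonicity of
`u f'(u) / f(u)` make the logarithmic slope `-r U'(r) / U(r)` strictly increasing, so `r ^ θ U(r)`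
has a unique maximum point for each `θ > 0`. Suppose the maxima of two profiles agree for some `θ`.
If they are attained at different radii, comparing one profile with the rescalings
`lam ^ θ W(lam r)` of the other, first outside and then inside the peak radius, gives contradictory
inequalities for `f(u) / u ^ (1 + 2 / θ)`; otherwise ODE uniqueness applies. If the maxima agree for
no `θ`, one profile lies below the other, and sliding the larger one inward until it first touches
the smaller one shows that they coincide.
-/

section Nonlinearity

/-- The nonlinearity `f(u) = sin u cos u (a sin² u - b)` of the semilinear equation `-Δu = f(u)`
satisfied by `u = arcsin φ` when `φ` solves the nuclear NLS equation. -/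
def nlsForce (a b x : ℝ) : ℝ := sin x * cos x * (a * sin x ^ 2 - b)

/-- The derivative of `nlsForce a b`. -/
def nlsForceDeriv (a b x : ℝ) : ℝ :=
  (cos x ^ 2 - sin x ^ 2) * (a * sin x ^ 2 - b) + 2 * a * sin x ^ 2 * cos x ^ 2

/-- The primitive of `nlsForce a b` vanishing at `0`. -/
def nlsPotential (a b x : ℝ) : ℝ := a * sin x ^ 4 / 4 - b * sin x ^ 2 / 2

/-- The elasticity `x f'(x) / f(x)` of `f = nlsForce a b`, in a form which displays its
monotonicity. -/
def nlsElasticity (a b x : ℝ) : ℝ :=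
  x * (cos x / sin x) * (3 + 2 * b / (a * sin x ^ 2 - b)) - x * (sin x / cos x)

variable {a b x y : ℝ}

theorem hasDerivAt_nlsPotential (a b x : ℝ) :
    HasDerivAt (nlsPotential a b) (nlsForce a b x) x := by
  refine ((((hasDerivAt_sin x).pow 4).const_mul a).div_const 4).sub
    ((((hasDerivAt_sin x).pow 2).const_mul b).div_const 2) |>.congr_deriv ?_
  simp only [nlsForce]
  norm_num
  ring

theorem hasDerivAt_nlsForce (a b x : ℝ) : HasDerivAt (nlsForce a b) (nlsForceDeriv a b x) x := by
  refine ((hasDerivAt_sin x).mul (hasDerivAt_cos x)).mul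
    ((((hasDerivAt_sin x).pow 2).const_mul a).sub_const b) |>.congr_deriv ?_
  simp only [nlsForceDeriv, Pi.mul_apply, Pi.pow_apply]
  norm_num
  ring

theorem continuous_nlsForce (a b : ℝ) : Continuous (nlsForce a b) := by
  unfold nlsForce; fun_prop

theorem continuous_nlsPotential (a b : ℝ) : Continuous (nlsPotential a b) := by
  unfold nlsPotential; fun_prop

theorem continuous_nlsForceDeriv (a b : ℝ) : Continuous (nlsForceDeriv a b) := by
  unfold nlsForceDeriv; fun_prop

theorem abs_mul_sin_sq_sub_le (a b x : ℝ) : |a * sin x ^ 2 - b| ≤ |a| + |b| := by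
  refine (abs_sub _ _).trans ?_
  rw [abs_mul, abs_of_nonneg (sq_nonneg (sin x))]
  nlinarith [abs_nonneg a, sin_sq_le_one x]

theorem abs_sin_mul_cos_le_one (x : ℝ) : |sin x * cos x| ≤ 1 := by
  rw [abs_mul]
  exact mul_le_one₀ (abs_sin_le_one x) (abs_nonneg _) (abs_cos_le_one x)

theorem abs_nlsForce_le (a b x : ℝ) : |nlsForce a b x| ≤ |a| + |b| := by
  rw [nlsForce, abs_mul]
  exact (mul_le_mul (abs_sin_mul_cos_le_one x) (abs_mul_sin_sq_sub_le a b x) (abs_nonneg _)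
    zero_le_one).trans_eq (one_mul _)

theorem abs_nlsForceDeriv_le (a b x : ℝ) : |nlsForceDeriv a b x| ≤ 3 * |a| + |b| := by
  have hcos : |cos x ^ 2 - sin x ^ 2| ≤ 1 := by
    rw [← cos_two_mul']; exact abs_cos_le_one _
  have hfirst := mul_le_mul hcos (abs_mul_sin_sq_sub_le a b x) (abs_nonneg _) zero_le_one
  have hprod : |(sin x * cos x) ^ 2| ≤ 1 := by
    rw [abs_pow]; exact pow_le_one₀ (abs_nonneg _) (abs_sin_mul_cos_le_one x)
  have hsecond : |2 * a * sin x ^ 2 * cos x ^ 2| ≤ 2 * |a| := by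
    rw [show 2 * a * sin x ^ 2 * cos x ^ 2 = 2 * (a * (sin x * cos x) ^ 2) by ring, abs_mul,
      abs_mul, abs_two]
    nlinarith [abs_nonneg a]
  refine (abs_add_le _ _).trans ?_
  rw [abs_mul]
  linarith

theorem lipschitzWith_nlsForce (a b : ℝ) : ∃ K : NNReal, LipschitzWith K (nlsForce a b) := by
  refine ⟨3 * ‖a‖₊ + ‖b‖₊, lipschitzWith_of_nnnorm_deriv_le
    (fun x => (hasDerivAt_nlsForce a b x).differentiableAt) fun x => ?_⟩
  rw [(hasDerivAt_nlsForce a b x).deriv]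
  exact abs_nlsForceDeriv_le a b x

theorem neg_div_two_le_nlsPotential (ha : 0 ≤ a) (hb : 0 ≤ b) (x : ℝ) :
    -b / 2 ≤ nlsPotential a b x := by
  have hsin : b * sin x ^ 2 ≤ b * 1 := mul_le_mul_of_nonneg_left (sin_sq_le_one x) hb
  have : 0 ≤ a * sin x ^ 4 := by positivity
  rw [nlsPotential]
  linarith

theorem nlsPotential_le (ha : 0 ≤ a) (hb : 0 ≤ b) (x : ℝ) : nlsPotential a b x ≤ a := by
  have hsin : a * sin x ^ 4 ≤ a * 1 := by
    refine mul_le_mul_of_nonneg_left ?_ ha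
    rw [show sin x ^ 4 = (sin x ^ 2) ^ 2 by ring]
    exact pow_le_one₀ (sq_nonneg _) (sin_sq_le_one x)
  have : 0 ≤ b * sin x ^ 2 := by positivity
  rw [nlsPotential]
  linarith

theorem sin_pos_of_mem_Ioo_pi_div_two (hx : x ∈ Set.Ioo 0 (π / 2)) : 0 < sin x :=
  sin_pos_of_pos_of_lt_pi hx.1 (by linarith [hx.2, pi_pos])

theorem cos_pos_of_mem_Ioo_pi_div_two (hx : x ∈ Set.Ioo 0 (π / 2)) : 0 < cos x :=
  cos_pos_of_mem_Ioo ⟨by linarith [hx.1, pi_pos], hx.2⟩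

theorem nlsForce_pos (hx : x ∈ Set.Ioo 0 (π / 2)) (h : b < a * sin x ^ 2) :
    0 < nlsForce a b x :=
  mul_pos (mul_pos (sin_pos_of_mem_Ioo_pi_div_two hx) (cos_pos_of_mem_Ioo_pi_div_two hx))
    (sub_pos.2 h)

theorem nlsForce_nonpos (hx : x ∈ Set.Ioo 0 (π / 2)) (h : a * sin x ^ 2 ≤ b) :
    nlsForce a b x ≤ 0 :=
  mul_nonpos_of_nonneg_of_nonpos (mul_pos (sin_pos_of_mem_Ioo_pi_div_two hx)
    (cos_pos_of_mem_Ioo_pi_div_two hx)).le (sub_nonpos.2 h)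

theorem lt_mul_sin_sq_of_nlsPotential_nonneg (hb : 0 < b) (hx : x ∈ Set.Ioo 0 (π / 2))
    (h : 0 ≤ nlsPotential a b x) : b < a * sin x ^ 2 := by
  have hsin := sin_pos_of_mem_Ioo_pi_div_two hx
  have : 0 < sin x ^ 2 := by positivity
  rw [nlsPotential] at h
  by_contra! hle
  nlinarith

theorem nlsPotential_le_neg_mul_sq (hb : 0 < b) (hx : x ∈ Set.Icc 0 (π / 2))
    (h : a * sin x ^ 2 ≤ b) : nlsPotential a b x ≤ -(b / π ^ 2) * x ^ 2 := by
  have hjordan : 4 * (x ^ 2 / π ^ 2) ≤ sin x ^ 2 := calc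
    4 * (x ^ 2 / π ^ 2) = (2 / π * x) ^ 2 := by field_simp; ring
    _ ≤ sin x ^ 2 := pow_le_pow_left₀ (mul_nonneg (by positivity) hx.1) (mul_le_sin hx.1 hx.2) 2
  rw [show -(b / π ^ 2) * x ^ 2 = -b * (x ^ 2 / π ^ 2) by ring, nlsPotential]
  nlinarith [sq_nonneg (sin x)]

theorem exists_strictAntiOn_nlsForce (a : ℝ) (hb : 0 < b) {ε : ℝ} (hε : 0 < ε) :
    ∃ δ : ℝ, 0 < δ ∧ δ < ε ∧ StrictAntiOn (nlsForce a b) (Set.Icc 0 δ) := by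
  have hneg : ∀ᶠ x in nhds (0 : ℝ), nlsForceDeriv a b x < 0 :=
    (continuous_nlsForceDeriv a b).continuousAt.eventually_lt continuousAt_const
      (by simp [nlsForceDeriv, hb])
  obtain ⟨η, hη, hball⟩ := Metric.eventually_nhds_iff.1 hneg
  refine ⟨min (η / 2) (ε / 2), by positivity, (min_le_right _ _).trans_lt (by linarith),
    strictAntiOn_of_deriv_neg (convex_Icc _ _) (continuous_nlsForce a b).continuousOn ?_⟩
  intro x hx
  rw [interior_Icc] at hx
  rw [(hasDerivAt_nlsForce a b x).deriv]
  apply hball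
  rw [Real.dist_eq, sub_zero, abs_of_pos hx.1]
  linarith [hx.2.trans_le (min_le_left _ _)]

theorem mul_cos_lt_sin (h0 : 0 < x) (h1 : x < π) : x * cos x < sin x := by
  rcases lt_or_ge x (π / 2) with hx | hx
  · have hc := cos_pos_of_mem_Ioo_pi_div_two ⟨h0, hx⟩
    rw [← lt_div_iff₀ hc, ← tan_eq_sin_div_cos]
    exact lt_tan h0 hx
  · have hc : cos x ≤ 0 := cos_nonpos_of_pi_div_two_le_of_le hx (by linarith)
    have := sin_pos_of_pos_of_lt_pi h0 h1
    nlinarith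

theorem mul_nlsForceDeriv_sub_pos {l : ℝ} (ha : 0 < a) (hl : 1 ≤ l) (hx : x ∈ Set.Ioo 0 (π / 2))
    (h : a * sin x ^ 2 ≤ b) : 0 < x * nlsForceDeriv a b x - l * nlsForce a b x := by
  have hs := sin_pos_of_mem_Ioo_pi_div_two hx
  have hc := cos_pos_of_mem_Ioo_pi_div_two hx
  have hx0 := hx.1
  have h2x := mul_cos_lt_sin (x := 2 * x) (by linarith) (by linarith [hx.2])
  rw [sin_two_mul, cos_two_mul'] at h2x
  have hfactor : 0 ≤ l * (sin x * cos x) - x * (cos x ^ 2 - sin x ^ 2) := by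
    have : 0 < sin x * cos x := mul_pos hs hc
    nlinarith
  have hprod := mul_nonneg (sub_nonneg.2 h) hfactor
  have hpos : 0 < 2 * a * x * sin x ^ 2 * cos x ^ 2 := by positivity
  unfold nlsForce nlsForceDeriv
  linarith

theorem strictAntiOn_mul_cot : StrictAntiOn (fun x : ℝ => x * (cos x / sin x))
    (Set.Ioo 0 (π / 2)) := by
  refine strictAntiOn_of_hasDerivWithinAt_neg (convex_Ioo _ _)
    (f' := fun x => (sin x * cos x - x) / sin x ^ 2) ?_ ?_ ?_
  · intro x hx
    have := (sin_pos_of_mem_Ioo_pi_div_two hx).ne'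
    exact ContinuousAt.continuousWithinAt (by fun_prop (disch := assumption))
  all_goals
    intro x hx
    rw [interior_Ioo] at hx
    have hs := sin_pos_of_mem_Ioo_pi_div_two hx
  · refine HasDerivAt.hasDerivWithinAt ((hasDerivAt_id' x).mul
      ((hasDerivAt_cos x).div (hasDerivAt_sin x) hs.ne') |>.congr_deriv ?_)
    simp only [Pi.div_apply]
    field_simp
    linear_combination (-x) * sin_sq_add_cos_sq x
  · have h2x := sin_lt (x := 2 * x) (by linarith [hx.1])
    rw [sin_two_mul] at h2x
    exact div_neg_of_neg_of_pos (by linarith) (by positivity)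

theorem mul_nlsForceDeriv_eq (hx : x ∈ Set.Ioo 0 (π / 2)) (h : b < a * sin x ^ 2) :
    x * nlsForceDeriv a b x = nlsForce a b x * nlsElasticity a b x := by
  have hs := sin_pos_of_mem_Ioo_pi_div_two hx
  have hc := cos_pos_of_mem_Ioo_pi_div_two hx
  obtain ⟨q, hq⟩ : ∃ q, q = a * sin x ^ 2 - b := ⟨_, rfl⟩
  have hq0 : q ≠ 0 := by linarith
  have hlast : 2 * a * sin x ^ 2 * cos x ^ 2 = 2 * (q + b) * cos x ^ 2 := by rw [hq]; ring
  rw [nlsForce, nlsForceDeriv, nlsElasticity, hlast, ← hq]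
  field_simp
  ring

theorem nlsElasticity_lt (ha : 0 ≤ a) (hb : 0 ≤ b) (hx : x ∈ Set.Ioo 0 (π / 2))
    (hy : y ∈ Set.Ioo 0 (π / 2)) (hxy : x < y) (h : b < a * sin x ^ 2) :
    nlsElasticity a b y < nlsElasticity a b x := by
  have hsx := sin_pos_of_mem_Ioo_pi_div_two hx
  have hcx := cos_pos_of_mem_Ioo_pi_div_two hx
  have hsy := sin_pos_of_mem_Ioo_pi_div_two hy
  have hcy := cos_pos_of_mem_Ioo_pi_div_two hy
  have hy0 := hy.1
  have hsin : sin x < sin y :=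
    sin_lt_sin_of_lt_of_le_pi_div_two (by linarith [pi_pos, hx.1]) hy.2.le hxy
  have hcos : cos y < cos x := cos_lt_cos_of_nonneg_of_le_pi_div_two hx.1.le hy.2.le hxy
  have htan : x * (sin x / cos x) < y * (sin y / cos y) :=
    mul_lt_mul hxy (div_le_div₀ hsy.le hsin.le hcy hcos.le) (by positivity) hy0.le
  have hgap : a * sin x ^ 2 - b ≤ a * sin y ^ 2 - b := by gcongr
  have hfactor : 2 * b / (a * sin y ^ 2 - b) ≤ 2 * b / (a * sin x ^ 2 - b) :=
    div_le_div_of_nonneg_left (by linarith) (by linarith) hgap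
  have hfactor_nonneg : 0 ≤ 2 * b / (a * sin y ^ 2 - b) := div_nonneg (by linarith) (by linarith)
  have hcot := mul_le_mul (strictAntiOn_mul_cot hx hy hxy).le (add_le_add_right hfactor 3)
    (by linarith) (by have := hx.1; positivity)
  unfold nlsElasticity
  linarith

/-- `x f' - l f` changes sign at most once, from positive to negative, since it is positive where
`f ≤ 0` and has the sign of `nlsElasticity a b - l` where `f > 0`. -/
theorem mul_nlsForceDeriv_sub_neg {l : ℝ} (ha : 0 < a) (hb : 0 ≤ b) (hl : 1 ≤ l) (hx : 0 < x)
    (hxy : x < y) (hy : y < π / 2) (h : x * nlsForceDeriv a b x - l * nlsForce a b x ≤ 0) :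
    y * nlsForceDeriv a b y - l * nlsForce a b y < 0 := by
  have hx' : x ∈ Set.Ioo 0 (π / 2) := ⟨hx, hxy.trans hy⟩
  have hy' : y ∈ Set.Ioo 0 (π / 2) := ⟨hx.trans hxy, hy⟩
  have hqx : b < a * sin x ^ 2 := by
    by_contra! hle
    exact h.not_gt (mul_nlsForceDeriv_sub_pos ha hl hx' hle)
  have hqy : b < a * sin y ^ 2 := hqx.trans_le <| by
    have := sin_pos_of_mem_Ioo_pi_div_two hx'
    have := sin_lt_sin_of_lt_of_le_pi_div_two (by linarith [pi_pos]) hy.le hxy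
    gcongr
  have hfx := nlsForce_pos hx' hqx
  have hfy := nlsForce_pos hy' hqy
  have hanti := nlsElasticity_lt ha.le hb hx' hy' hxy hqx
  rw [mul_nlsForceDeriv_eq hx' hqx] at h
  rw [mul_nlsForceDeriv_eq hy' hqy]
  have : nlsElasticity a b x ≤ l := by
    by_contra! hlt
    nlinarith
  nlinarith

end Nonlinearity

section Calculus

variable {g g' : ℝ → ℝ} {c x : ℝ}

theorem eventually_neg_right_of_hasDerivAt_neg (hg : HasDerivAt g c x) (hx : g x = 0)
    (hc : c < 0) : ∀ᶠ y in nhdsWithin x (Set.Ioi x), g y < 0 := by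
  filter_upwards [(eventually_nhdsWithin_sign_eq_of_deriv_neg (by rwa [hg.deriv])
    hx).filter_mono nhdsWithin_le_nhds, self_mem_nhdsWithin] with y hy hxy
  rwa [sign_neg (sub_neg.2 hxy), sign_eq_neg_one_iff] at hy

theorem eventually_pos_left_of_hasDerivAt_neg (hg : HasDerivAt g c x) (hx : g x = 0)
    (hc : c < 0) : ∀ᶠ y in nhdsWithin x (Set.Iio x), 0 < g y := by
  filter_upwards [(eventually_nhdsWithin_sign_eq_of_deriv_neg (by rwa [hg.deriv])
    hx).filter_mono nhdsWithin_le_nhds, self_mem_nhdsWithin] with y hy hxy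
  rwa [sign_pos (sub_pos.2 hxy), sign_eq_one_iff] at hy

theorem second_deriv_nonneg_of_eventually_le_right
    (hg : ∀ᶠ y in nhds x, HasDerivAt g (g' y) y) (hc : HasDerivAt g' c x) (hx : g' x = 0)
    (hmin : ∀ᶠ y in nhdsWithin x (Set.Ioi x), g x ≤ g y) : 0 ≤ c := by
  by_contra! hneg
  obtain ⟨s, hs, hsub⟩ := mem_nhdsGT_iff_exists_Ioo_subset.1
    ((eventually_neg_right_of_hasDerivAt_neg hc hx hneg).and
      ((hg.filter_mono nhdsWithin_le_nhds).and hmin))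
  obtain ⟨y, hxy, hys⟩ := exists_between (show x < s from hs)
  have hanti : StrictAntiOn g (Set.Icc x y) := by
    refine strictAntiOn_of_hasDerivWithinAt_neg (f' := g') (convex_Icc x y) (fun z hz => ?_)
      (fun z hz => ?_) fun z hz => ?_
    · rcases hz.1.eq_or_lt with rfl | hxz
      · exact hg.self_of_nhds.continuousAt.continuousWithinAt
      · exact (hsub ⟨hxz, hz.2.trans_lt hys⟩).2.1.continuousAt.continuousWithinAt
    all_goals rw [interior_Icc] at hz
    · exact (hsub ⟨hz.1, hz.2.trans hys⟩).2.1.hasDerivWithinAt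
    · exact (hsub ⟨hz.1, hz.2.trans hys⟩).1
  exact (hanti (Set.left_mem_Icc.2 hxy.le) (Set.right_mem_Icc.2 hxy.le) hxy).not_ge
    (hsub ⟨hxy, hys⟩).2.2

theorem second_deriv_nonneg_of_eventually_le_left
    (hg : ∀ᶠ y in nhds x, HasDerivAt g (g' y) y) (hc : HasDerivAt g' c x) (hx : g' x = 0)
    (hmin : ∀ᶠ y in nhdsWithin x (Set.Iio x), g x ≤ g y) : 0 ≤ c := by
  have hneg : Tendsto (fun y : ℝ => -y) (nhds (-x)) (nhds x) := by
    simpa using (continuous_neg.tendsto (-x))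
  have hc' : HasDerivAt g' c (-(-x)) := by rwa [neg_neg]
  refine second_deriv_nonneg_of_eventually_le_right (g := fun y => g (-y))
    (g' := fun y => -g' (-y)) (x := -x) ?_ ?_ (by simp [hx]) ?_
  · filter_upwards [hneg.eventually hg] with y hy
    exact (hy.comp y (hasDerivAt_neg y)).congr_deriv (by ring)
  · exact (hc'.comp (-x) (hasDerivAt_neg _)).neg.congr_deriv (by ring)
  · have hneg' : Tendsto (fun y : ℝ => -y) (nhdsWithin (-x) (Set.Ioi (-x)))
        (nhdsWithin x (Set.Iio x)) := by
      simpa using tendsto_neg_nhdsGT_neg (a := x)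
    simpa using hneg'.eventually hmin

theorem second_deriv_nonneg_of_isLocalMin (hmin : IsLocalMin g x)
    (hg : ∀ᶠ y in nhds x, HasDerivAt g (g' y) y) (hc : HasDerivAt g' c x) : 0 ≤ c :=
  second_deriv_nonneg_of_eventually_le_right hg hc (hmin.hasDerivAt_eq_zero hg.self_of_nhds)
    (hmin.filter_mono nhdsWithin_le_nhds)

theorem neg_of_hasDerivAt_neg_of_eq_zero (hg0 : g 0 = 0) (hg : ContinuousOn g (Set.Ici 0))
    (hderiv : ∀ s, 0 ≤ s → (∀ t ∈ Set.Icc 0 s, g t ≤ 0) → g s = 0 →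
      ∃ c < 0, HasDerivAt g c s) {r : ℝ} (hr : 0 < r) : g r < 0 := by
  by_contra! hgr
  obtain ⟨c, hc, hd⟩ := hderiv 0 le_rfl (fun t ht => by
    rw [le_antisymm ht.2 ht.1, hg0]) hg0
  obtain ⟨ε, hε, hsmall⟩ := mem_nhdsGT_iff_exists_Ioo_subset.1
    (eventually_neg_right_of_hasDerivAt_neg hd hg0 hc)
  have hε0 : 0 < ε := hε
  have hcompact : IsCompact {t ∈ Set.Icc ε r | 0 ≤ g t} :=
    isCompact_Icc.of_isClosed_subset (isClosed_Icc.isClosed_le continuousOn_const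
      (hg.mono fun t ht => hε0.le.trans ht.1)) fun t ht => ht.1
  have hεr : ε ≤ r := le_of_not_gt fun h => (hsmall ⟨hr, h⟩).not_ge hgr
  obtain ⟨s, ⟨hs, hgs⟩, hleast⟩ := hcompact.exists_isLeast ⟨r, ⟨hεr, le_rfl⟩, hgr⟩
  have hs0 : 0 < s := hε0.trans_le hs.1
  have hbefore : ∀ t ∈ Set.Ioo 0 s, g t < 0 := by
    intro t ht
    rcases lt_or_ge t ε with htε | hεt
    · exact hsmall ⟨ht.1, htε⟩
    · by_contra! h
      exact ht.2.not_ge (hleast ⟨⟨hεt, ht.2.le.trans hs.2⟩, h⟩)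
  have hevent : ∀ᶠ t in nhdsWithin s (Set.Iio s), g t < 0 := by
    filter_upwards [Ioo_mem_nhdsLT hs0] with t ht using hbefore t ht
  have hgs0 : g s = 0 := le_antisymm (le_of_tendsto ((hg.continuousAt
    (Ici_mem_nhds hs0)).tendsto.mono_left nhdsWithin_le_nhds) (hevent.mono fun _ => le_of_lt)) hgs
  obtain ⟨c, hc, hd⟩ := hderiv s hs0.le (fun t ht => by
    rcases ht.1.eq_or_lt with rfl | h0
    · exact hg0.le
    rcases ht.2.eq_or_lt with rfl | h1
    · exact hgs0.le
    · exact (hbefore t ⟨h0, h1⟩).le) hgs0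
  obtain ⟨t, hpos, hneg⟩ := ((eventually_pos_left_of_hasDerivAt_neg hd hgs0 hc).and hevent).exists
  exact hpos.not_gt hneg

theorem le_mul_exp_of_hasDerivAt_le {C r s : ℝ} (hrs : r ≤ s)
    (hg : ∀ t ∈ Set.Icc r s, HasDerivAt g (g' t) t) (hle : ∀ t ∈ Set.Icc r s, g' t ≤ C * g t) :
    g s ≤ g r * exp (C * (s - r)) := by
  rw [← gronwallBound_ε0]
  exact le_gronwallBound_of_liminf_deriv_right_le
    (fun t ht => (hg t ht).continuousAt.continuousWithinAt)
    (fun t ht _ h => (hg t (Set.Ico_subset_Icc_self ht)).hasDerivWithinAt.liminf_right_slope_le h)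
    le_rfl (fun t ht => by simpa using hle t (Set.Ico_subset_Icc_self ht)) s
    (Set.right_mem_Icc.2 hrs)

/-- A one-dimensional Hopf lemma. With `λ² ≥ K`, the function `χ = φ' - λφ` satisfies
`χ' ≤ -(λ + p)χ`, so `χ ≤ 0` and Grönwall's inequality applies to `φ`. -/
theorem eq_zero_of_second_deriv_add_mul_le {φ ψ ψ' p : ℝ → ℝ} {K r s : ℝ} (hrs : r ≤ s)
    (hφ : ∀ t ∈ Set.Icc r s, HasDerivAt φ (ψ t) t) (hψ : ∀ t ∈ Set.Icc r s, HasDerivAt ψ (ψ' t) t)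
    (hp : ∀ t ∈ Set.Icc r s, 0 ≤ p t) (hnonneg : ∀ t ∈ Set.Icc r s, 0 ≤ φ t)
    (hle : ∀ t ∈ Set.Ioo r s, ψ' t + p t * ψ t ≤ K * φ t) (hφr : φ r = 0) (hψr : ψ r = 0) :
    φ s = 0 := by
  obtain ⟨l, hl, hlK⟩ : ∃ l : ℝ, 0 < l ∧ K ≤ l ^ 2 :=
    ⟨1 + |K|, by positivity, by nlinarith [le_abs_self K, abs_nonneg K]⟩
  have hχ : ∀ t ∈ Set.Icc r s, HasDerivAt (fun t => ψ t - l * φ t) (ψ' t - l * ψ t) t :=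
    fun t ht => (hψ t ht).sub ((hφ t ht).const_mul l)
  have hχ_le : ∀ t ∈ Set.Icc r s, ψ t ≤ l * φ t := by
    refine fun t ht => sub_nonpos.1 (le_of_forall_pos_le_add fun ε hε => ?_)
    rw [zero_add]
    refine image_le_of_deriv_right_lt_deriv_boundary (B := fun _ => ε) (B' := fun _ => 0)
      (fun t ht => (hχ t ht).continuousAt.continuousWithinAt)
      (fun t ht => (hχ t (Set.Ico_subset_Icc_self ht)).hasDerivWithinAt)
      (by simp [hφr, hψr, hε.le]) (fun t => hasDerivAt_const t ε) (fun t ht hε_eq => ?_) ht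
    have ht' := Set.Ico_subset_Icc_self ht
    have hrt : r < t := ht.1.lt_of_ne fun hrt => hε.ne (by simpa [← hrt, hφr, hψr] using hε_eq)
    have := mul_le_mul_of_nonneg_right hlK (hnonneg t ht')
    have := mul_nonneg (hp t ht') (mul_nonneg hl.le (hnonneg t ht'))
    have := mul_pos (add_pos_of_pos_of_nonneg hl (hp t ht')) hε
    nlinarith [hle t ⟨hrt, ht.2⟩]
  refine le_antisymm ?_ (hnonneg s (Set.right_mem_Icc.2 hrs))
  simpa [hφr] using le_mul_exp_of_hasDerivAt_le hrs hφ hχ_le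

end Calculus

section RadialODE

/-- The pair `(U, V)` solves on `r > 0` the first-order system `U' = V`,
`V' = -((n - 1) / r) V - s` of the radial Poisson equation `-ΔU = s` in dimension `n`; for
`s = f ∘ U` this is the radial form of `-ΔU = f(U)`. -/
def SolvesRadialPoisson (s : ℝ → ℝ) (n : ℕ) (U V : ℝ → ℝ) : Prop :=
  ∀ r, 0 < r → HasDerivAt U (V r) r ∧ HasDerivAt V (-(((n : ℝ) - 1) / r * V r) - s r) r

/-- The pair `(U, V)` solves the radial equation `-ΔU = f(U)` in dimension `n` up to the centre.
The functions live on `ℝ` and are two-sidedly differentiable at `0`, as those of an even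
extension are; their values at negative radii are otherwise irrelevant. -/
structure IsRadialSol (f : ℝ → ℝ) (n : ℕ) (U V : ℝ → ℝ) : Prop where
  hasDerivAt : ∀ r, HasDerivAt U (V r) r
  hasDerivAt_deriv : ∀ r, 0 < r → HasDerivAt V (-(((n : ℝ) - 1) / r * V r) - f (U r)) r
  hasDerivAt_deriv_zero : HasDerivAt V (-(f (U 0) / n)) 0
  deriv_zero : V 0 = 0

/-- A radial solution with values in `(0, π/2)` which vanishes at infinity. -/
structure IsGroundState (f : ℝ → ℝ) (n : ℕ) (U V : ℝ → ℝ) : Prop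
    extends IsRadialSol f n U V where
  pos : ∀ r, 0 ≤ r → 0 < U r
  lt_pi_div_two : ∀ r, 0 ≤ r → U r < π / 2
  tendsto_zero : Tendsto U atTop (nhds 0)

/-- The mechanical energy `V² / 2 + F(U)` of a radial profile, `F` being a primitive of the
nonlinearity. -/
def radialEnergy (F U V : ℝ → ℝ) (r : ℝ) : ℝ := V r ^ 2 / 2 + F (U r)

variable {f F U V U' V' : ℝ → ℝ} {n : ℕ}

theorem dim_sub_one_div_nonneg (hn : 1 ≤ n) {r : ℝ} (hr : 0 ≤ r) : 0 ≤ ((n : ℝ) - 1) / r :=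
  div_nonneg (sub_nonneg.2 (by exact_mod_cast hn)) hr

/-- Away from the singular point `r = 0` the system is Lipschitz in `(U, V)`. -/
theorem SolvesRadialPoisson.unique (hn : 1 ≤ n) {K : NNReal} (hf : LipschitzWith K f)
    (h : SolvesRadialPoisson (fun r => f (U r)) n U V)
    (h' : SolvesRadialPoisson (fun r => f (U' r)) n U' V') {s : ℝ} (hs : 0 < s)
    (hU : U s = U' s) (hV : V s = V' s) {r : ℝ} (hr : 0 < r) : U r = U' r ∧ V r = V' r := by
  obtain ⟨t, ht0, ht⟩ := exists_between (lt_min hs hr)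
  have hlip : ∀ q ∈ Set.Ioo t (max s r + 1), LipschitzOnWith
      (max 1 (‖((n : ℝ) - 1) / t‖₊ * 1 + K * 1))
      (fun y : ℝ × ℝ => (y.2, -(((n : ℝ) - 1) / q * y.2) - f y.1)) Set.univ := by
    intro q hq
    have hcoef : ‖((n : ℝ) - 1) / q‖₊ ≤ ‖((n : ℝ) - 1) / t‖₊ := by
      rw [← NNReal.coe_le_coe, coe_nnnorm, coe_nnnorm,
        Real.norm_of_nonneg (dim_sub_one_div_nonneg hn (ht0.trans hq.1).le),
        Real.norm_of_nonneg (dim_sub_one_div_nonneg hn ht0.le)]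
      exact div_le_div_of_nonneg_left (sub_nonneg.2 (by exact_mod_cast hn)) ht0 hq.1.le
    have hlin : LipschitzWith (‖((n : ℝ) - 1) / t‖₊ * 1)
        fun y : ℝ × ℝ => -(((n : ℝ) - 1) / q * y.2) :=
      (((lipschitzWith_smul (((n : ℝ) - 1) / q)).weaken hcoef).comp LipschitzWith.prod_snd).neg
    exact (LipschitzWith.prod_snd.prodMk
      (hlin.sub (hf.comp LipschitzWith.prod_fst))).lipschitzOnWith
  have hmem : ∀ q ∈ Set.Ioo t (max s r + 1), 0 < q := fun q hq => ht0.trans hq.1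
  have heq := ODE_solution_unique_of_mem_Ioo (f := fun q => (U q, V q))
    (g := fun q => (U' q, V' q)) hlip
    ⟨ht.trans_le (min_le_left _ _), (le_max_left s r).trans_lt (lt_add_one _)⟩
    (fun q hq => ⟨(h q (hmem q hq)).1.prodMk (h q (hmem q hq)).2, Set.mem_univ _⟩)
    (fun q hq => ⟨(h' q (hmem q hq)).1.prodMk (h' q (hmem q hq)).2, Set.mem_univ _⟩)
    (Prod.ext hU hV)
    ⟨ht.trans_le (min_le_right _ _), (le_max_right s r).trans_lt (lt_add_one _)⟩
  exact Prod.ext_iff.1 heq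

namespace IsRadialSol

theorem solvesRadialPoisson (h : IsRadialSol f n U V) :
    SolvesRadialPoisson (fun r => f (U r)) n U V :=
  fun r hr => ⟨h.hasDerivAt r, h.hasDerivAt_deriv r hr⟩

theorem continuous (h : IsRadialSol f n U V) : Continuous U :=
  continuous_iff_continuousAt.2 fun r => (h.hasDerivAt r).continuousAt

theorem continuousOn_deriv (h : IsRadialSol f n U V) : ContinuousOn V (Set.Ici 0) := by
  intro r hr
  rcases (show 0 ≤ r from hr).eq_or_lt with rfl | hr0
  · exact h.hasDerivAt_deriv_zero.continuousAt.continuousWithinAt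
  · exact (h.hasDerivAt_deriv r hr0).continuousAt.continuousWithinAt

theorem hasDerivAt_sq_dist (h : IsRadialSol f n U V) (h' : IsRadialSol f n U' V') {r : ℝ}
    (hr : 0 ≤ r) : HasDerivAt (fun r => (U r - U' r) ^ 2 + (V r - V' r) ^ 2)
      (2 * (U r - U' r) * (V r - V' r) - 2 * (((n : ℝ) - 1) / r) * (V r - V' r) ^ 2
        - 2 * (V r - V' r) * (f (U r) - f (U' r))) r := by
  have hU := ((h.hasDerivAt r).sub (h'.hasDerivAt r)).pow 2
  rcases hr.eq_or_lt with rfl | hr0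
  · refine (hU.add ((h.hasDerivAt_deriv_zero.sub h'.hasDerivAt_deriv_zero).pow 2)).congr_deriv ?_
    simp [h.deriv_zero, h'.deriv_zero]
  · refine (hU.add (((h.hasDerivAt_deriv r hr0).sub
      (h'.hasDerivAt_deriv r hr0)).pow 2)).congr_deriv ?_
    simp only [Pi.sub_apply]
    norm_num
    ring

theorem sq_dist_le (hn : 1 ≤ n) {K : NNReal} (hf : LipschitzWith K f) (h : IsRadialSol f n U V)
    (h' : IsRadialSol f n U' V') {r : ℝ} (hr : 0 ≤ r) :
    (U r - U' r) ^ 2 + (V r - V' r) ^ 2 ≤ (U 0 - U' 0) ^ 2 * exp ((1 + K) * r) := by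
  have := le_mul_exp_of_hasDerivAt_le (C := 1 + K) hr
    (fun t ht => h.hasDerivAt_sq_dist h' ht.1) fun t ht => ?_
  · simpa [h.deriv_zero, h'.deriv_zero] using this
  have hdamping : 0 ≤ 2 * (((n : ℝ) - 1) / t) * (V t - V' t) ^ 2 :=
    mul_nonneg (mul_nonneg zero_le_two (dim_sub_one_div_nonneg hn ht.1)) (sq_nonneg _)
  have hforce : -((V t - V' t) * (f (U t) - f (U' t))) ≤ |V t - V' t| * (K * |U t - U' t|) :=
    (neg_le_abs _).trans <| by
      rw [abs_mul]
      exact mul_le_mul_of_nonneg_left (hf.dist_le_mul (U t) (U' t)) (abs_nonneg _)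
  have hcross : (U t - U' t) * (V t - V' t) ≤ |U t - U' t| * |V t - V' t| :=
    (le_abs_self _).trans_eq (abs_mul _ _)
  have hamgm := mul_nonneg (add_nonneg zero_le_one K.coe_nonneg)
    (sq_nonneg (|U t - U' t| - |V t - V' t|))
  nlinarith [sq_abs (U t - U' t), sq_abs (V t - V' t)]

theorem hasDerivAt_radialEnergy (hF : ∀ x, HasDerivAt F (f x) x) (h : IsRadialSol f n U V) {r : ℝ}
    (hr : 0 < r) : HasDerivAt (radialEnergy F U V) (-(((n : ℝ) - 1) / r * V r ^ 2)) r := by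
  refine (((h.hasDerivAt_deriv r hr).pow 2).div_const 2).add
    ((hF (U r)).comp r (h.hasDerivAt r)) |>.congr_deriv ?_
  norm_num
  ring

theorem continuousOn_radialEnergy (hF : Continuous F) (h : IsRadialSol f n U V) :
    ContinuousOn (radialEnergy F U V) (Set.Ici 0) := by
  have := h.continuousOn_deriv
  have := h.continuous
  unfold radialEnergy
  fun_prop

theorem antitoneOn_radialEnergy (hn : 1 ≤ n) (hF : ∀ x, HasDerivAt F (f x) x)
    (h : IsRadialSol f n U V) : AntitoneOn (radialEnergy F U V) (Set.Ici 0) := by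
  refine antitoneOn_of_hasDerivWithinAt_nonpos (convex_Ici 0) (h.continuousOn_radialEnergy
    (continuous_iff_continuousAt.2 fun x => (hF x).continuousAt))
    (f' := fun r => -(((n : ℝ) - 1) / r * V r ^ 2)) (fun r hr => ?_) fun r hr => ?_
  all_goals rw [interior_Ici] at hr
  · exact (h.hasDerivAt_radialEnergy hF hr).hasDerivWithinAt
  · exact neg_nonpos.2 (mul_nonneg (dim_sub_one_div_nonneg hn (le_of_lt hr)) (sq_nonneg _))

theorem antitoneOn_Icc (h : IsRadialSol f n U V) {r : ℝ} (hV : ∀ t ∈ Set.Icc 0 r, V t ≤ 0) :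
    AntitoneOn U (Set.Icc 0 r) :=
  antitoneOn_of_hasDerivWithinAt_nonpos (convex_Icc 0 r) h.continuous.continuousOn
    (fun t _ => (h.hasDerivAt t).hasDerivWithinAt) fun t ht => hV t (interior_subset ht)

theorem deriv_neg (hn : 1 ≤ n) (h : IsRadialSol f n U V)
    (hforce : ∀ r, 0 ≤ r → (∀ t ∈ Set.Icc 0 r, V t ≤ 0) → V r = 0 → 0 < f (U r)) {r : ℝ}
    (hr : 0 < r) : V r < 0 := by
  refine neg_of_hasDerivAt_neg_of_eq_zero h.deriv_zero h.continuousOn_deriv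
    (fun s hs hle hVs => ?_) hr
  have hf := hforce s hs hle hVs
  rcases hs.eq_or_lt with rfl | hs0
  · exact ⟨_, neg_neg_of_pos (div_pos hf (by exact_mod_cast hn)), h.hasDerivAt_deriv_zero⟩
  · exact ⟨_, by simpa [hVs] using hf, h.hasDerivAt_deriv s hs0⟩

theorem strictAntiOn (h : IsRadialSol f n U V) (hV : ∀ r, 0 < r → V r < 0) :
    StrictAntiOn U (Set.Ici 0) :=
  strictAntiOn_of_hasDerivWithinAt_neg (convex_Ici 0) h.continuous.continuousOn
    (fun r _ => (h.hasDerivAt r).hasDerivWithinAt) fun r hr => hV r (by rwa [interior_Ici] at hr)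

end IsRadialSol

namespace IsGroundState

theorem mem_Ioo (h : IsGroundState f n U V) {r : ℝ} (hr : 0 ≤ r) : U r ∈ Set.Ioo 0 (π / 2) :=
  ⟨h.pos r hr, h.lt_pi_div_two r hr⟩

theorem radialEnergy_nonneg (hn : 1 ≤ n) (hF : ∀ x, HasDerivAt F (f x) x) (hF0 : F 0 = 0)
    (h : IsGroundState f n U V) {r : ℝ} (hr : 0 ≤ r) : 0 ≤ radialEnergy F U V r := by
  have hlim : Tendsto (F ∘ U) atTop (nhds 0) := by
    simpa [hF0] using (hF 0).continuousAt.tendsto.comp h.tendsto_zero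
  refine le_of_tendsto hlim ?_
  filter_upwards [eventually_ge_atTop r] with s hs
  calc F (U s) ≤ radialEnergy F U V s := le_add_of_nonneg_left (by positivity)
    _ ≤ radialEnergy F U V r := h.antitoneOn_radialEnergy hn hF hr (hr.trans hs) hs

end IsGroundState

end RadialODE

section LogSlope

/-- The logarithmic slope `-r U'(r) / U(r)` of a radial profile; it equals `θ` exactly where
`r ^ θ U(r)` is critical. -/
def logSlope (U V : ℝ → ℝ) (r : ℝ) : ℝ := -(r * V r) / U r

/-- The Euler derivative `r d/dr` of `logSlope U V` for a solution of the radial equation. -/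
def eulerLogSlope (f : ℝ → ℝ) (n : ℕ) (U V : ℝ → ℝ) (r : ℝ) : ℝ :=
  logSlope U V r ^ 2 - ((n : ℝ) - 2) * logSlope U V r + r ^ 2 * f (U r) / U r

/-- The Pohozaev functional `rⁿ (V² / 2 + F(U) + c) + ((n - 2) / 2) rⁿ⁻¹ U V` in dimension
`n = k + 1`. The constant `c` amounts to changing the primitive `F`. -/
def pohozaev (F : ℝ → ℝ) (k : ℕ) (c : ℝ) (U V : ℝ → ℝ) (r : ℝ) : ℝ :=
  r ^ (k + 1) * (radialEnergy F U V r + c) + ((k : ℝ) - 1) / 2 * (r ^ k * (U r * V r))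

/-- The function of `U` whose product with `rⁿ⁻¹` is the derivative of `pohozaev F k c U V`
along solutions of the radial equation in dimension `n = k + 1`. -/
def pohozaevDensity (f F : ℝ → ℝ) (k : ℕ) (c x : ℝ) : ℝ :=
  ((k : ℝ) + 1) * (F x + c) - ((k : ℝ) - 1) / 2 * (x * f x)

variable {f F U V : ℝ → ℝ} {n k : ℕ} {a b c r : ℝ}

theorem strictMonoOn_Ioi_of_tendsto_atTop_of_not_isLocalMin {g : ℝ → ℝ}
    (hg : ContinuousOn g (Set.Ioi 0)) (hlim : Tendsto g atTop atTop)
    (hmin : ∀ m, 0 < m → ¬IsLocalMin g m) : StrictMonoOn g (Set.Ioi 0) := by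
  intro r hr s _ hrs
  by_contra! hle
  have hr0 : 0 < r := hr
  obtain ⟨R, hgR, hsR⟩ := ((hlim.eventually_gt_atTop (g r)).and (eventually_gt_atTop s)).exists
  obtain ⟨m, hm, hmin'⟩ := isCompact_Icc.exists_isMinOn ⟨r, le_rfl, (hrs.trans hsR).le⟩
    (hg.mono fun x (hx : x ∈ Set.Icc r R) => hr0.trans_le hx.1)
  obtain ⟨m, hm, hmin'⟩ : ∃ m ∈ Set.Ioo r R, IsMinOn g (Set.Icc r R) m := by
    rcases hm.1.eq_or_lt with rfl | hrm
    · exact ⟨s, ⟨hrs, hsR⟩, fun x hx => hle.trans (hmin' hx)⟩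
    · refine ⟨m, ⟨hrm, lt_of_le_of_ne hm.2 ?_⟩, hmin'⟩
      rintro rfl
      exact ((hmin' ⟨hrs.le, hsR.le⟩).trans hle).not_gt hgR
  exact hmin m (hr0.trans hm.1) (hmin'.isLocalMin (Icc_mem_nhds hm.1 hm.2))

theorem pohozaev_neg (hr : 0 < r) (hU : 0 < U r) (hf : 0 < f (U r))
    (hslope : eulerLogSlope f (k + 1) U V r ≤ 0) (hdensity : pohozaevDensity f F k c (U r) ≤ 0) :
    pohozaev F k c U V r < 0 := by
  have hslope' : r * V r ^ 2 + ((k : ℝ) - 1) * (U r * V r) + r * (U r * f (U r)) ≤ 0 := by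
    refine nonpos_of_mul_nonpos_right (a := r / U r ^ 2) ?_ (by positivity)
    refine le_of_eq_of_le ?_ hslope
    unfold eulerLogSlope logSlope
    push_cast
    field_simp
    ring
  have hk : (0 : ℝ) < k + 1 := by positivity
  have hpotential : F (U r) + c ≤ ((k : ℝ) - 1) / 2 * (U r * f (U r)) / (k + 1) := by
    rw [le_div_iff₀ hk]
    unfold pohozaevDensity at hdensity
    linarith
  have hgain : 0 < r * (U r * f (U r)) / (k + 1) := by positivity
  have hfactor : pohozaev F k c U V r = r ^ k * ((r * V r ^ 2 + ((k : ℝ) - 1) * (U r * V r)) / 2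
      + r * (F (U r) + c)) := by
    unfold pohozaev radialEnergy
    ring
  rw [hfactor]
  refine mul_neg_of_pos_of_neg (by positivity) ?_
  calc (r * V r ^ 2 + ((k : ℝ) - 1) * (U r * V r)) / 2 + r * (F (U r) + c)
      ≤ -(r * (U r * f (U r))) / 2 + r * (((k : ℝ) - 1) / 2 * (U r * f (U r)) / (k + 1)) :=
        add_le_add (by linarith) (mul_le_mul_of_nonneg_left hpotential hr.le)
    _ = -(r * (U r * f (U r)) / (k + 1)) := by field_simp; ring
    _ < 0 := neg_neg_of_pos hgain

theorem hasDerivAt_pohozaevDensity {f' x : ℝ} (hF : HasDerivAt F (f x) x)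
    (hf : HasDerivAt f f' x) : HasDerivAt (pohozaevDensity f F k c)
      (((k : ℝ) + 3) / 2 * f x - ((k : ℝ) - 1) / 2 * (x * f')) x := by
  refine ((hF.add_const c).const_mul ((k : ℝ) + 1)).sub
    (((hasDerivAt_id' x).mul hf).const_mul (((k : ℝ) - 1) / 2)) |>.congr_deriv ?_
  ring

theorem hasDerivAt_pow_of_ne_zero (k : ℕ) (hr : r ≠ 0) :
    HasDerivAt (fun r : ℝ => r ^ k) (k * (r ^ k / r)) r := by
  refine (hasDerivAt_pow k r).congr_deriv ?_
  cases k with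
  | zero => simp
  | succ m => rw [Nat.add_sub_cancel, pow_succ, mul_div_cancel_right₀ _ hr]

namespace IsRadialSol

theorem hasDerivAt_pohozaev (hF : ∀ x, HasDerivAt F (f x) x) (h : IsRadialSol f (k + 1) U V)
    (hr : 0 < r) :
    HasDerivAt (pohozaev F k c U V) (r ^ k * pohozaevDensity f F k c (U r)) r := by
  have henergy := (h.hasDerivAt_radialEnergy hF hr).add_const c
  have hflux := (h.hasDerivAt r).mul (h.hasDerivAt_deriv r hr)
  have hpow (k : ℕ) := hasDerivAt_pow_of_ne_zero k hr.ne'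
  refine (((hpow (k + 1)).mul henergy).add
    (((hpow k).mul hflux).const_mul (((k : ℝ) - 1) / 2))).congr_deriv ?_
  unfold pohozaevDensity radialEnergy
  simp only [Pi.mul_apply]
  push_cast
  field_simp
  ring

theorem continuousOn_pohozaev (hF : Continuous F) (h : IsRadialSol f n U V) :
    ContinuousOn (pohozaev F k c U V) (Set.Ici 0) := by
  have := h.continuousOn_deriv
  have := h.continuous
  have := h.continuousOn_radialEnergy hF
  unfold pohozaev
  fun_prop

theorem hasDerivAt_pow_mul_deriv (h : IsRadialSol f (k + 1) U V) (hr : 0 < r) :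
    HasDerivAt (fun r => r ^ k * V r) (-(r ^ k * f (U r))) r := by
  refine ((hasDerivAt_pow_of_ne_zero k hr.ne').mul (h.hasDerivAt_deriv r hr)).congr_deriv ?_
  push_cast
  field_simp
  ring

end IsRadialSol

namespace IsGroundState

theorem hasDerivAt_logSlope (h : IsGroundState f n U V) (hr : 0 < r) :
    HasDerivAt (logSlope U V) (eulerLogSlope f n U V r / r) r := by
  have hU := h.pos r hr.le
  refine (((hasDerivAt_id r).mul (h.hasDerivAt_deriv r hr)).neg.div
    (h.hasDerivAt r) hU.ne').congr_deriv ?_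
  unfold eulerLogSlope logSlope
  simp only [Pi.neg_apply, Pi.mul_apply, id]
  field_simp
  ring

theorem continuousOn_logSlope (h : IsGroundState f n U V) :
    ContinuousOn (logSlope U V) (Set.Ici 0) := by
  have := h.continuousOn_deriv
  have := h.continuous
  unfold logSlope
  exact ContinuousOn.div (by fun_prop) (by fun_prop) fun r hr => (h.pos r hr).ne'

theorem hasDerivAt_eulerLogSlope {f' : ℝ} (h : IsGroundState f n U V) (hr : 0 < r)
    (hf : HasDerivAt f f' (U r)) : HasDerivAt (eulerLogSlope f n U V)
      (((2 * logSlope U V r - ((n : ℝ) - 2)) * eulerLogSlope f n U V r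
        + r ^ 2 * (2 * f (U r) - logSlope U V r * (U r * f' - f (U r))) / U r) / r) r := by
  have hU := h.pos r hr.le
  have hy := h.hasDerivAt_logSlope hr
  refine (((hy.pow 2).sub (hy.const_mul ((n : ℝ) - 2))).add
    ((((hasDerivAt_id r).pow 2).mul (hf.comp r (h.hasDerivAt r))).div
      (h.hasDerivAt r) hU.ne')).congr_deriv ?_
  have hV : V r = -logSlope U V r * U r / r := by unfold logSlope; field_simp
  simp only [Pi.pow_apply, Pi.mul_apply, id, Function.comp, hV]
  field_simp
  norm_num
  ring

theorem nlsEnergy_nonneg (hn : 1 ≤ n) (h : IsGroundState (nlsForce a b) n U V) (hr : 0 ≤ r) :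
    0 ≤ radialEnergy (nlsPotential a b) U V r :=
  h.radialEnergy_nonneg hn (hasDerivAt_nlsPotential a b) (by simp [nlsPotential]) hr

theorem deriv_neg (hn : 1 ≤ n) (hb : 0 < b) (h : IsGroundState (nlsForce a b) n U V)
    (hr : 0 < r) : V r < 0 := by
  refine h.toIsRadialSol.deriv_neg hn (fun s hs _ hVs => nlsForce_pos (h.mem_Ioo hs)
    (lt_mul_sin_sq_of_nlsPotential_nonneg hb (h.mem_Ioo hs) ?_)) hr
  simpa [radialEnergy, hVs] using h.nlsEnergy_nonneg hn hs

theorem strictAntiOn (hn : 1 ≤ n) (hb : 0 < b) (h : IsGroundState (nlsForce a b) n U V) :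
    StrictAntiOn U (Set.Ici 0) :=
  h.toIsRadialSol.strictAntiOn fun _ => h.deriv_neg hn hb

theorem logSlope_pos (hn : 1 ≤ n) (hb : 0 < b) (h : IsGroundState (nlsForce a b) n U V)
    (hr : 0 < r) : 0 < logSlope U V r :=
  div_pos (neg_pos.2 (mul_neg_of_pos_of_neg hr (h.deriv_neg hn hb hr))) (h.pos r hr.le)

theorem exists_forall_mul_sin_sq_le (hb : 0 < b) (h : IsGroundState f n U V) (a : ℝ) :
    ∃ R, 0 < R ∧ ∀ r, R ≤ r → a * sin (U r) ^ 2 ≤ b := by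
  have hlim : Tendsto (fun r => a * sin (U r) ^ 2) atTop (nhds 0) := by
    simpa using (((continuous_sin.tendsto 0).comp h.tendsto_zero).pow 2).const_mul a
  obtain ⟨R, hR⟩ := eventually_atTop.1 (hlim.eventually (gt_mem_nhds hb))
  exact ⟨max R 1, by positivity, fun r hr => (hR r ((le_max_left _ _).trans hr)).le⟩

theorem tendsto_logSlope_atTop (hn : 1 ≤ n) (hb : 0 < b)
    (h : IsGroundState (nlsForce a b) n U V) : Tendsto (logSlope U V) atTop atTop := by
  obtain ⟨R, hR0, hR⟩ := h.exists_forall_mul_sin_sq_le hb a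
  have hcoef : 0 < √(2 * (b / π ^ 2)) := by positivity
  refine tendsto_atTop_mono' _ ?_ (tendsto_id.const_mul_atTop hcoef)
  filter_upwards [eventually_ge_atTop R] with r hr
  have hr0 := hR0.trans_le hr
  have hV := h.deriv_neg hn hb hr0
  have hpot := nlsPotential_le_neg_mul_sq hb (Set.Ioo_subset_Icc_self (h.mem_Ioo hr0.le)) (hR r hr)
  have henergy := h.nlsEnergy_nonneg hn hr0.le
  unfold radialEnergy at henergy
  have hdecay : √(2 * (b / π ^ 2)) * U r ≤ -V r := by
    refine le_of_sq_le_sq ?_ (by linarith)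
    rw [mul_pow, sq_sqrt (by positivity)]
    linarith
  rw [id, logSlope, le_div_iff₀ (h.pos r hr0.le)]
  nlinarith

section Pohozaev

theorem antitoneOn_pohozaevDensity (ha : 0 < a) (hb : 0 < b) (hk : 1 < k) {x : ℝ}
    (hx : x < π / 2)
    (hsign : 0 < x * nlsForceDeriv a b x - ((k : ℝ) + 3) / (k - 1) * nlsForce a b x) :
    AntitoneOn (pohozaevDensity (nlsForce a b) (nlsPotential a b) k c) (Set.Icc 0 x) := by
  have hk1 : (0 : ℝ) < k - 1 := sub_pos.2 (by exact_mod_cast hk)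
  have hderiv := fun y => hasDerivAt_pohozaevDensity (k := k) (c := c)
    (hasDerivAt_nlsPotential a b y) (hasDerivAt_nlsForce a b y)
  refine antitoneOn_of_hasDerivWithinAt_nonpos (convex_Icc 0 x)
    (fun y _ => (hderiv y).continuousAt.continuousWithinAt)
    (fun y _ => (hderiv y).hasDerivWithinAt) fun y hy => ?_
  rw [interior_Icc] at hy
  have hy_sign : 0 < y * nlsForceDeriv a b y - ((k : ℝ) + 3) / (k - 1) * nlsForce a b y := by
    by_contra! hle
    exact hsign.not_gt (mul_nlsForceDeriv_sub_neg ha hb.le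
      ((one_le_div hk1).2 (by linarith)) hy.1 hy.2 hx hle)
  have hscale : ((k : ℝ) + 3) / 2 * nlsForce a b y - ((k : ℝ) - 1) / 2 * (y * nlsForceDeriv a b y)
      = -(((k : ℝ) - 1) / 2 *
        (y * nlsForceDeriv a b y - ((k : ℝ) + 3) / (k - 1) * nlsForce a b y)) := by
    field_simp
    ring
  rw [hscale]
  exact neg_nonpos.2 (mul_nonneg (by linarith) hy_sign.le)

theorem monotoneOn_pohozaevDensity (ha : 0 < a) (hb : 0 < b) (hk : 1 < k) {x : ℝ} (hx : 0 < x)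
    (hsign : x * nlsForceDeriv a b x - ((k : ℝ) + 3) / (k - 1) * nlsForce a b x ≤ 0) :
    MonotoneOn (pohozaevDensity (nlsForce a b) (nlsPotential a b) k c) (Set.Ico x (π / 2)) := by
  have hk1 : (0 : ℝ) < k - 1 := sub_pos.2 (by exact_mod_cast hk)
  have hderiv := fun y => hasDerivAt_pohozaevDensity (k := k) (c := c)
    (hasDerivAt_nlsPotential a b y) (hasDerivAt_nlsForce a b y)
  refine monotoneOn_of_hasDerivWithinAt_nonneg (convex_Ico x (π / 2))
    (fun y _ => (hderiv y).continuousAt.continuousWithinAt)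
    (fun y _ => (hderiv y).hasDerivWithinAt) fun y hy => ?_
  rw [interior_Ico] at hy
  have hy_sign := mul_nlsForceDeriv_sub_neg ha hb.le
    ((one_le_div hk1).2 (by linarith)) hx hy.1 hy.2 hsign
  have hscale : ((k : ℝ) + 3) / 2 * nlsForce a b y - ((k : ℝ) - 1) / 2 * (y * nlsForceDeriv a b y)
      = -(((k : ℝ) - 1) / 2 *
        (y * nlsForceDeriv a b y - ((k : ℝ) + 3) / (k - 1) * nlsForce a b y)) := by
    field_simp
    ring
  rw [hscale]
  exact neg_nonneg.2 (mul_nonpos_of_nonneg_of_nonpos (by linarith) hy_sign.le)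

theorem pohozaev_nonneg_of_density_nonneg (h : IsGroundState (nlsForce a b) (k + 1) U V)
    (hr : 0 ≤ r) (hdensity : ∀ s ∈ Set.Ioo 0 r,
      0 ≤ pohozaevDensity (nlsForce a b) (nlsPotential a b) k c (U s)) :
    0 ≤ pohozaev (nlsPotential a b) k c U V r := by
  have hmono : MonotoneOn (pohozaev (nlsPotential a b) k c U V) (Set.Icc 0 r) := by
    refine monotoneOn_of_hasDerivWithinAt_nonneg (convex_Icc 0 r)
      ((h.continuousOn_pohozaev (continuous_nlsPotential a b)).mono Set.Icc_subset_Ici_self)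
      (f' := fun s => s ^ k * pohozaevDensity (nlsForce a b) (nlsPotential a b) k c (U s))
      (fun s hs => ?_) fun s hs => ?_
    all_goals rw [interior_Icc] at hs
    · exact (h.hasDerivAt_pohozaev (hasDerivAt_nlsPotential a b) hs.1).hasDerivWithinAt
    · exact mul_nonneg (pow_nonneg hs.1.le k) (hdensity s hs)
  have hzero : pohozaev (nlsPotential a b) k c U V 0 = 0 := by simp [pohozaev, h.deriv_zero]
  exact hzero.symm.trans_le (hmono (Set.left_mem_Icc.2 hr) (Set.right_mem_Icc.2 hr) hr)

/-- At infinity the energy is nonnegative and `rᵏ V` stays bounded below, because `f(U) ≤ 0` there;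
hence `pohozaev` has a nonnegative limit. -/
theorem pohozaev_nonneg_of_density_nonpos (hb : 0 < b) (hk : 1 ≤ k)
    (h : IsGroundState (nlsForce a b) (k + 1) U V) (hr : 0 ≤ r) (hdensity : ∀ s, r < s →
      pohozaevDensity (nlsForce a b) (nlsPotential a b) k 0 (U s) ≤ 0) :
    0 ≤ pohozaev (nlsPotential a b) k 0 U V r := by
  have hanti : AntitoneOn (pohozaev (nlsPotential a b) k 0 U V) (Set.Ici r) := by
    refine antitoneOn_of_hasDerivWithinAt_nonpos (convex_Ici r)
      ((h.continuousOn_pohozaev (continuous_nlsPotential a b)).mono (Set.Ici_subset_Ici.2 hr))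
      (f' := fun s => s ^ k * pohozaevDensity (nlsForce a b) (nlsPotential a b) k 0 (U s))
      (fun s hs => ?_) fun s hs => ?_
    all_goals rw [interior_Ici] at hs
    · exact (h.hasDerivAt_pohozaev (hasDerivAt_nlsPotential a b)
        (hr.trans_lt hs)).hasDerivWithinAt
    · exact mul_nonpos_of_nonneg_of_nonpos (pow_nonneg (hr.trans_lt hs).le k) (hdensity s hs)
  obtain ⟨R, hR0, hR⟩ := h.exists_forall_mul_sin_sq_le hb a
  have hflux : MonotoneOn (fun s => s ^ k * V s) (Set.Ici R) := by
    have hderiv := fun s (hs : R ≤ s) => h.hasDerivAt_pow_mul_deriv (hR0.trans_le hs)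
    refine monotoneOn_of_hasDerivWithinAt_nonneg (convex_Ici R)
      (fun s hs => (hderiv s hs).continuousAt.continuousWithinAt)
      (fun s hs => (hderiv s (interior_subset hs)).hasDerivWithinAt) fun s hs => ?_
    have hs' : R ≤ s := interior_subset hs
    have hs0 := (hR0.trans_le hs').le
    exact neg_nonneg.2 (mul_nonpos_of_nonneg_of_nonpos (pow_nonneg hs0 k)
      (nlsForce_nonpos (h.mem_Ioo hs0) (hR s hs')))
  have hlim : Tendsto (fun s => ((k : ℝ) - 1) / 2 * (R ^ k * V R) * U s) atTop (nhds 0) := by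
    simpa using h.tendsto_zero.const_mul (((k : ℝ) - 1) / 2 * (R ^ k * V R))
  refine le_of_tendsto hlim ?_
  filter_upwards [eventually_ge_atTop r, eventually_ge_atTop R] with s hrs hRs
  have hs0 := hr.trans hrs
  have hk0 : 0 ≤ ((k : ℝ) - 1) / 2 := div_nonneg (sub_nonneg.2 (by exact_mod_cast hk)) zero_le_two
  have hkin : 0 ≤ s ^ (k + 1) * radialEnergy (nlsPotential a b) U V s :=
    mul_nonneg (pow_nonneg hs0 _) (h.nlsEnergy_nonneg (Nat.le_add_left 1 k) hs0)
  calc ((k : ℝ) - 1) / 2 * (R ^ k * V R) * U s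
      ≤ ((k : ℝ) - 1) / 2 * (s ^ k * V s) * U s :=
        mul_le_mul_of_nonneg_right (mul_le_mul_of_nonneg_left
          (hflux Set.self_mem_Ici hRs hRs) hk0) (h.pos s hs0).le
    _ ≤ pohozaev (nlsPotential a b) k 0 U V s := by
        unfold pohozaev
        linarith
    _ ≤ pohozaev (nlsPotential a b) k 0 U V r := hanti Set.self_mem_Ici hrs hrs

/-- If the logarithmic slope did not increase at `r`, then `pohozaev` would be negative at `r`;
but integrating its derivative from the centre or from infinity, according to the sign of
`x f' - ((n + 2) / (n - 2)) f` at `U r`, shows that it is nonnegative. -/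
theorem eulerLogSlope_pos (hn : 1 ≤ n) (ha : 0 < a) (hb : 0 < b)
    (h : IsGroundState (nlsForce a b) n U V) (hr : 0 < r) (hU : b < a * sin (U r) ^ 2) :
    0 < eulerLogSlope (nlsForce a b) n U V r := by
  have hUr := h.mem_Ioo hr.le
  have hUr0 := hUr.1
  have hf := nlsForce_pos hUr hU
  by_contra! hslope
  rcases Nat.lt_or_ge n 3 with hn3 | hn3
  · have hy := h.logSlope_pos hn hb hr
    have : 0 < r ^ 2 * nlsForce a b (U r) / U r := by positivity
    have : (n : ℝ) ≤ 2 := by exact_mod_cast Nat.lt_succ_iff.1 hn3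
    unfold eulerLogSlope at hslope
    nlinarith
  obtain ⟨k, rfl⟩ : ∃ k, n = k + 1 := ⟨n - 1, by lia⟩
  have hk : 1 < k := by lia
  have hanti := h.strictAntiOn hn hb
  rcases le_or_gt (U r * nlsForceDeriv a b (U r) - ((k : ℝ) + 3) / (k - 1) * nlsForce a b (U r)) 0
    with hsign | hsign
  · obtain ⟨c, hc⟩ : ∃ c, pohozaevDensity (nlsForce a b) (nlsPotential a b) k c (U r) = 0 :=
      ⟨((k : ℝ) - 1) / 2 * (U r * nlsForce a b (U r)) / (k + 1) - nlsPotential a b (U r), by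
        unfold pohozaevDensity; field_simp; ring⟩
    refine (pohozaev_neg hr hUr.1 hf hslope hc.le).not_ge
      (h.pohozaev_nonneg_of_density_nonneg hr.le fun s hs => ?_)
    have hUs := (hanti hs.1.le hr.le hs.2).le
    exact hc.symm.trans_le (monotoneOn_pohozaevDensity ha hb hk hUr.1 hsign ⟨le_rfl, hUr.2⟩
      ⟨hUs, h.lt_pi_div_two s hs.1.le⟩ hUs)
  · have hdensity : ∀ s, r ≤ s →
        pohozaevDensity (nlsForce a b) (nlsPotential a b) k 0 (U s) ≤ 0 := by
      intro s hs
      have hs0 := hr.le.trans hs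
      refine (antitoneOn_pohozaevDensity ha hb hk hUr.2 hsign ⟨le_rfl, hUr.1.le⟩
        ⟨(h.pos s hs0).le, hanti.antitoneOn hr.le hs0 hs⟩ (h.pos s hs0).le).trans_eq ?_
      simp [pohozaevDensity, nlsPotential]
    exact (pohozaev_neg hr hUr.1 hf hslope (hdensity r le_rfl)).not_ge
      (h.pohozaev_nonneg_of_density_nonpos hb hk.le hr.le fun s hs => hdensity s hs.le)

end Pohozaev

theorem not_isLocalMin_logSlope (hn : 1 ≤ n) (ha : 0 < a) (hb : 0 < b)
    (h : IsGroundState (nlsForce a b) n U V) (hr : 0 < r) : ¬IsLocalMin (logSlope U V) r := by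
  intro hmin
  have hUr := h.mem_Ioo hr.le
  have hslope : eulerLogSlope (nlsForce a b) n U V r = 0 :=
    (div_eq_zero_iff.1 (hmin.hasDerivAt_eq_zero (h.hasDerivAt_logSlope hr))).resolve_right hr.ne'
  have hlow : a * sin (U r) ^ 2 ≤ b := by
    by_contra! hlt
    exact (h.eulerLogSlope_pos hn ha hb hr hlt).ne' hslope
  have hsecond := second_deriv_nonneg_of_isLocalMin hmin
    (by filter_upwards [lt_mem_nhds hr] with s hs using h.hasDerivAt_logSlope hs)
    ((h.hasDerivAt_eulerLogSlope hr (hasDerivAt_nlsForce a b (U r))).div (hasDerivAt_id r) hr.ne')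
  have hneg : 2 * nlsForce a b (U r)
      - logSlope U V r * (U r * nlsForceDeriv a b (U r) - nlsForce a b (U r)) < 0 := by
    have := nlsForce_nonpos hUr hlow
    have := mul_pos (h.logSlope_pos hn hb hr) (mul_nlsForceDeriv_sub_pos ha le_rfl hUr hlow)
    linarith
  simp only [hslope, mul_zero, zero_add, id, zero_mul, sub_zero] at hsecond
  refine hsecond.not_gt (div_neg_of_neg_of_pos (mul_neg_of_neg_of_pos
    (div_neg_of_neg_of_pos ?_ hr) hr) (by positivity))
  exact div_neg_of_neg_of_pos (mul_neg_of_pos_of_neg (by positivity) hneg) hUr.1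

theorem strictMonoOn_logSlope (hn : 1 ≤ n) (ha : 0 < a) (hb : 0 < b)
    (h : IsGroundState (nlsForce a b) n U V) : StrictMonoOn (logSlope U V) (Set.Ioi 0) :=
  strictMonoOn_Ioi_of_tendsto_atTop_of_not_isLocalMin
    (h.continuousOn_logSlope.mono Set.Ioi_subset_Ici_self) (h.tendsto_logSlope_atTop hn hb)
    fun _ => h.not_isLocalMin_logSlope hn ha hb

end IsGroundState

end LogSlope

section LogHeight

/-- The logarithm of `r ^ θ U(r)`, i.e. the height of the graph of `log U` over the line of
slope `-θ` in the variable `log r`. -/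
def logHeight (θ : ℝ) (U : ℝ → ℝ) (r : ℝ) : ℝ := log (U r) + θ * log r

/-- The maximum of `logHeight θ U` over positive radii; as a function of `θ` it is a Legendre
transform of the profile. -/
def maxLogHeight (U : ℝ → ℝ) (θ : ℝ) : ℝ := sSup (logHeight θ U '' Set.Ioi 0)

variable {f U V : ℝ → ℝ} {n : ℕ} {a b θ r t : ℝ}

namespace IsGroundState

theorem hasDerivAt_logHeight (h : IsGroundState f n U V) (hr : 0 < r) :
    HasDerivAt (logHeight θ U) ((θ - logSlope U V r) / r) r := by
  have hU := (h.pos r hr.le).ne'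
  refine (((h.hasDerivAt r).log hU).add ((hasDerivAt_log hr.ne').const_mul θ)).congr_deriv ?_
  unfold logSlope
  field_simp
  ring

theorem exists_logSlope_eq (hn : 1 ≤ n) (hb : 0 < b) (h : IsGroundState (nlsForce a b) n U V)
    (hθ : 0 < θ) : ∃ t, 0 < t ∧ logSlope U V t = θ := by
  obtain ⟨R, hR0, hR⟩ := ((eventually_ge_atTop 0).and
    ((h.tendsto_logSlope_atTop hn hb).eventually_ge_atTop θ)).exists
  have hzero : logSlope U V 0 = 0 := by simp [logSlope]
  obtain ⟨t, ht, htθ⟩ := intermediate_value_Icc hR0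
    (h.continuousOn_logSlope.mono Set.Icc_subset_Ici_self) ⟨hzero.trans_le hθ.le, hR⟩
  refine ⟨t, ht.1.lt_of_ne ?_, htθ⟩
  rintro rfl
  exact hθ.ne (hzero.symm.trans htθ)

theorem logHeight_lt (hn : 1 ≤ n) (ha : 0 < a) (hb : 0 < b)
    (h : IsGroundState (nlsForce a b) n U V) (ht : 0 < t) (htθ : logSlope U V t = θ) (hr : 0 < r)
    (hrt : r ≠ t) : logHeight θ U r < logHeight θ U t := by
  have hmono := h.strictMonoOn_logSlope hn ha hb
  have hcont : ContinuousOn (logHeight θ U) (Set.Ioi 0) :=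
    fun x hx => (h.hasDerivAt_logHeight hx).continuousAt.continuousWithinAt
  rcases hrt.lt_or_gt with hlt | hgt
  · refine strictMonoOn_of_hasDerivWithinAt_pos (convex_Icc r t)
      (hcont.mono fun x hx => hr.trans_le hx.1)
      (f' := fun x => (θ - logSlope U V x) / x) (fun x hx => ?_) (fun x hx => ?_)
      (Set.left_mem_Icc.2 hlt.le) (Set.right_mem_Icc.2 hlt.le) hlt
    all_goals rw [interior_Icc] at hx
    · exact (h.hasDerivAt_logHeight (hr.trans hx.1)).hasDerivWithinAt
    · exact div_pos (sub_pos.2 (htθ ▸ hmono (hr.trans hx.1) ht hx.2)) (hr.trans hx.1)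
  · refine strictAntiOn_of_hasDerivWithinAt_neg (convex_Icc t r)
      (hcont.mono fun x hx => ht.trans_le hx.1)
      (f' := fun x => (θ - logSlope U V x) / x) (fun x hx => ?_) (fun x hx => ?_)
      (Set.left_mem_Icc.2 hgt.le) (Set.right_mem_Icc.2 hgt.le) hgt
    all_goals rw [interior_Icc] at hx
    · exact (h.hasDerivAt_logHeight (ht.trans hx.1)).hasDerivWithinAt
    · exact div_neg_of_neg_of_pos (sub_neg.2 (htθ ▸ hmono ht (ht.trans hx.1) hx.1))
        (ht.trans hx.1)

theorem logHeight_le (hn : 1 ≤ n) (ha : 0 < a) (hb : 0 < b)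
    (h : IsGroundState (nlsForce a b) n U V) (ht : 0 < t) (htθ : logSlope U V t = θ) (hr : 0 < r) :
    logHeight θ U r ≤ logHeight θ U t := by
  rcases eq_or_ne r t with rfl | hrt
  exacts [le_rfl, (h.logHeight_lt hn ha hb ht htθ hr hrt).le]

theorem maxLogHeight_eq (hn : 1 ≤ n) (ha : 0 < a) (hb : 0 < b)
    (h : IsGroundState (nlsForce a b) n U V) (ht : 0 < t) (htθ : logSlope U V t = θ) :
    maxLogHeight U θ = logHeight θ U t :=
  IsGreatest.csSup_eq ⟨⟨t, ht, rfl⟩, by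
    rintro _ ⟨r, hr, rfl⟩
    exact h.logHeight_le hn ha hb ht htθ hr⟩

theorem logHeight_le_maxLogHeight (hn : 1 ≤ n) (ha : 0 < a) (hb : 0 < b)
    (h : IsGroundState (nlsForce a b) n U V) (hθ : 0 < θ) (hr : 0 < r) :
    logHeight θ U r ≤ maxLogHeight U θ := by
  obtain ⟨t, ht, htθ⟩ := h.exists_logSlope_eq hn hb hθ
  exact (h.logHeight_le hn ha hb ht htθ hr).trans_eq (h.maxLogHeight_eq hn ha hb ht htθ).symm

theorem convexOn_maxLogHeight (hn : 1 ≤ n) (ha : 0 < a) (hb : 0 < b)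
    (h : IsGroundState (nlsForce a b) n U V) : ConvexOn ℝ (Set.Ioi 0) (maxLogHeight U) := by
  refine ⟨convex_Ioi 0, fun θ hθ θ' hθ' p q hp hq hpq => ?_⟩
  obtain ⟨t, ht, htθ⟩ := h.exists_logSlope_eq hn hb (convex_Ioi (0 : ℝ) hθ hθ' hp hq hpq)
  rw [h.maxLogHeight_eq hn ha hb ht htθ]
  calc logHeight (p • θ + q • θ') U t
      = p * logHeight θ U t + q * logHeight θ' U t := by
        simp only [logHeight, smul_eq_mul]
        linear_combination -log (U t) * hpq
    _ ≤ p • maxLogHeight U θ + q • maxLogHeight U θ' :=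
        add_le_add
          (mul_le_mul_of_nonneg_left (h.logHeight_le_maxLogHeight hn ha hb hθ ht) hp)
          (mul_le_mul_of_nonneg_left (h.logHeight_le_maxLogHeight hn ha hb hθ' ht) hq)

theorem continuousOn_maxLogHeight (hn : 1 ≤ n) (ha : 0 < a) (hb : 0 < b)
    (h : IsGroundState (nlsForce a b) n U V) : ContinuousOn (maxLogHeight U) (Set.Ioi 0) :=
  (h.convexOn_maxLogHeight hn ha hb).continuousOn isOpen_Ioi

end IsGroundState

end LogHeight

section Rescale

/-- The rescaled profile `lam ^ θ W(lam r)`. -/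
def rescale (θ lam : ℝ) (W : ℝ → ℝ) (r : ℝ) : ℝ := lam ^ θ * W (lam * r)

/-- The force divided by the power of `x` under which the equation `-ΔU = f(U)` is invariant
by `rescale θ lam`. -/
def scaledForce (f : ℝ → ℝ) (θ x : ℝ) : ℝ := f x * x ^ (-(1 + 2 / θ))

variable {f s U V U' V' W : ℝ → ℝ} {n : ℕ} {a b θ lam r x y z x₀ z₀ : ℝ}

theorem rescale_pos (hlam : 0 < lam) (hW : 0 < W (lam * r)) : 0 < rescale θ lam W r :=
  mul_pos (rpow_pos_of_pos hlam θ) hW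

theorem continuous_rescale (hθ : 0 < θ) (hW : Continuous W) :
    Continuous fun p : ℝ × ℝ => rescale θ p.1 W p.2 :=
  ((continuous_rpow_const hθ.le).comp continuous_fst).mul
    (hW.comp (continuous_fst.mul continuous_snd))

theorem tendsto_rescale_atTop (hlam : 0 < lam) (hW : Tendsto W atTop (nhds 0)) :
    Tendsto (rescale θ lam W) atTop (nhds 0) := by
  rw [← mul_zero (lam ^ θ)]
  exact (hW.comp (tendsto_id.const_mul_atTop hlam)).const_mul (lam ^ θ)

theorem hasDerivAt_rescale {c : ℝ} (hlam : 0 < lam) (hW : HasDerivAt W c (lam * r)) :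
    HasDerivAt (rescale θ lam W) (lam ^ (θ + 1) * c) r := by
  refine ((hW.comp r ((hasDerivAt_id r).const_mul lam)).const_mul (lam ^ θ)).congr_deriv ?_
  rw [rpow_add_one hlam.ne']
  ring

theorem solvesRadialPoisson_rescale (hlam : 0 < lam) (h : SolvesRadialPoisson s n U V) :
    SolvesRadialPoisson (rescale (θ + 2) lam s) n (rescale θ lam U) (rescale (θ + 1) lam V) := by
  intro r hr
  obtain ⟨hU, hV⟩ := h (lam * r) (mul_pos hlam hr)
  refine ⟨hasDerivAt_rescale hlam hU, (hasDerivAt_rescale hlam hV).congr_deriv ?_⟩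
  rw [add_assoc, one_add_one_eq_two]
  unfold rescale
  rw [show θ + 2 = θ + 1 + 1 by ring, rpow_add_one hlam.ne' (θ + 1)]
  field_simp

theorem logHeight_rescale (hlam : 0 < lam) (hr : 0 < r) (hW : 0 < W (lam * r)) :
    logHeight θ (rescale θ lam W) r = logHeight θ W (lam * r) := by
  unfold logHeight rescale
  rw [log_mul (rpow_pos_of_pos hlam θ).ne' hW.ne', log_rpow hlam, log_mul hlam.ne' hr.ne']
  ring

theorem logSlope_rescale (hlam : 0 < lam) :
    logSlope (rescale θ lam U) (rescale (θ + 1) lam V) r = logSlope U V (lam * r) := by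
  unfold logSlope rescale
  rw [rpow_add_one hlam.ne',
    show -(r * (lam ^ θ * lam * V (lam * r))) = lam ^ θ * -(lam * r * V (lam * r)) by ring,
    mul_div_mul_left _ _ (rpow_pos_of_pos hlam θ).ne']

theorem logHeight_le_logHeight_iff (hU : 0 < U r) (hU' : 0 < U' r) :
    logHeight θ U r ≤ logHeight θ U' r ↔ U r ≤ U' r := by
  rw [logHeight, logHeight, add_le_add_iff_right, log_le_log_iff hU hU']

theorem logHeight_eq_logHeight_iff (hU : 0 < U r) (hU' : 0 < U' r) :
    logHeight θ U r = logHeight θ U' r ↔ U r = U' r := by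
  rw [le_antisymm_iff, le_antisymm_iff, logHeight_le_logHeight_iff hU hU',
    logHeight_le_logHeight_iff hU' hU]

theorem deriv_eq_of_logSlope_eq (hr : 0 < r) (hU : 0 < U r) (h : U r = U' r)
    (hslope : logSlope U V r = logSlope U' V' r) : V r = V' r := by
  unfold logSlope at hslope
  rw [← h, div_left_inj' hU.ne', neg_inj] at hslope
  exact mul_left_cancel₀ hr.ne' hslope

theorem scaledForce_eq (hθ : 0 < θ) (hlam : 0 < lam) (hy : 0 < y) :
    scaledForce f θ y = lam ^ (θ + 2) * f y * (lam ^ θ * y) ^ (-(1 + 2 / θ)) := by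
  have hexp : θ * -(1 + 2 / θ) + (θ + 2) = 0 := by
    field_simp
    ring
  have hcancel : (lam ^ θ) ^ (-(1 + 2 / θ)) * lam ^ (θ + 2) = 1 := by
    rw [← rpow_mul hlam.le, ← rpow_add hlam, hexp, rpow_zero]
  rw [scaledForce, mul_rpow (rpow_pos_of_pos hlam θ).le hy.le]
  linear_combination -f y * y ^ (-(1 + 2 / θ)) * hcancel

theorem scaledForce_rpow_mul_lt_iff (hθ : 0 < θ) (hlam : 0 < lam) (hy : 0 < y) :
    scaledForce f θ (lam ^ θ * y) < scaledForce f θ y ↔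
      f (lam ^ θ * y) < lam ^ (θ + 2) * f y := by
  rw [scaledForce_eq hθ hlam hy, scaledForce, mul_lt_mul_iff_left₀ (by positivity)]

theorem scaledForce_lt_rpow_mul_iff (hθ : 0 < θ) (hlam : 0 < lam) (hy : 0 < y) :
    scaledForce f θ y < scaledForce f θ (lam ^ θ * y) ↔
      lam ^ (θ + 2) * f y < f (lam ^ θ * y) := by
  rw [scaledForce_eq hθ hlam hy, scaledForce, mul_lt_mul_iff_left₀ (by positivity)]

theorem hasDerivAt_scaledForce {f' : ℝ} (hx : 0 < x) (hf : HasDerivAt f f' x) :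
    HasDerivAt (scaledForce f θ)
      (x ^ (-(1 + 2 / θ) - 1) * (x * f' - (1 + 2 / θ) * f x)) x := by
  refine (hf.mul (hasDerivAt_rpow_const (p := -(1 + 2 / θ)) (Or.inl hx.ne'))).congr_deriv ?_
  rw [show x ^ (-(1 + 2 / θ)) = x ^ (-(1 + 2 / θ) - 1) * x by
    rw [← rpow_add_one hx.ne', sub_add_cancel]]
  ring

/-- The derivative has the sign of `x f'(x) - (1 + 2/θ) f(x)`, which changes at most once. -/
theorem min_scaledForce_lt (ha : 0 < a) (hb : 0 < b) (hθ : 0 < θ) (hx : 0 < x) (hxy : x < y)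
    (hyz : y < z) (hz : z < π / 2) :
    min (scaledForce (nlsForce a b) θ x) (scaledForce (nlsForce a b) θ z) <
      scaledForce (nlsForce a b) θ y := by
  have hderiv : ∀ t, 0 < t → HasDerivAt (scaledForce (nlsForce a b) θ) _ t :=
    fun t ht => hasDerivAt_scaledForce ht (hasDerivAt_nlsForce a b t)
  have hl : 1 ≤ 1 + 2 / θ := le_add_of_nonneg_right (by positivity)
  rw [min_lt_iff, or_iff_not_imp_left, not_lt]
  intro hle
  obtain ⟨c, hc, hslope⟩ := exists_hasDerivAt_eq_slope (scaledForce (nlsForce a b) θ) _ hxy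
    (fun t ht => (hderiv t (hx.trans_le ht.1)).continuousAt.continuousWithinAt)
    (fun t ht => hderiv t (hx.trans ht.1))
  have hc0 := hx.trans hc.1
  have hsign : c * nlsForceDeriv a b c - (1 + 2 / θ) * nlsForce a b c ≤ 0 := by
    refine nonpos_of_mul_nonpos_right ?_ (rpow_pos_of_pos hc0 (-(1 + 2 / θ) - 1))
    rw [hslope]
    exact div_nonpos_of_nonpos_of_nonneg (sub_nonpos.2 hle) (sub_nonneg.2 hxy.le)
  refine strictAntiOn_of_deriv_neg (convex_Icc y z)
    (fun t ht => (hderiv t (hx.trans_le (hxy.le.trans ht.1))).continuousAt.continuousWithinAt)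
    (fun t ht => ?_) (Set.left_mem_Icc.2 hyz.le) (Set.right_mem_Icc.2 hyz.le) hyz
  rw [interior_Icc] at ht
  have ht0 := hx.trans (hxy.trans ht.1)
  rw [(hderiv t ht0).deriv]
  exact mul_neg_of_pos_of_neg (rpow_pos_of_pos ht0 _)
    (mul_nlsForceDeriv_sub_neg ha hb.le hl hc0 (hc.2.trans ht.1) (ht.2.trans hz) hsign)

theorem scaledForce_lt_of_le (ha : 0 < a) (hb : 0 < b) (hθ : 0 < θ) (hx : 0 < x) (hxx₀ : x ≤ x₀)
    (hxy : x < y) (hyz₀ : y < z₀) (hx₀z₀ : x₀ < z₀) (hz₀ : z₀ < π / 2)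
    (hle : scaledForce (nlsForce a b) θ x₀ ≤ scaledForce (nlsForce a b) θ z₀) :
    scaledForce (nlsForce a b) θ x < scaledForce (nlsForce a b) θ y := by
  have hxz₀ : scaledForce (nlsForce a b) θ x ≤ scaledForce (nlsForce a b) θ z₀ := by
    rcases hxx₀.eq_or_lt with rfl | hlt
    · exact hle
    · have := min_lt_iff.1 (min_scaledForce_lt ha hb hθ hx hlt hx₀z₀ hz₀)
      exact (this.resolve_right hle.not_gt).le.trans hle
  simpa only [min_eq_left hxz₀] using min_scaledForce_lt ha hb hθ hx hxy hyz₀ hz₀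

theorem scaledForce_lt_of_lt (ha : 0 < a) (hb : 0 < b) (hθ : 0 < θ) (hx₀ : 0 < x₀)
    (hx₀x : x₀ ≤ x) (hxz : x < z) (hx₀z₀ : x₀ < z₀) (hz₀z : z₀ ≤ z) (hz : z < π / 2)
    (hlt : scaledForce (nlsForce a b) θ z₀ < scaledForce (nlsForce a b) θ x₀) :
    scaledForce (nlsForce a b) θ z < scaledForce (nlsForce a b) θ x := by
  have hzx₀ : scaledForce (nlsForce a b) θ z < scaledForce (nlsForce a b) θ x₀ := by
    rcases hz₀z.eq_or_lt with rfl | hz₀z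
    · exact hlt
    · have := min_lt_iff.1 (min_scaledForce_lt ha hb hθ hx₀ hx₀z₀ hz₀z hz)
      exact (this.resolve_left hlt.not_gt).trans hlt
  rcases hx₀x.eq_or_lt with rfl | hx₀x
  · exact hzx₀
  · simpa only [min_eq_right hzx₀.le] using min_scaledForce_lt ha hb hθ hx₀ hx₀x hxz hz

end Rescale

section Sliding

variable {f s s₁ s₂ U V U₁ V₁ U₂ V₂ : ℝ → ℝ} {n : ℕ} {A R δ m r : ℝ}

namespace SolvesRadialPoisson

theorem sub (h₁ : SolvesRadialPoisson s₁ n U₁ V₁) (h₂ : SolvesRadialPoisson s₂ n U₂ V₂) :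
    SolvesRadialPoisson (s₁ - s₂) n (U₁ - U₂) (V₁ - V₂) := fun r hr =>
  ⟨(h₁ r hr).1.sub (h₂ r hr).1, ((h₁ r hr).2.sub (h₂ r hr).2).congr_deriv (by
    simp only [Pi.sub_apply]
    ring)⟩

theorem eventually_hasDerivAt (h : SolvesRadialPoisson s n U V) (hm : 0 < m) :
    ∀ᶠ r in nhds m, HasDerivAt U (V r) r :=
  (eventually_gt_nhds hm).mono fun r hr => (h r hr).1

theorem deriv_eq_zero_of_isLocalMin (h : SolvesRadialPoisson s n U V) (hm : 0 < m)
    (hmin : IsLocalMin U m) : V m = 0 :=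
  hmin.hasDerivAt_eq_zero (h m hm).1

theorem source_nonpos_of_isLocalMin (h : SolvesRadialPoisson s n U V) (hm : 0 < m)
    (hmin : IsLocalMin U m) : s m ≤ 0 := by
  have := second_deriv_nonneg_of_isLocalMin hmin (h.eventually_hasDerivAt hm) (h m hm).2
  simpa [h.deriv_eq_zero_of_isLocalMin hm hmin] using this

theorem source_nonpos_of_eventually_le_left (h : SolvesRadialPoisson s n U V) (hm : 0 < m)
    (hV : V m = 0) (hmin : ∀ᶠ r in nhdsWithin m (Set.Iio m), U m ≤ U r) : s m ≤ 0 := by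
  have := second_deriv_nonneg_of_eventually_le_left (h.eventually_hasDerivAt hm) (h m hm).2 hV hmin
  simpa [hV] using this

theorem eq_zero_of_neg_source_le (hn : 1 ≤ n) (h : SolvesRadialPoisson s n U V) (hm : 0 < m)
    (hmr : m ≤ r) {K : ℝ} (hs : ∀ t ∈ Set.Ioo m r, -s t ≤ K * U t)
    (hnonneg : ∀ t ∈ Set.Icc m r, 0 ≤ U t) (hU : U m = 0) (hV : V m = 0) : U r = 0 := by
  have hpos : ∀ t ∈ Set.Icc m r, 0 < t := fun t ht => hm.trans_le ht.1
  exact eq_zero_of_second_deriv_add_mul_le (K := K) (p := fun t => ((n : ℝ) - 1) / t) hmr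
    (fun t ht => (h t (hpos t ht)).1) (fun t ht => (h t (hpos t ht)).2)
    (fun t ht => dim_sub_one_div_nonneg hn (hpos t ht).le) hnonneg
    (fun t ht => by linarith [hs t ht]) hU hV

end SolvesRadialPoisson

theorem exists_isMinOn_Ici_neg {g : ℝ → ℝ} (hg : ContinuousOn g (Set.Ici A))
    (hlim : Tendsto g atTop (nhds 0)) (hr : A ≤ r) (hneg : g r < 0) :
    ∃ m, A ≤ m ∧ g m < 0 ∧ IsMinOn g (Set.Ici A) m := by
  obtain ⟨R, hR⟩ := eventually_atTop.1
    ((eventually_ge_atTop r).and (hlim.eventually (lt_mem_nhds hneg)))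
  have hrR := (hR R le_rfl).1
  obtain ⟨m, hm, hmin⟩ := isCompact_Icc.exists_isMinOn ⟨r, hr, hrR⟩
    (hg.mono Set.Icc_subset_Ici_self)
  have hmr : g m ≤ g r := hmin ⟨hr, hrR⟩
  refine ⟨m, hm.1, hmr.trans_lt hneg, fun t ht => ?_⟩
  rcases le_total t R with htR | hRt
  exacts [hmin ⟨ht, htR⟩, hmr.trans (hR t hRt).2.le]

/-- Comparison near infinity: where `f` is decreasing, the maximum principle forbids a negative
minimum of `U₂ - U₁`. -/
theorem exists_le_lt_of_lt (h₁ : SolvesRadialPoisson (fun r => f (U₁ r)) n U₁ V₁)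
    (h₂ : SolvesRadialPoisson s n U₂ V₂) (hA : 0 ≤ A) (hAR : A ≤ R)
    (hU₁ : ContinuousOn U₁ (Set.Ici A)) (hU₂ : ContinuousOn U₂ (Set.Ici A))
    (hlim₁ : Tendsto U₁ atTop (nhds 0)) (hlim₂ : Tendsto U₂ atTop (nhds 0))
    (hpos : ∀ r, A < r → 0 ≤ U₂ r) (hs : ∀ r, A < r → f (U₂ r) ≤ s r)
    (hf : StrictAntiOn f (Set.Icc 0 δ)) (hδ : ∀ r, R < r → U₁ r ≤ δ)
    (hr : A ≤ r) (hlt : U₂ r < U₁ r) : ∃ m, A ≤ m ∧ m ≤ R ∧ U₂ m < U₁ m := by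
  obtain ⟨m, hAm, hneg, hmin⟩ := exists_isMinOn_Ici_neg (g := U₂ - U₁) (hU₂.sub hU₁)
    (by rw [← sub_zero (0 : ℝ)]; exact hlim₂.sub hlim₁) hr (sub_neg.2 hlt)
  have hm : U₂ m < U₁ m := sub_neg.1 hneg
  refine ⟨m, hAm, le_of_not_gt fun hRm => ?_, hm⟩
  have hAm' : A < m := hAR.trans_lt hRm
  have hsource : s m - f (U₁ m) ≤ 0 := (h₂.sub h₁).source_nonpos_of_isLocalMin (hA.trans_lt hAm')
    (hmin.isLocalMin (Ici_mem_nhds hAm'))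
  have hδm := hδ m hRm
  have := hf ⟨hpos m hAm', hm.le.trans hδm⟩ ⟨(hpos m hAm').trans hm.le, hδm⟩ hm
  linarith [hs m hAm']

theorem exists_first_touching {K : Set (ℝ × ℝ)} (hK : IsCompact K) {g : ℝ × ℝ → ℝ}
    (hg : Continuous g) {p₀ : ℝ × ℝ} (hp₀ : p₀ ∈ K) (hgp₀ : g p₀ ≤ 0) :
    ∃ p ∈ K, g p ≤ 0 ∧
      ∀ r, (∀ᶠ x in nhdsWithin p.1 (Set.Iio p.1), (x, r) ∈ K) → 0 ≤ g (p.1, r) := by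
  obtain ⟨p, ⟨hpK, hgp⟩, hmin⟩ := (hK.inter_right (isClosed_le hg continuous_const)).exists_isMinOn
    ⟨p₀, hp₀, hgp₀⟩ continuous_fst.continuousOn
  refine ⟨p, hpK, hgp, fun r hr => ?_⟩
  have hlim : Tendsto (fun x => g (x, r)) (nhdsWithin p.1 (Set.Iio p.1)) (nhds (g (p.1, r))) :=
    ((hg.comp (Continuous.prodMk_left r)).tendsto p.1).mono_left nhdsWithin_le_nhds
  refine ge_of_tendsto hlim ?_
  filter_upwards [hr, self_mem_nhdsWithin] with x hxK hx
  by_contra! hneg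
  exact (show x < p.1 from hx).not_ge (hmin ⟨hxK, hneg.le⟩)

end Sliding

section PeakPair

/-- Two ground states whose functions `logHeight θ` have the same maximal value, attained at the
radii `r₁ > r₂`. If `lam * r₁ = r₂`, then `rescale θ lam U₂` touches `U₁` at `r₁`. -/
structure PeakPair (a b θ : ℝ) (n : ℕ) (U₁ V₁ U₂ V₂ : ℝ → ℝ) (r₁ r₂ : ℝ) : Prop where
  left : IsGroundState (nlsForce a b) n U₁ V₁
  right : IsGroundState (nlsForce a b) n U₂ V₂
  exponent_pos : 0 < θ
  right_radius_pos : 0 < r₂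
  radius_lt : r₂ < r₁
  logSlope_left : logSlope U₁ V₁ r₁ = θ
  logSlope_right : logSlope U₂ V₂ r₂ = θ
  logHeight_eq : logHeight θ U₁ r₁ = logHeight θ U₂ r₂

namespace PeakPair

variable {a b θ lam m r r₁ r₂ : ℝ} {n : ℕ} {U₁ V₁ U₂ V₂ : ℝ → ℝ}

theorem left_radius_pos (h : PeakPair a b θ n U₁ V₁ U₂ V₂ r₁ r₂) : 0 < r₁ :=
  h.right_radius_pos.trans h.radius_lt

theorem lt_one (h : PeakPair a b θ n U₁ V₁ U₂ V₂ r₁ r₂) (hlam : lam * r₁ ≤ r₂) : lam < 1 :=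
  lt_of_mul_lt_mul_right (by linarith [h.radius_lt]) h.left_radius_pos.le

theorem div_mul_left_radius (h : PeakPair a b θ n U₁ V₁ U₂ V₂ r₁ r₂) : r₂ / r₁ * r₁ = r₂ :=
  div_mul_cancel₀ r₂ h.left_radius_pos.ne'

theorem div_radius_pos (h : PeakPair a b θ n U₁ V₁ U₂ V₂ r₁ r₂) : 0 < r₂ / r₁ :=
  div_pos h.right_radius_pos h.left_radius_pos

theorem rescale_eq (h : PeakPair a b θ n U₁ V₁ U₂ V₂ r₁ r₂) (hlam : 0 < lam)
    (hlamr : lam * r₁ = r₂) : rescale θ lam U₂ r₁ = U₁ r₁ := by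
  have hU₂ : 0 < U₂ (lam * r₁) := h.right.pos _ (by rw [hlamr]; exact h.right_radius_pos.le)
  rw [← logHeight_eq_logHeight_iff (θ := θ) (rescale_pos hlam hU₂)
    (h.left.pos _ h.left_radius_pos.le), logHeight_rescale hlam h.left_radius_pos hU₂, hlamr,
    h.logHeight_eq]

theorem rescale_deriv_eq (h : PeakPair a b θ n U₁ V₁ U₂ V₂ r₁ r₂) (hlam : 0 < lam)
    (hlamr : lam * r₁ = r₂) : rescale (θ + 1) lam V₂ r₁ = V₁ r₁ := by
  have heq := h.rescale_eq hlam hlamr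
  refine deriv_eq_of_logSlope_eq (U := rescale θ lam U₂) h.left_radius_pos
    (heq ▸ h.left.pos _ h.left_radius_pos.le) heq ?_
  rw [logSlope_rescale hlam, hlamr, h.logSlope_right, h.logSlope_left]

theorem left_height_lt (h : PeakPair a b θ n U₁ V₁ U₂ V₂ r₁ r₂) : U₁ r₁ < U₂ r₂ := by
  have hlog : θ * log r₂ < θ * log r₁ :=
    mul_lt_mul_of_pos_left (log_lt_log h.right_radius_pos h.radius_lt) h.exponent_pos
  have heq := h.logHeight_eq
  unfold logHeight at heq
  exact (log_lt_log_iff (h.left.pos _ h.left_radius_pos.le)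
    (h.right.pos _ h.right_radius_pos.le)).1 (by linarith)

theorem rescale_le_left_height (hn : 1 ≤ n) (hb : 0 < b)
    (h : PeakPair a b θ n U₁ V₁ U₂ V₂ r₁ r₂) (hlam : 0 < lam) (hlamr : lam * r₁ ≤ r₂)
    (hr : r₂ ≤ lam * r) : rescale θ lam U₂ r ≤ U₁ r₁ := by
  have hU₂ : U₂ (lam * r) ≤ U₂ r₂ := (h.right.strictAntiOn hn hb).antitoneOn
    h.right_radius_pos.le (h.right_radius_pos.le.trans hr) hr
  have hle : lam ≤ r₂ / r₁ := (le_div_iff₀ h.left_radius_pos).2 hlamr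
  rw [← h.rescale_eq h.div_radius_pos h.div_mul_left_radius]
  unfold rescale
  rw [h.div_mul_left_radius]
  exact mul_le_mul (rpow_le_rpow hlam.le hle h.exponent_pos.le) hU₂
    (h.right.pos _ (h.right_radius_pos.le.trans hr)).le (rpow_nonneg h.div_radius_pos.le _)

section Outer

theorem le_rescale_of_mul_eq (hn : 1 ≤ n) (ha : 0 < a) (hb : 0 < b)
    (h : PeakPair a b θ n U₁ V₁ U₂ V₂ r₁ r₂) (hlam : 0 < lam) (hr : 0 < r)
    (hlamr : lam * r = r₂) : U₁ r ≤ rescale θ lam U₂ r := by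
  have hU₂ : 0 < U₂ (lam * r) := h.right.pos _ (mul_pos hlam hr).le
  rw [← logHeight_le_logHeight_iff (θ := θ) (h.left.pos r hr.le) (rescale_pos hlam hU₂),
    logHeight_rescale hlam hr hU₂, hlamr, ← h.logHeight_eq]
  exact h.left.logHeight_le hn ha hb h.left_radius_pos h.logSlope_left hr

theorem eq_left_radius_of_rescale_le (hn : 1 ≤ n) (ha : 0 < a) (hb : 0 < b)
    (h : PeakPair a b θ n U₁ V₁ U₂ V₂ r₁ r₂) (hlam : 0 < lam) (hr : 0 < r)
    (hlamr : lam * r = r₂) (hle : rescale θ lam U₂ r ≤ U₁ r) : r = r₁ := by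
  have hU₂ : 0 < U₂ (lam * r) := h.right.pos _ (mul_pos hlam hr).le
  rw [← logHeight_le_logHeight_iff (θ := θ) (rescale_pos hlam hU₂) (h.left.pos r hr.le),
    logHeight_rescale hlam hr hU₂, hlamr, ← h.logHeight_eq] at hle
  by_contra hne
  exact hle.not_gt (h.left.logHeight_lt hn ha hb h.left_radius_pos h.logSlope_left hr hne)

theorem nlsForce_rescale_lt (hn : 1 ≤ n) (ha : 0 < a) (hb : 0 < b)
    (h : PeakPair a b θ n U₁ V₁ U₂ V₂ r₁ r₂)
    (hj : scaledForce (nlsForce a b) θ (U₁ r₁) ≤ scaledForce (nlsForce a b) θ (U₂ r₂))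
    (hlam : 0 < lam) (hlamr : lam * r₁ ≤ r₂) (hr : r₂ < lam * r) :
    nlsForce a b (rescale θ lam U₂ r) < rescale (θ + 2) lam (fun r => nlsForce a b (U₂ r)) r := by
  have hlamr0 : 0 ≤ lam * r := (h.right_radius_pos.trans hr).le
  have hU₂ : 0 < U₂ (lam * r) := h.right.pos _ hlamr0
  refine (scaledForce_rpow_mul_lt_iff h.exponent_pos hlam hU₂).1 <|
    scaledForce_lt_of_le ha hb h.exponent_pos (rescale_pos hlam hU₂)
      (h.rescale_le_left_height hn hb hlam hlamr hr.le) ?_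
      (h.right.strictAntiOn hn hb h.right_radius_pos.le hlamr0 hr) h.left_height_lt
      (h.right.lt_pi_div_two _ h.right_radius_pos.le) hj
  exact mul_lt_of_lt_one_left hU₂
    (rpow_lt_one hlam.le (h.lt_one hlamr) h.exponent_pos)

theorem le_rescale_of_forall_le (hn : 1 ≤ n) (ha : 0 < a) (hb : 0 < b)
    (h : PeakPair a b θ n U₁ V₁ U₂ V₂ r₁ r₂)
    (hj : scaledForce (nlsForce a b) θ (U₁ r₁) ≤ scaledForce (nlsForce a b) θ (U₂ r₂))
    (hlam : 0 < lam) (hlamr : lam * r₁ ≤ r₂) {δ R : ℝ}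
    (hδ : StrictAntiOn (nlsForce a b) (Set.Icc 0 δ)) (hU₁ : ∀ r, R < r → U₁ r ≤ δ)
    (hR : r₂ ≤ lam * R) (hle : ∀ r, r ≤ R → r₂ ≤ lam * r → U₁ r ≤ rescale θ lam U₂ r)
    (hr : r₂ ≤ lam * r) : U₁ r ≤ rescale θ lam U₂ r := by
  have hiff : ∀ {r}, r₂ / lam ≤ r ↔ r₂ ≤ lam * r := div_le_iff₀' hlam
  have hA : 0 ≤ r₂ / lam := (div_pos h.right_radius_pos hlam).le
  by_contra! hlt
  obtain ⟨t, ht, htR, hlt⟩ := exists_le_lt_of_lt h.left.solvesRadialPoisson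
    (solvesRadialPoisson_rescale hlam h.right.solvesRadialPoisson) hA (hiff.2 hR)
    h.left.continuous.continuousOn
    (continuous_const.mul (h.right.continuous.comp (continuous_const_mul lam))).continuousOn
    h.left.tendsto_zero (tendsto_rescale_atTop hlam h.right.tendsto_zero)
    (fun r hr => (rescale_pos hlam (h.right.pos _ (mul_pos hlam (hA.trans_lt hr)).le)).le)
    (fun r hr => (h.nlsForce_rescale_lt hn ha hb hj hlam hlamr ((div_lt_iff₀' hlam).1 hr)).le)
    hδ hU₁ (hiff.2 hr) hlt
  exact hlt.not_ge (hle t htR (hiff.1 ht))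

theorem exists_outer_touching (hn : 1 ≤ n) (ha : 0 < a) (hb : 0 < b)
    (h : PeakPair a b θ n U₁ V₁ U₂ V₂ r₁ r₂)
    (hj : scaledForce (nlsForce a b) θ (U₁ r₁) ≤ scaledForce (nlsForce a b) θ (U₂ r₂)) :
    ∃ lam m, 0 < lam ∧ lam * r₁ ≤ r₂ ∧ r₂ ≤ lam * m ∧ rescale θ lam U₂ m ≤ U₁ m ∧
      ∀ r, r₂ ≤ lam * r → U₁ r ≤ rescale θ lam U₂ r := by
  obtain ⟨δ, hδ0, -, hδ⟩ := exists_strictAntiOn_nlsForce a hb one_pos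
  obtain ⟨R, hR⟩ := eventually_atTop.1
    ((h.left.tendsto_zero.eventually (gt_mem_nhds hδ0)).and (eventually_ge_atTop r₁))
  have hK : IsCompact ((Set.Icc 0 (r₂ / r₁) ×ˢ Set.Icc 0 R) ∩ {p : ℝ × ℝ | r₂ ≤ p.1 * p.2}) :=
    (isCompact_Icc.prod isCompact_Icc).inter_right
      (isClosed_le continuous_const (continuous_fst.mul continuous_snd))
  obtain ⟨⟨lam, m⟩, ⟨⟨hlam, hm⟩, hlamm⟩, htouch, hge⟩ := exists_first_touching hK
    (g := fun p => rescale θ p.1 U₂ p.2 - U₁ p.2) (p₀ := (r₂ / r₁, r₁))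
    ((continuous_rescale h.exponent_pos h.right.continuous).sub
      (h.left.continuous.comp continuous_snd))
    ⟨⟨⟨h.div_radius_pos.le, le_rfl⟩, h.left_radius_pos.le, (hR R le_rfl).2⟩,
      h.div_mul_left_radius.ge⟩
    (sub_nonpos.2 (h.rescale_eq h.div_radius_pos h.div_mul_left_radius).le)
  have hlam0 : 0 < lam := pos_of_mul_pos_left (h.right_radius_pos.trans_le hlamm) hm.1
  have hlamr : lam * r₁ ≤ r₂ := (le_div_iff₀ h.left_radius_pos).1 hlam.2
  have hrpos : ∀ r, r₂ ≤ lam * r → 0 < r := fun r hr =>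
    pos_of_mul_pos_right (h.right_radius_pos.trans_le hr) hlam0.le
  have hge_le : ∀ r, r ≤ R → r₂ ≤ lam * r → U₁ r ≤ rescale θ lam U₂ r := by
    intro r hrR hr
    rcases hr.eq_or_lt with heq | hlt
    · exact h.le_rescale_of_mul_eq hn ha hb hlam0 (hrpos r hr) heq.symm
    refine sub_nonneg.1 (hge r ?_)
    have hev : ∀ᶠ x in nhds lam, r₂ < x * r :=
      (continuous_mul_const r).continuousAt.eventually (lt_mem_nhds hlt)
    filter_upwards [hev.filter_mono nhdsWithin_le_nhds, Ioo_mem_nhdsLT hlam0] with x hxr hx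
    exact ⟨⟨⟨hx.1.le, hx.2.le.trans hlam.2⟩, (hrpos r hr).le, hrR⟩, hxr.le⟩
  exact ⟨lam, m, hlam0, hlamr, hlamm, sub_nonpos.1 htouch, fun r =>
    h.le_rescale_of_forall_le hn ha hb hj hlam0 hlamr hδ (fun r hr => (hR r hr.le).1.le)
      (hlamm.trans (mul_le_mul_of_nonneg_left hm.2 hlam0.le)) hge_le⟩

theorem lt_rescale_of_le (hn : 1 ≤ n) (ha : 0 < a) (hb : 0 < b)
    (h : PeakPair a b θ n U₁ V₁ U₂ V₂ r₁ r₂)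
    (hj : scaledForce (nlsForce a b) θ (U₁ r₁) ≤ scaledForce (nlsForce a b) θ (U₂ r₂))
    (hlam : 0 < lam) (hlamr : lam * r₁ ≤ r₂)
    (hge : ∀ r, r₂ ≤ lam * r → U₁ r ≤ rescale θ lam U₂ r) (hm : r₂ < lam * m) :
    U₁ m < rescale θ lam U₂ m := by
  refine (hge m hm.le).lt_of_ne fun heq => ?_
  have hm0 : 0 < m := pos_of_mul_pos_right (h.right_radius_pos.trans hm) hlam.le
  have hmin : IsLocalMin (rescale θ lam U₂ - U₁) m := by
    filter_upwards [(continuous_const_mul lam).continuousAt.eventually (lt_mem_nhds hm)] with r hr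
    simpa [← heq] using hge r hr.le
  have hsource := ((solvesRadialPoisson_rescale hlam h.right.solvesRadialPoisson).sub
    h.left.solvesRadialPoisson).source_nonpos_of_isLocalMin hm0 hmin
  refine hsource.not_gt (sub_pos.2 ?_)
  simpa only [← heq] using h.nlsForce_rescale_lt hn ha hb hj hlam hlamr hm

theorem scaledForce_right_lt_left (hn : 1 ≤ n) (ha : 0 < a) (hb : 0 < b)
    (h : PeakPair a b θ n U₁ V₁ U₂ V₂ r₁ r₂) :
    scaledForce (nlsForce a b) θ (U₂ r₂) < scaledForce (nlsForce a b) θ (U₁ r₁) := by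
  by_contra! hj
  obtain ⟨lam, m, hlam, hlamr, hlamm, htouch, hge⟩ := h.exists_outer_touching hn ha hb hj
  have hstrict : ∀ r, r₂ < lam * r → U₁ r < rescale θ lam U₂ r := fun r =>
    h.lt_rescale_of_le hn ha hb hj hlam hlamr hge
  have hm0 : 0 < m := pos_of_mul_pos_right (h.right_radius_pos.trans_le hlamm) hlam.le
  have hlamm' : lam * m = r₂ :=
    (eq_or_lt_of_le hlamm).elim Eq.symm fun hlt => absurd htouch (hstrict m hlt).not_ge
  obtain rfl := h.eq_left_radius_of_rescale_le hn ha hb hlam hm0 hlamm' htouch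
  obtain ⟨K, hK⟩ := lipschitzWith_nlsForce a b
  have hgt : ∀ {t}, m < t → r₂ < lam * t := fun ht =>
    hlamm'.symm.trans_lt (mul_lt_mul_of_pos_left ht hlam)
  have hzero := ((solvesRadialPoisson_rescale hlam h.right.solvesRadialPoisson).sub
    h.left.solvesRadialPoisson).eq_zero_of_neg_source_le hn hm0 (lt_add_one m).le
    (K := K) (fun t ht => ?_) (fun t ht => ?_) (sub_eq_zero.2 (h.rescale_eq hlam hlamm'))
    (sub_eq_zero.2 (h.rescale_deriv_eq hlam hlamm'))
  · exact (hstrict _ (hgt (lt_add_one m))).ne' (sub_eq_zero.1 hzero)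
  · have hforce := h.nlsForce_rescale_lt hn ha hb hj hlam hlamr (hgt ht.1)
    have hlip := (neg_le_abs _).trans (hK.dist_le_mul (rescale θ lam U₂ t) (U₁ t))
    rw [Real.dist_eq, abs_of_pos (sub_pos.2 (hstrict t (hgt ht.1)))] at hlip
    simp only [Pi.sub_apply]
    linarith
  · exact sub_nonneg.2 (hge t (hlamm'.symm.trans_le (mul_le_mul_of_nonneg_left ht.1 hlam.le)))

end Outer

section Inner

theorem mul_eq_of_left_le_rescale (hn : 1 ≤ n) (ha : 0 < a) (hb : 0 < b)
    (h : PeakPair a b θ n U₁ V₁ U₂ V₂ r₁ r₂) (hlam : 0 < lam)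
    (hle : U₁ r₁ ≤ rescale θ lam U₂ r₁) : lam * r₁ = r₂ := by
  have hpos := mul_pos hlam h.left_radius_pos
  have hU₂ : 0 < U₂ (lam * r₁) := h.right.pos _ hpos.le
  rw [← logHeight_le_logHeight_iff (θ := θ) (h.left.pos _ h.left_radius_pos.le)
    (rescale_pos hlam hU₂), logHeight_rescale hlam h.left_radius_pos hU₂, h.logHeight_eq] at hle
  by_contra hne
  exact hle.not_gt (h.right.logHeight_lt hn ha hb h.right_radius_pos h.logSlope_right hpos hne)

theorem rescale_nlsForce_lt (hn : 1 ≤ n) (ha : 0 < a) (hb : 0 < b)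
    (h : PeakPair a b θ n U₁ V₁ U₂ V₂ r₁ r₂) (hlam : 0 < lam) (hlamr : lam * r₁ ≤ r₂)
    (hr : 0 ≤ r) (hrr₁ : r ≤ r₁) (heq : rescale θ lam U₂ r = U₁ r) :
    rescale (θ + 2) lam (fun r => nlsForce a b (U₂ r)) r < nlsForce a b (U₁ r) := by
  have hlamr0 : 0 ≤ lam * r := mul_nonneg hlam.le hr
  have hU₂ : 0 < U₂ (lam * r) := h.right.pos _ hlamr0
  rw [← heq]
  refine (scaledForce_lt_rpow_mul_iff h.exponent_pos hlam hU₂).1 <|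
    scaledForce_lt_of_lt ha hb h.exponent_pos (h.left.pos _ h.left_radius_pos.le) ?_ ?_
      h.left_height_lt ?_ (h.right.lt_pi_div_two _ hlamr0) (h.scaledForce_right_lt_left hn ha hb)
  · exact ((h.left.strictAntiOn hn hb).antitoneOn hr h.left_radius_pos.le hrr₁).trans_eq heq.symm
  · exact mul_lt_of_lt_one_left hU₂ (rpow_lt_one hlam.le (h.lt_one hlamr) h.exponent_pos)
  · exact (h.right.strictAntiOn hn hb).antitoneOn hlamr0 h.right_radius_pos.le
      ((mul_le_mul_of_nonneg_left hrr₁ hlam.le).trans hlamr)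

theorem exists_inner_touching (h : PeakPair a b θ n U₁ V₁ U₂ V₂ r₁ r₂) :
    ∃ lam m, 0 < lam ∧ lam * r₁ ≤ r₂ ∧ 0 ≤ m ∧ m ≤ r₁ ∧ rescale θ lam U₂ m = U₁ m ∧
      ∀ r, 0 ≤ r → r ≤ r₁ → rescale θ lam U₂ r ≤ U₁ r := by
  obtain ⟨⟨lam, m⟩, ⟨hlam, hm⟩, htouch, hge⟩ := exists_first_touching
    ((isCompact_Icc (a := 0) (b := r₂ / r₁)).prod (isCompact_Icc (a := 0) (b := r₁)))
    (g := fun p => U₁ p.2 - rescale θ p.1 U₂ p.2) (p₀ := (r₂ / r₁, r₁))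
    ((h.left.continuous.comp continuous_snd).sub
      (continuous_rescale h.exponent_pos h.right.continuous))
    ⟨⟨h.div_radius_pos.le, le_rfl⟩, h.left_radius_pos.le, le_rfl⟩
    (sub_nonpos.2 (h.rescale_eq h.div_radius_pos h.div_mul_left_radius).ge)
  rw [sub_nonpos] at htouch
  have hlam0 : 0 < lam := by
    refine hlam.1.lt_of_ne' fun hzero => htouch.not_gt ?_
    simpa [rescale, show lam = 0 from hzero, zero_rpow h.exponent_pos.ne'] using h.left.pos m hm.1
  have hle : ∀ r, 0 ≤ r → r ≤ r₁ → rescale θ lam U₂ r ≤ U₁ r := by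
    refine fun r hr hrr₁ => sub_nonneg.1 (hge r ?_)
    filter_upwards [Ioo_mem_nhdsLT hlam0] with x hx
    exact ⟨⟨hx.1.le, hx.2.le.trans hlam.2⟩, hr, hrr₁⟩
  exact ⟨lam, m, hlam0, (le_div_iff₀ h.left_radius_pos).1 hlam.2, hm.1, hm.2,
    (hle m hm.1 hm.2).antisymm htouch, hle⟩

theorem elim (hn : 1 ≤ n) (ha : 0 < a) (hb : 0 < b)
    (h : PeakPair a b θ n U₁ V₁ U₂ V₂ r₁ r₂) : False := by
  obtain ⟨lam, m, hlam, hlamr, hm, hmr₁, heq, hle⟩ := h.exists_inner_touching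
  have hforce := h.rescale_nlsForce_lt hn ha hb hlam hlamr hm hmr₁ heq
  have hmin : ∀ r, 0 ≤ r → r ≤ r₁ → (U₁ - rescale θ lam U₂) m ≤ (U₁ - rescale θ lam U₂) r :=
    fun r hr hrr₁ => by simpa [heq] using hle r hr hrr₁
  have hsol := h.left.solvesRadialPoisson.sub
    (solvesRadialPoisson_rescale (θ := θ) hlam h.right.solvesRadialPoisson)
  rcases hm.eq_or_lt with rfl | hm0
  · have hc := second_deriv_nonneg_of_eventually_le_right
      (g' := V₁ - rescale (θ + 1) lam V₂)
      (.of_forall fun r => (h.left.hasDerivAt r).sub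
        (hasDerivAt_rescale hlam (h.right.hasDerivAt (lam * r))))
      (h.left.hasDerivAt_deriv_zero.sub (hasDerivAt_rescale hlam
        (by simpa using h.right.hasDerivAt_deriv_zero)))
      (by simp [rescale, h.left.deriv_zero, h.right.deriv_zero])
      (by filter_upwards [Ioo_mem_nhdsGT h.left_radius_pos] with r hr
          exact hmin r hr.1.le hr.2.le)
    have hn0 : (0 : ℝ) < n := by exact_mod_cast hn
    have := div_lt_div_of_pos_right hforce hn0
    rw [rescale, mul_zero, mul_div_assoc] at this
    rw [add_assoc, one_add_one_eq_two] at hc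
    linarith
  rcases hmr₁.eq_or_lt with rfl | hmr₁
  · refine (hsol.source_nonpos_of_eventually_le_left hm0 (sub_eq_zero.2 (h.rescale_deriv_eq hlam
      (h.mul_eq_of_left_le_rescale hn ha hb hlam heq.ge)).symm) ?_).not_gt (sub_pos.2 hforce)
    filter_upwards [Ioo_mem_nhdsLT hm0] with r hr using hmin r hr.1.le hr.2.le
  · refine (hsol.source_nonpos_of_isLocalMin hm0 ?_).not_gt (sub_pos.2 hforce)
    filter_upwards [Ioo_mem_nhds hm0 hmr₁] with r hr using hmin r hr.1.le hr.2.le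

end Inner

end PeakPair

end PeakPair

section GroundStateUniqueness

variable {f s U V U' V' : ℝ → ℝ} {n : ℕ} {a b τ m r : ℝ}

theorem IsRadialSol.eqOn_of_eq_at_zero (hn : 1 ≤ n) {K : NNReal} (hf : LipschitzWith K f)
    (h : IsRadialSol f n U V) (h' : IsRadialSol f n U' V') (h0 : U 0 = U' 0) :
    Set.EqOn U U' (Set.Ici 0) := by
  intro r hr
  have hdist := h.sq_dist_le hn hf h' hr
  rw [h0, sub_self, zero_pow two_ne_zero, zero_mul] at hdist
  nlinarith [sq_nonneg (V r - V' r), sq_nonneg (U r - U' r)]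

theorem IsRadialSol.eqOn_of_eq_at_pos (hn : 1 ≤ n) {K : NNReal} (hf : LipschitzWith K f)
    (h : IsRadialSol f n U V) (h' : IsRadialSol f n U' V') (hm : 0 < m) (hU : U m = U' m)
    (hV : V m = V' m) : Set.EqOn U U' (Set.Ici 0) := by
  have hpos : Set.EqOn U U' (Set.Ioi 0) := fun r hr =>
    (h.solvesRadialPoisson.unique hn hf h'.solvesRadialPoisson hm hU hV hr).1
  simpa only [closure_Ioi] using hpos.closure h.continuous h'.continuous

theorem SolvesRadialPoisson.comp_add_const (h : SolvesRadialPoisson s n U V) (hτ : 0 ≤ τ) :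
    SolvesRadialPoisson (fun r => s (r + τ) + ((n : ℝ) - 1) * (1 / r - 1 / (r + τ)) * -V (r + τ)) n
      (fun r => U (r + τ)) (fun r => V (r + τ)) := by
  intro r hr
  obtain ⟨hU, hV⟩ := h (r + τ) (add_pos_of_pos_of_nonneg hr hτ)
  exact ⟨hU.comp_add_const r τ, (hV.comp_add_const r τ).congr_deriv (by ring)⟩

namespace IsGroundState

theorem nlsForce_le_translate_source (hn : 1 ≤ n) (hb : 0 < b)
    (h : IsGroundState (nlsForce a b) n U V) (hτ : 0 ≤ τ) (hr : 0 < r) :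
    nlsForce a b (U (r + τ)) ≤
      nlsForce a b (U (r + τ)) + ((n : ℝ) - 1) * (1 / r - 1 / (r + τ)) * -V (r + τ) := by
  have hn' : (1 : ℝ) ≤ n := by exact_mod_cast hn
  refine le_add_of_nonneg_right (mul_nonneg (mul_nonneg (sub_nonneg.2 hn') ?_)
    (neg_pos.2 (h.deriv_neg hn hb (add_pos_of_pos_of_nonneg hr hτ))).le)
  exact sub_nonneg.2 (one_div_le_one_div_of_le hr (le_add_of_nonneg_right hτ))

theorem exists_translate_touching (hn : 1 ≤ n) (hb : 0 < b)
    (h : IsGroundState (nlsForce a b) n U V) (h' : IsGroundState (nlsForce a b) n U' V')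
    (hle : ∀ r, 0 ≤ r → U r ≤ U' r) :
    ∃ τ m, 0 ≤ τ ∧ 0 ≤ m ∧ U m = U' (m + τ) ∧ ∀ r, 0 ≤ r → U r ≤ U' (r + τ) := by
  obtain ⟨δ, hδ0, -, hδ⟩ := exists_strictAntiOn_nlsForce a hb one_pos
  obtain ⟨R, hR⟩ := eventually_atTop.1
    ((h.tendsto_zero.eventually (gt_mem_nhds hδ0)).and (eventually_ge_atTop 0))
  have hR0 : 0 ≤ R := (hR R le_rfl).2
  obtain ⟨T, hT0, hT⟩ := ((eventually_ge_atTop 0).and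
    (h'.tendsto_zero.eventually (gt_mem_nhds (h.pos 0 le_rfl)))).exists
  have := h.continuous
  have := h'.continuous
  obtain ⟨⟨τ, m⟩, ⟨hτ, hm⟩, htouch, hge⟩ := exists_first_touching
    ((isCompact_Icc (a := 0) (b := T)).prod (isCompact_Icc (a := 0) (b := R)))
    (g := fun p => U' (p.2 + p.1) - U p.2) (p₀ := (T, 0)) (by fun_prop)
    ⟨⟨hT0, le_rfl⟩, le_rfl, hR0⟩ (by simpa using hT.le)
  have hge_le : ∀ r, 0 ≤ r → r ≤ R → U r ≤ U' (r + τ) := by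
    intro r hr hrR
    rcases hτ.1.eq_or_lt with hzero | hτ0
    · rw [← show 0 = τ from hzero, add_zero]
      exact hle r hr
    refine sub_nonneg.1 (hge r ?_)
    filter_upwards [Ioo_mem_nhdsLT hτ0] with x hx
    exact ⟨⟨hx.1.le, hx.2.le.trans hτ.2⟩, hr, hrR⟩
  refine ⟨τ, m, hτ.1, hm.1, (hge_le m hm.1 hm.2).antisymm (sub_nonpos.1 htouch), fun r hr => ?_⟩
  by_contra! hlt
  obtain ⟨t, ht, htR, hlt⟩ := exists_le_lt_of_lt h.solvesRadialPoisson
    (h'.solvesRadialPoisson.comp_add_const hτ.1) le_rfl hR0 (by fun_prop) (by fun_prop)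
    h.tendsto_zero (h'.tendsto_zero.comp (tendsto_atTop_add_const_right _ τ tendsto_id))
    (fun r hr => (h'.pos _ (add_nonneg hr.le hτ.1)).le)
    (fun r hr => h'.nlsForce_le_translate_source hn hb hτ.1 hr)
    hδ (fun r hr => (hR r hr.le).1.le) hr hlt
  exact hlt.not_ge (hge_le t ht htR)

theorem translation_eq_zero_of_touching_at_zero (hn : 1 ≤ n) (hb : 0 < b)
    (h : IsGroundState (nlsForce a b) n U V) (h' : IsGroundState (nlsForce a b) n U' V')
    (hτ : 0 ≤ τ) (hle : ∀ r, 0 ≤ r → U r ≤ U' (r + τ)) (heq : U 0 = U' τ) : τ = 0 := by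
  by_contra hne
  have hd : HasDerivAt (fun r => U' (r + τ) - U r) (V' (0 + τ) - V 0) 0 :=
    ((h'.hasDerivAt (0 + τ)).comp_add_const 0 τ).sub (h.hasDerivAt 0)
  rw [h.deriv_zero, sub_zero, zero_add] at hd
  obtain ⟨r, hneg, hr⟩ := ((eventually_neg_right_of_hasDerivAt_neg hd (by simp [heq])
    (h'.deriv_neg hn hb (hτ.lt_of_ne' hne))).and self_mem_nhdsWithin).exists
  exact hneg.not_ge (sub_nonneg.2 (hle r (le_of_lt hr)))

theorem isLocalMin_translate_sub (hm : 0 < m) (hle : ∀ r, 0 ≤ r → U r ≤ U' (r + τ))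
    (heq : U m = U' (m + τ)) : IsLocalMin ((fun r => U' (r + τ)) - U) m := by
  filter_upwards [Ioi_mem_nhds hm] with r hr
  simpa [heq] using hle r (le_of_lt hr)

theorem translation_eq_zero_of_touching (hn : 1 ≤ n) (hb : 0 < b)
    (h : IsGroundState (nlsForce a b) n U V) (h' : IsGroundState (nlsForce a b) n U' V')
    (hτ : 0 ≤ τ) (hm : 0 < m) (hle : ∀ r, 0 ≤ r → U r ≤ U' (r + τ)) (heq : U m = U' (m + τ)) :
    τ = 0 := by
  have hmin := isLocalMin_translate_sub hm hle heq
  have htrans := h'.solvesRadialPoisson.comp_add_const hτ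
  have hsub := htrans.sub h.solvesRadialPoisson
  rcases hn.eq_or_lt with rfl | hn1
  · obtain ⟨K, hK⟩ := lipschitzWith_nlsForce a b
    have hall : Set.EqOn (fun r => U' (r + τ)) U (Set.Ioi 0) := fun r hr =>
      (SolvesRadialPoisson.unique le_rfl hK (by simpa using htrans) h.solvesRadialPoisson hm
        heq.symm (sub_eq_zero.1 (hsub.deriv_eq_zero_of_isLocalMin hm hmin)) hr).1
    have hzero := hall.closure (h'.continuous.comp (continuous_add_const τ)) h.continuous
      (show 0 ∈ closure (Set.Ioi 0) by simp)
    exact h.translation_eq_zero_of_touching_at_zero hn hb h' hτ hle (by simpa using hzero.symm)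
  · by_contra hne
    have hsource := hsub.source_nonpos_of_isLocalMin hm hmin
    have hn1' : (0 : ℝ) < n - 1 := sub_pos.2 (by exact_mod_cast hn1)
    have hfriction : 0 < 1 / m - 1 / (m + τ) :=
      sub_pos.2 (one_div_lt_one_div_of_lt hm (lt_add_of_pos_right m (hτ.lt_of_ne' hne)))
    have hV := neg_pos.2 (h'.deriv_neg hn hb (add_pos_of_pos_of_nonneg hm hτ))
    simp only [Pi.sub_apply, ← heq] at hsource
    linarith [mul_pos (mul_pos hn1' hfriction) hV]

theorem eqOn_of_le (hn : 1 ≤ n) (hb : 0 < b) (h : IsGroundState (nlsForce a b) n U V)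
    (h' : IsGroundState (nlsForce a b) n U' V') (hle : ∀ r, 0 ≤ r → U r ≤ U' r) :
    Set.EqOn U U' (Set.Ici 0) := by
  obtain ⟨K, hK⟩ := lipschitzWith_nlsForce a b
  obtain ⟨τ, m, hτ, hm, heq, hge⟩ := h.exists_translate_touching hn hb h' hle
  rcases hm.eq_or_lt with rfl | hm0
  · have hτ0 := h.translation_eq_zero_of_touching_at_zero hn hb h' hτ hge (by simpa using heq)
    exact h.eqOn_of_eq_at_zero hn hK h'.toIsRadialSol (by simpa [hτ0] using heq)
  · obtain rfl := h.translation_eq_zero_of_touching hn hb h' hτ hm0 hge heq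
    have hV := (h'.solvesRadialPoisson.comp_add_const hτ).sub h.solvesRadialPoisson
      |>.deriv_eq_zero_of_isLocalMin hm0 (isLocalMin_translate_sub hm0 hge heq)
    rw [Pi.sub_apply, sub_eq_zero, add_zero] at hV
    rw [add_zero] at heq
    exact h.eqOn_of_eq_at_pos hn hK h'.toIsRadialSol hm0 heq hV.symm

theorem le_of_maxLogHeight_lt (hn : 1 ≤ n) (ha : 0 < a) (hb : 0 < b)
    (h : IsGroundState (nlsForce a b) n U V) (h' : IsGroundState (nlsForce a b) n U' V')
    (hlt : ∀ θ, 0 < θ → maxLogHeight U θ < maxLogHeight U' θ) (hr : 0 ≤ r) : U r ≤ U' r := by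
  have hpos : ∀ r ∈ Set.Ioi 0, U r ≤ U' r := fun r hr => by
    have hθ := h'.logSlope_pos hn hb hr
    rw [← logHeight_le_logHeight_iff (h.pos r (le_of_lt hr)) (h'.pos r (le_of_lt hr)),
      ← h'.maxLogHeight_eq hn ha hb hr rfl]
    exact (h.logHeight_le_maxLogHeight hn ha hb hθ hr).trans (hlt _ hθ).le
  exact le_on_closure hpos h.continuous.continuousOn h'.continuous.continuousOn (by simpa)

theorem eqOn_of_maxLogHeight_eq (hn : 1 ≤ n) (ha : 0 < a) (hb : 0 < b)
    (h : IsGroundState (nlsForce a b) n U V) (h' : IsGroundState (nlsForce a b) n U' V') {θ : ℝ}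
    (hθ : 0 < θ) (heq : maxLogHeight U θ = maxLogHeight U' θ) : Set.EqOn U U' (Set.Ici 0) := by
  obtain ⟨t, ht, htθ⟩ := h.exists_logSlope_eq hn hb hθ
  obtain ⟨t', ht', htθ'⟩ := h'.exists_logSlope_eq hn hb hθ
  rw [h.maxLogHeight_eq hn ha hb ht htθ, h'.maxLogHeight_eq hn ha hb ht' htθ'] at heq
  rcases lt_trichotomy t t' with hlt | rfl | hlt
  · exact (PeakPair.mk h' h hθ ht hlt htθ' htθ heq.symm).elim hn ha hb |>.elim
  · obtain ⟨K, hK⟩ := lipschitzWith_nlsForce a b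
    rw [logHeight_eq_logHeight_iff (h.pos t ht.le) (h'.pos t ht.le)] at heq
    exact h.eqOn_of_eq_at_pos hn hK h'.toIsRadialSol ht heq
      (deriv_eq_of_logSlope_eq ht (h.pos t ht.le) heq (htθ.trans htθ'.symm))
  · exact (PeakPair.mk h h' hθ ht' hlt htθ htθ' heq).elim hn ha hb |>.elim

theorem unique (hn : 1 ≤ n) (ha : 0 < a) (hb : 0 < b) (h : IsGroundState (nlsForce a b) n U V)
    (h' : IsGroundState (nlsForce a b) n U' V') : Set.EqOn U U' (Set.Ici 0) := by
  by_cases hex : ∃ θ, 0 < θ ∧ maxLogHeight U θ = maxLogHeight U' θ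
  · obtain ⟨θ, hθ, heq⟩ := hex
    exact h.eqOn_of_maxLogHeight_eq hn ha hb h' hθ heq
  by_cases hlt : ∀ θ, 0 < θ → maxLogHeight U θ < maxLogHeight U' θ
  · exact h.eqOn_of_le hn hb h' fun r => h.le_of_maxLogHeight_lt hn ha hb h' hlt
  push Not at hlt
  obtain ⟨θ₁, hθ₁, hle₁⟩ := hlt
  refine (h'.eqOn_of_le hn hb h fun r =>
    h'.le_of_maxLogHeight_lt hn ha hb h fun θ hθ => lt_of_not_ge fun hle => hex ?_).symm
  exact isPreconnected_Ioi.intermediate_value₂ (Set.mem_Ioi.2 hθ) (Set.mem_Ioi.2 hθ₁)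
    (h.continuousOn_maxLogHeight hn ha hb) (h'.continuousOn_maxLogHeight hn ha hb) hle hle₁

end IsGroundState

end GroundStateUniqueness

section RadialExistence

open BoundedContinuousFunction

/-- `s^{-(m+1)} ∫₀ˢ t^m w(t) dt`, written as an integral over `[0, 1]` so that it is continuous
at `s = 0`; up to a constant it is the mean over the ball of radius `s` in dimension `m + 1`. -/
def radialMean (m : ℕ) (w : ℝ → ℝ) (s : ℝ) : ℝ := ∫ σ in (0 : ℝ)..1, σ ^ m * w (s * σ)

/-- The solution `H` of `H'' + (m/r) H' = w` with `H(0) = H'(0) = 0`. -/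
def radialPotential (m : ℕ) (w : ℝ → ℝ) (r : ℝ) : ℝ := ∫ s in (0 : ℝ)..r, s * radialMean m w s

variable {m : ℕ} {w w' : ℝ → ℝ}

theorem continuous_radialMean (m : ℕ) (hw : Continuous w) : Continuous (radialMean m w) := by
  unfold radialMean
  apply intervalIntegral.continuous_parametric_intervalIntegral_of_continuous'
  fun_prop

theorem radialMean_zero (m : ℕ) (w : ℝ → ℝ) : radialMean m w 0 = w 0 / (m + 1 : ℕ) := by
  simp only [radialMean, zero_mul, intervalIntegral.integral_mul_const, integral_pow]
  push_cast
  ring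

theorem abs_radialMean_sub_le (hw : Continuous w) (hw' : Continuous w') {s C : ℝ}
    (hC : ∀ σ ∈ Set.Ioc (0 : ℝ) 1, |w (s * σ) - w' (s * σ)| ≤ C) :
    |radialMean m w s - radialMean m w' s| ≤ C := by
  unfold radialMean
  rw [← intervalIntegral.integral_sub (Continuous.intervalIntegrable (by fun_prop) _ _)
    (Continuous.intervalIntegrable (by fun_prop) _ _)]
  refine (intervalIntegral.norm_integral_le_of_norm_le_const (E := ℝ) fun σ hσ => ?_).trans_eq
    (by simp : C * |1 - 0| = C)
  rw [Set.uIoc_of_le zero_le_one] at hσ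
  rw [← mul_sub, norm_mul, norm_pow, Real.norm_eq_abs, Real.norm_eq_abs, abs_of_pos hσ.1]
  exact (mul_le_of_le_one_left (abs_nonneg _) (pow_le_one₀ hσ.1.le hσ.2)).trans (hC σ hσ)

theorem abs_radialMean_le (hw : Continuous w) {s C : ℝ} (hC : ∀ x, |w x| ≤ C) :
    |radialMean m w s| ≤ C := by
  simpa [radialMean] using abs_radialMean_sub_le (m := m) hw (w' := 0) continuous_zero (s := s)
    fun σ _ => (by simpa using hC (s * σ) : |w (s * σ) - (0 : ℝ → ℝ) (s * σ)| ≤ C)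

theorem mul_radialMean_eq (m : ℕ) (w : ℝ → ℝ) {s : ℝ} (hs : 0 < s) :
    s * radialMean m w s = (s ^ m)⁻¹ * ∫ t in (0 : ℝ)..s, t ^ m * w t := by
  have hsubst := intervalIntegral.mul_integral_comp_mul_left (a := 0) (b := 1)
    (f := fun t => t ^ m * w t) (c := s)
  simp only [mul_zero, mul_one, mul_pow, mul_assoc, intervalIntegral.integral_const_mul] at hsubst
  rw [← hsubst, radialMean]
  have : s ^ m ≠ 0 := by positivity
  field_simp

theorem hasDerivAt_mul_radialMean (m : ℕ) (hw : Continuous w) {r : ℝ} (hr : 0 < r) :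
    HasDerivAt (fun s => s * radialMean m w s)
      (w r - m / r * (r * radialMean m w r)) r := by
  have hcont : Continuous fun t => t ^ m * w t := by fun_prop
  have hint : HasDerivAt (fun r => ∫ t in (0 : ℝ)..r, t ^ m * w t) (r ^ m * w r) r :=
    intervalIntegral.integral_hasDerivAt_right (hcont.intervalIntegrable _ _)
      (hcont.stronglyMeasurableAtFilter _ _) hcont.continuousAt
  have hrm : r ^ m ≠ 0 := by positivity
  have heq : (fun s => s * radialMean m w s) =ᶠ[nhds r]
      fun s => (s ^ m)⁻¹ * ∫ t in (0 : ℝ)..s, t ^ m * w t := by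
    filter_upwards [lt_mem_nhds hr] with s hs using mul_radialMean_eq m w hs
  refine ((((hasDerivAt_pow m r).inv hrm).mul hint).congr_of_eventuallyEq heq).congr_deriv ?_
  rw [mul_radialMean_eq m w hr]
  simp only [Pi.inv_apply]
  rcases m with _ | m
  · simp
  · rw [Nat.add_sub_cancel]
    field_simp
    ring

theorem hasDerivAt_mul_radialMean_zero (m : ℕ) (hw : Continuous w) :
    HasDerivAt (fun s => s * radialMean m w s) (radialMean m w 0) 0 := by
  rw [hasDerivAt_iff_tendsto_slope]
  have hlim : Tendsto (radialMean m w) (nhdsWithin 0 {0}ᶜ) (nhds (radialMean m w 0)) :=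
    (continuous_radialMean m hw).continuousAt.continuousWithinAt
  refine hlim.congr' ?_
  filter_upwards [self_mem_nhdsWithin] with x hx
  rw [slope_def_field, sub_zero, zero_mul, sub_zero, mul_div_cancel_left₀ _ hx]

theorem hasDerivAt_radialPotential (m : ℕ) (hw : Continuous w) (r : ℝ) :
    HasDerivAt (radialPotential m w) (r * radialMean m w r) r := by
  have hcont : Continuous fun s => s * radialMean m w s :=
    continuous_id.mul (continuous_radialMean m hw)
  exact intervalIntegral.integral_hasDerivAt_right (hcont.intervalIntegrable _ _)
    (hcont.stronglyMeasurableAtFilter _ _) hcont.continuousAt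

theorem continuous_radialPotential (m : ℕ) (hw : Continuous w) :
    Continuous (radialPotential m w) :=
  continuous_iff_continuousAt.2 fun r => (hasDerivAt_radialPotential m hw r).continuousAt

theorem radialPotential_zero (m : ℕ) (w : ℝ → ℝ) : radialPotential m w 0 = 0 := by
  simp [radialPotential]

theorem abs_le_of_abs_deriv_le {F F' G G' : ℝ → ℝ} (hF : ∀ x, HasDerivAt F (F' x) x)
    (hG : ∀ x, HasDerivAt G (G' x) x) (h0 : |F 0| ≤ G 0) (h : ∀ x, 0 ≤ x → |F' x| ≤ G' x)
    {r : ℝ} (hr : 0 ≤ r) : |F r| ≤ G r :=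
  image_norm_le_of_norm_deriv_right_le_deriv_boundary (a := 0) (b := r)
    (fun x _ => (hF x).continuousAt.continuousWithinAt) (fun x _ => (hF x).hasDerivWithinAt)
    h0 hG (fun x hx => h x hx.1) (Set.right_mem_Icc.2 hr)

theorem abs_radialPotential_le (hw : Continuous w) {C : ℝ} (hC : ∀ x, |w x| ≤ C) {r : ℝ}
    (hr : 0 ≤ r) : |radialPotential m w r| ≤ C * r ^ 2 / 2 := by
  refine abs_le_of_abs_deriv_le (G := fun r => C * r ^ 2 / 2) (G' := fun x => C * x)
    (hasDerivAt_radialPotential m hw) (fun x => ?_) (by simp [radialPotential_zero])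
    (fun x hx => ?_) hr
  · refine (((hasDerivAt_pow 2 x).const_mul C).div_const 2).congr_deriv ?_
    push_cast
    ring
  · rw [abs_mul, abs_of_nonneg hx, mul_comm]
    exact mul_le_mul_of_nonneg_right (abs_radialMean_le hw hC) hx

theorem abs_radialPotential_sub_le (hw : Continuous w) (hw' : Continuous w') {L C : ℝ}
    (hL : 0 < L) (hC : 0 ≤ C) (h : ∀ x, 0 ≤ x → |w x - w' x| ≤ C * exp (L * x ^ 2)) {r : ℝ}
    (hr : 0 ≤ r) :
    |radialPotential m w r - radialPotential m w' r| ≤ C / (2 * L) * exp (L * r ^ 2) := by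
  refine abs_le_of_abs_deriv_le (G := fun r => C / (2 * L) * exp (L * r ^ 2))
    (G' := fun x => C * (x * exp (L * x ^ 2)))
    (fun x => (hasDerivAt_radialPotential m hw x).sub (hasDerivAt_radialPotential m hw' x))
    (fun x => ?_) ?_ (fun x hx => ?_) hr
  · refine (((hasDerivAt_pow 2 x).const_mul L).exp.const_mul (C / (2 * L))).congr_deriv ?_
    push_cast
    field_simp
  · simp only [Pi.sub_apply, radialPotential_zero, sub_zero, abs_zero]
    positivity
  · rw [← mul_sub, abs_mul, abs_of_nonneg hx, mul_left_comm]
    refine mul_le_mul_of_nonneg_left (abs_radialMean_sub_le hw hw' fun σ hσ => ?_) hx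
    refine (h _ (mul_nonneg hx hσ.1.le)).trans ?_
    gcongr
    · exact mul_nonneg hx hσ.1.le
    · exact mul_le_of_le_one_right hx hσ.2

variable {f : ℝ → ℝ} {L α : ℝ}

/-- The source term `f(U)` for `U = α + exp(L x²) g(x)`. The Gaussian factor makes the Picard
iteration for `g` a contraction on the whole half line. -/
def picardSource (f : ℝ → ℝ) (L α : ℝ) (g : ℝ →ᵇ ℝ) (x : ℝ) : ℝ :=
  f (α + exp (L * x ^ 2) * g x)

theorem continuous_picardSource (hf : Continuous f) (L α : ℝ) (g : ℝ →ᵇ ℝ) :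
    Continuous (picardSource f L α g) := by
  unfold picardSource
  fun_prop

theorem abs_exp_neg_mul_radialPotential_le (hf : Continuous f) {M : ℝ} (hM : ∀ x, |f x| ≤ M)
    (hL : 0 < L) (g : ℝ →ᵇ ℝ) (r : ℝ) :
    ‖-(exp (-(L * r ^ 2)) * radialPotential m (picardSource f L α g) |r|)‖ ≤ M / (2 * L) := by
  have hM0 : 0 ≤ M := (abs_nonneg _).trans (hM 0)
  rw [norm_neg, norm_mul, Real.norm_eq_abs, Real.norm_eq_abs, abs_exp, exp_neg,
    inv_mul_le_iff₀ (exp_pos _)]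
  calc _ ≤ M * |r| ^ 2 / 2 := abs_radialPotential_le (continuous_picardSource hf L α g)
        (fun x => hM _) (abs_nonneg r)
    _ = L * r ^ 2 * (M / (2 * L)) := by rw [sq_abs]; field_simp
    _ ≤ exp (L * r ^ 2) * (M / (2 * L)) := by
        gcongr
        linarith [add_one_le_exp (L * r ^ 2)]

theorem abs_picardSource_sub_le {K : NNReal} (hf : LipschitzWith K f) (hKL : K ≤ L)
    (g h : ℝ →ᵇ ℝ) (x : ℝ) :
    |picardSource f L α g x - picardSource f L α h x| ≤ L * dist g h * exp (L * x ^ 2) := by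
  have hgh : |g x - h x| ≤ dist g h := by
    rw [← Real.dist_eq]; exact dist_coe_le_dist x
  calc |picardSource f L α g x - picardSource f L α h x|
      ≤ K * |(α + exp (L * x ^ 2) * g x) - (α + exp (L * x ^ 2) * h x)| := hf.dist_le_mul _ _
    _ = K * (exp (L * x ^ 2) * |g x - h x|) := by
        rw [add_sub_add_left_eq_sub, ← mul_sub, abs_mul, abs_exp]
    _ ≤ L * (exp (L * x ^ 2) * dist g h) := by gcongr; exact K.2.trans hKL
    _ = L * dist g h * exp (L * x ^ 2) := by ring

theorem exists_picard_fixedPoint (m : ℕ) {K : NNReal} (hf : LipschitzWith K f) {M : ℝ}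
    (hM : ∀ x, |f x| ≤ M) (hL : 0 < L) (hKL : K ≤ L) (α : ℝ) :
    ∃ g : ℝ →ᵇ ℝ, ∀ r, 0 ≤ r →
      exp (L * r ^ 2) * g r = -radialPotential m (picardSource f L α g) r := by
  have hW := continuous_picardSource hf.continuous L α
  let T (g : ℝ →ᵇ ℝ) : ℝ →ᵇ ℝ := ofNormedAddCommGroup
    (fun r => -(exp (-(L * r ^ 2)) * radialPotential m (picardSource f L α g) |r|))
    (by have := continuous_radialPotential m (hW g); fun_prop) (M / (2 * L))
    (abs_exp_neg_mul_radialPotential_le hf.continuous hM hL g)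
  have hTapply (g : ℝ →ᵇ ℝ) (r : ℝ) :
      T g r = -(exp (-(L * r ^ 2)) * radialPotential m (picardSource f L α g) |r|) := rfl
  have hcontracting : ContractingWith (1 / 2) T := by
    refine ⟨by norm_num, LipschitzWith.of_dist_le_mul fun g h => ?_⟩
    rw [BoundedContinuousFunction.dist_le (by positivity)]
    intro r
    rw [Real.dist_eq, hTapply, hTapply, neg_sub_neg, ← mul_sub, abs_mul, abs_exp, abs_sub_comm,
      exp_neg, inv_mul_le_iff₀ (exp_pos _)]
    refine (abs_radialPotential_sub_le (hW g) (hW h) hL (by positivity)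
      (fun x _ => abs_picardSource_sub_le hf hKL g h x) (abs_nonneg r)).trans_eq ?_
    rw [sq_abs]
    push_cast
    field_simp
  refine ⟨hcontracting.fixedPoint, fun r hr => ?_⟩
  have hfixed := DFunLike.congr_fun hcontracting.fixedPoint_isFixedPt r
  rw [hTapply, abs_of_nonneg hr, exp_neg] at hfixed
  have := exp_pos (L * r ^ 2)
  rw [← hfixed]
  field_simp

theorem exists_isRadialSol {n : ℕ} (hn : 1 ≤ n) {K : NNReal} (hf : LipschitzWith K f) {M : ℝ}
    (hM : ∀ x, |f x| ≤ M) (α : ℝ) : ∃ U V, IsRadialSol f n U V ∧ U 0 = α := by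
  obtain ⟨m, rfl⟩ : ∃ m, n = m + 1 := ⟨n - 1, by omega⟩
  obtain ⟨g, hg⟩ := exists_picard_fixedPoint m hf hM (L := K + 1) (by positivity)
    (le_add_of_nonneg_right zero_le_one) α
  set W := picardSource f (K + 1) α g with hWdef
  have hW : Continuous W := continuous_picardSource hf.continuous _ α g
  have hWU (r : ℝ) (hr : 0 ≤ r) : W r = f (α - radialPotential m W r) := by
    rw [hWdef, picardSource, hg r hr, ← sub_eq_add_neg]
  refine ⟨fun r => α - radialPotential m W r, fun r => -(r * radialMean m W r),
    ⟨fun r => ?_, fun r hr => ?_, ?_, by simp⟩, by simp [radialPotential_zero]⟩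
  · simpa using (hasDerivAt_radialPotential m hW r).const_sub α
  · refine (hasDerivAt_mul_radialMean m hW hr).neg.congr_deriv ?_
    rw [← hWU r hr.le]
    push_cast
    ring
  · rw [← hWU 0 le_rfl, ← radialMean_zero]
    exact (hasDerivAt_mul_radialMean_zero m hW).neg

end RadialExistence

section Shooting

variable {f F : ℝ → ℝ} {n : ℕ}

/-- Mean value theorem on successive intervals of length at least `1`. -/
theorem exists_tendsto_deriv_zero {g g' : ℝ → ℝ} {x : ℕ → ℝ} {l : ℝ}
    (hg : ∀ r, 0 < r → HasDerivAt g (g' r) r) (hpos : ∀ k, 0 < x k)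
    (hx : ∀ k, x k + 1 ≤ x (k + 1)) (hlim : Tendsto (fun k => g (x k)) atTop (nhds l)) :
    ∃ ξ : ℕ → ℝ, (∀ k, ξ k ∈ Set.Ioo (x k) (x (k + 1))) ∧
      Tendsto (fun k => g' (ξ k)) atTop (nhds 0) := by
  have hmvt (k : ℕ) : ∃ ξ ∈ Set.Ioo (x k) (x (k + 1)),
      g' ξ = (g (x (k + 1)) - g (x k)) / (x (k + 1) - x k) :=
    exists_hasDerivAt_eq_slope g g' (by linarith [hx k])
      (fun t ht => (hg t ((hpos k).trans_le ht.1)).continuousAt.continuousWithinAt)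
      fun t ht => hg t ((hpos k).trans ht.1)
  choose ξ hξ hslope using hmvt
  refine ⟨ξ, hξ, ?_⟩
  have hdiff : Tendsto (fun k => |g (x (k + 1)) - g (x k)|) atTop (nhds 0) := by
    simpa using ((hlim.comp (tendsto_add_atTop_nat 1)).sub hlim).abs
  refine squeeze_zero_norm (fun k => ?_) hdiff
  rw [hslope, Real.norm_eq_abs, abs_div]
  exact div_le_self (abs_nonneg _) (by rw [abs_of_pos] <;> linarith [hx k])

namespace IsRadialSol

variable {U V U' V' : ℝ → ℝ} {L : ℝ}

theorem abs_sub_le (hn : 1 ≤ n) {K : NNReal} (hf : LipschitzWith K f) (h : IsRadialSol f n U V)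
    (h' : IsRadialSol f n U' V') {r : ℝ} (hr : 0 ≤ r) :
    |U r - U' r| ≤ exp ((1 + K) * r / 2) * |U 0 - U' 0| ∧
      |V r - V' r| ≤ exp ((1 + K) * r / 2) * |U 0 - U' 0| := by
  have hle := sq_dist_le hn hf h h' hr
  have hsq : (exp ((1 + K) * r / 2) * |U 0 - U' 0|) ^ 2
      = (U 0 - U' 0) ^ 2 * exp ((1 + K) * r) := by
    rw [mul_pow, sq_abs, ← exp_nat_mul, mul_comm]
    congr 2
    push_cast
    ring
  constructor <;> refine abs_le_of_sq_le_sq ?_ (by positivity) <;>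
    linarith [sq_nonneg (U r - U' r), sq_nonneg (V r - V' r)]

theorem abs_deriv_le (hn : 1 ≤ n) (hF : ∀ x, HasDerivAt F (f x) x) (h : IsRadialSol f n U V)
    {A B : ℝ} (hA : ∀ x, A ≤ F x) (hB : ∀ x, F x ≤ B) {r : ℝ} (hr : 0 ≤ r) :
    |V r| ≤ √(2 * (B - A)) := by
  have henergy := h.antitoneOn_radialEnergy hn hF Set.self_mem_Ici hr hr
  simp only [radialEnergy, h.deriv_zero] at henergy
  exact abs_le_sqrt (by linarith [hA (U r), hB (U 0)])

theorem exists_deriv_tendsto_zero (h : IsRadialSol f n U V) (hL : Tendsto U atTop (nhds L)) :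
    ∃ ξ : ℕ → ℝ, (∀ k : ℕ, ξ k ∈ Set.Ioo (k + 1 : ℝ) (k + 2)) ∧
      Tendsto (fun k => V (ξ k)) atTop (nhds 0) := by
  obtain ⟨ξ, hξ, hlim⟩ := exists_tendsto_deriv_zero (x := fun k : ℕ => (k : ℝ) + 1)
    (fun r _ => h.hasDerivAt r) (fun k => by positivity) (fun k => by push_cast; rfl)
    (hL.comp (tendsto_natCast_atTop_atTop.atTop_add tendsto_const_nhds))
  refine ⟨ξ, fun k => ⟨(hξ k).1, (hξ k).2.trans_eq ?_⟩, hlim⟩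
  push_cast
  ring

theorem le_of_tendsto_of_le_radialEnergy (hF : Continuous F) (h : IsRadialSol f n U V)
    (hL : Tendsto U atTop (nhds L)) {c : ℝ} (hc : ∀ r, 0 ≤ r → c ≤ radialEnergy F U V r) :
    c ≤ F L := by
  obtain ⟨ξ, hξ, hV⟩ := h.exists_deriv_tendsto_zero hL
  have hξtop : Tendsto ξ atTop atTop :=
    tendsto_atTop_mono (fun k => by linarith [(hξ k).1]) tendsto_natCast_atTop_atTop
  have henergy : Tendsto (fun k => radialEnergy F U V (ξ k)) atTop (nhds (0 ^ 2 / 2 + F L)) :=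
    ((hV.pow 2).div_const 2).add ((hF.tendsto L).comp (hL.comp hξtop))
  simpa using ge_of_tendsto' henergy fun k =>
    hc (ξ k) (by linarith [(hξ k).1, k.cast_nonneg (α := ℝ)])

/-- Along suitable radii tending to infinity both `V` and its derivative tend to zero. -/
theorem force_eq_zero_of_tendsto (hf : Continuous f) (h : IsRadialSol f n U V)
    (hL : Tendsto U atTop (nhds L)) {C : ℝ} (hC : ∀ r, 0 ≤ r → |V r| ≤ C) : f L = 0 := by
  obtain ⟨ξ, hξ, hV⟩ := h.exists_deriv_tendsto_zero hL
  have hpos (k : ℕ) : 0 < ξ (2 * k) := by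
    linarith [(hξ (2 * k)).1, (2 * k).cast_nonneg (α := ℝ)]
  obtain ⟨η, hη, hV'⟩ := exists_tendsto_deriv_zero (x := fun k => ξ (2 * k))
    h.hasDerivAt_deriv hpos
    (fun k => by
      have hlow := (hξ (2 * (k + 1))).1
      have hup := (hξ (2 * k)).2
      push_cast at hlow hup
      linarith)
    (hV.comp (tendsto_id.const_mul_atTop' two_pos))
  have hηpos (k : ℕ) : 0 < η k := (hpos k).trans (hη k).1
  have hηtop : Tendsto η atTop atTop := by
    refine tendsto_atTop_mono (fun k => ?_) tendsto_natCast_atTop_atTop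
    have hlow := (hξ (2 * k)).1
    push_cast at hlow
    linarith [(hη k).1, k.cast_nonneg (α := ℝ)]
  have hdamping : Tendsto (fun k => ((n : ℝ) - 1) / η k * V (η k)) atTop (nhds 0) :=
    (hηtop.const_div_atTop _).zero_mul_isBoundedUnder_le
      (isBoundedUnder_of ⟨C, fun k => hC _ (hηpos k).le⟩)
  have hforce := (hdamping.neg.sub ((hf.tendsto L).comp (hL.comp hηtop)))
  rw [neg_zero, zero_sub] at hforce
  exact neg_eq_zero.1 (tendsto_nhds_unique hforce hV')

theorem const (n : ℕ) {x : ℝ} (hx : f x = 0) :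
    IsRadialSol f n (fun _ => x) (fun _ => 0) where
  hasDerivAt _ := hasDerivAt_const _ _
  hasDerivAt_deriv r _ := by simpa [hx] using hasDerivAt_const r (0 : ℝ)
  hasDerivAt_deriv_zero := by simpa [hx] using hasDerivAt_const (0 : ℝ) (0 : ℝ)
  deriv_zero := rfl

theorem pos_of_nonneg (hn : 1 ≤ n) {K : NNReal} (hf : LipschitzWith K f) (hf0 : f 0 = 0)
    (h : IsRadialSol f n U V) (h0 : 0 < U 0) (hU : ∀ r, 0 ≤ r → 0 ≤ U r) {r : ℝ} (hr : 0 ≤ r) :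
    0 < U r := by
  refine (hU r hr).lt_of_ne fun hzero => ?_
  have hr0 : 0 < r := hr.lt_of_ne (by rintro rfl; exact h0.ne hzero)
  have hmin : IsLocalMin U r := by
    filter_upwards [lt_mem_nhds hr0] with s hs
    exact hzero ▸ hU s hs.le
  exact h0.ne' (h.eqOn_of_eq_at_pos hn hf (const n hf0) hr0 hzero.symm
    (hmin.hasDerivAt_eq_zero (h.hasDerivAt r)) Set.self_mem_Ici)

/-- The damping dissipates at most `(n - 1) / R · |V|` per unit of decrease of `U` beyond `R`. -/
theorem radialEnergy_sub_le (hn : 1 ≤ n) (hF : ∀ x, HasDerivAt F (f x) x)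
    (h : IsRadialSol f n U V) {R r C : ℝ} (hR : 0 < R) (hRr : R ≤ r)
    (hV : ∀ t ∈ Set.Icc R r, V t ≤ 0) (hC : ∀ t ∈ Set.Icc R r, |V t| ≤ C) :
    radialEnergy F U V R - radialEnergy F U V r ≤ ((n : ℝ) - 1) / R * C * (U R - U r) := by
  set κ := ((n : ℝ) - 1) / R * C
  have hderiv (t : ℝ) (ht : 0 < t) : HasDerivAt (fun t => radialEnergy F U V t - κ * U t)
      (-(((n : ℝ) - 1) / t * V t ^ 2) - κ * V t) t :=
    (h.hasDerivAt_radialEnergy hF ht).sub ((h.hasDerivAt t).const_mul κ)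
  have hmono : MonotoneOn (fun t => radialEnergy F U V t - κ * U t) (Set.Icc R r) := by
    refine monotoneOn_of_hasDerivWithinAt_nonneg (convex_Icc R r)
      (fun t ht => (hderiv t (hR.trans_le ht.1)).continuousAt.continuousWithinAt)
      (fun t ht => (hderiv t (hR.trans_le (interior_subset ht).1)).hasDerivWithinAt)
      fun t ht => ?_
    have ht := interior_subset ht
    have hcoef : ((n : ℝ) - 1) / t ≤ ((n : ℝ) - 1) / R :=
      div_le_div_of_nonneg_left (sub_nonneg.2 (by exact_mod_cast hn)) hR ht.1
    have hsq : V t ^ 2 ≤ C * -V t := by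
      have := hC t ht
      rw [abs_of_nonpos (hV t ht)] at this
      nlinarith [hV t ht]
    have := mul_le_mul hcoef hsq (sq_nonneg _) (dim_sub_one_div_nonneg hn hR.le)
    linarith
  have := hmono (Set.left_mem_Icc.2 hRr) (Set.right_mem_Icc.2 hRr) hRr
  simp only at this
  linarith

end IsRadialSol
end Shooting

section GroundStateExistence

/-- The central values from which the radial solution becomes negative. -/
def crossingHeights (U : ℝ → ℝ → ℝ) : Set ℝ := {α | ∃ r, 0 ≤ r ∧ U α r < 0}

/-- The central values from which the radial solution loses so much energy, while still positive,
that it can never reach zero. -/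
def trappedHeights (F : ℝ → ℝ) (U V : ℝ → ℝ → ℝ) : Set ℝ :=
  {α | ∃ r, 0 ≤ r ∧ (∀ s ∈ Set.Icc 0 r, 0 < U α s) ∧ radialEnergy F (U α) (V α) r < 0}

section Family

variable {f F : ℝ → ℝ} {n : ℕ} {U V : ℝ → ℝ → ℝ} {K : NNReal}

theorem continuous_apply_family (hn : 1 ≤ n) (hf : LipschitzWith K f)
    (hS : ∀ α, IsRadialSol f n (U α) (V α)) (h0 : ∀ α, U α 0 = α) {r : ℝ} (hr : 0 ≤ r) :
    (Continuous fun α => U α r) ∧ Continuous fun α => V α r := by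
  have hle (α β : ℝ) := (hS α).abs_sub_le hn hf (hS β) hr
  simp only [h0] at hle
  have hexp : 0 ≤ exp ((1 + K) * r / 2) := (exp_pos _).le
  exact ⟨(LipschitzWith.of_dist_le_mul (K := ⟨_, hexp⟩) fun α β => (hle α β).1).continuous,
    (LipschitzWith.of_dist_le_mul (K := ⟨_, hexp⟩) fun α β => (hle α β).2).continuous⟩

theorem continuous_radialEnergy_family (hn : 1 ≤ n) (hf : LipschitzWith K f) (hF : Continuous F)
    (hS : ∀ α, IsRadialSol f n (U α) (V α)) (h0 : ∀ α, U α 0 = α) {r : ℝ} (hr : 0 ≤ r) :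
    Continuous fun α => radialEnergy F (U α) (V α) r := by
  obtain ⟨hU, hV⟩ := continuous_apply_family hn hf hS h0 hr
  unfold radialEnergy
  fun_prop

theorem isOpen_crossingHeights (hn : 1 ≤ n) (hf : LipschitzWith K f)
    (hS : ∀ α, IsRadialSol f n (U α) (V α)) (h0 : ∀ α, U α 0 = α) :
    IsOpen (crossingHeights U) := by
  refine isOpen_iff_mem_nhds.2 ?_
  rintro α ⟨r, hr, hneg⟩
  filter_upwards [(continuous_apply_family hn hf hS h0 hr).1.continuousAt.eventually_lt_const
    hneg] with β hβ using ⟨r, hr, hβ⟩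

theorem isOpen_trappedHeights (hn : 1 ≤ n) (hf : LipschitzWith K f) (hF : Continuous F)
    (hS : ∀ α, IsRadialSol f n (U α) (V α)) (h0 : ∀ α, U α 0 = α) :
    IsOpen (trappedHeights F U V) := by
  refine isOpen_iff_mem_nhds.2 ?_
  rintro α ⟨r, hr, hpos, henergy⟩
  obtain ⟨s₀, hs₀, hmin⟩ := isCompact_Icc.exists_isMinOn (Set.nonempty_Icc.2 hr)
    (hS α).continuous.continuousOn
  have hclose : ∀ᶠ β in nhds α, exp ((1 + K) * r / 2) * |β - α| < U α s₀ := by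
    have hcont : Continuous fun β : ℝ => exp ((1 + K) * r / 2) * |β - α| := by fun_prop
    exact hcont.continuousAt.eventually_lt_const (by simpa using hpos s₀ hs₀)
  have hcont := continuous_radialEnergy_family hn hf hF hS h0 hr
  filter_upwards [hcont.continuousAt.eventually_lt_const henergy, hclose] with β hβ hβα
  refine ⟨r, hr, fun s hs => ?_, hβ⟩
  have hle := ((hS β).abs_sub_le hn hf (hS α) hs.1).1
  rw [h0, h0] at hle
  have hexp : exp ((1 + K) * s / 2) * |β - α| ≤ exp ((1 + K) * r / 2) * |β - α| := by
    gcongr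
    exact hs.2
  linarith [(abs_le.1 hle).1, show U α s₀ ≤ U α s from hmin hs]

theorem disjoint_crossingHeights_trappedHeights (hn : 1 ≤ n) (hF : ∀ x, HasDerivAt F (f x) x)
    (hF0 : F 0 = 0) (hS : ∀ α, IsRadialSol f n (U α) (V α)) :
    Disjoint (crossingHeights U) (trappedHeights F U V) := by
  rw [Set.disjoint_left]
  rintro α ⟨r₁, hr₁, hneg⟩ ⟨r₂, hr₂, hpos, henergy⟩
  have hlt : r₂ < r₁ := lt_of_not_ge fun hle => (hpos r₁ ⟨hr₁, hle⟩).not_gt hneg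
  obtain ⟨c, hc, hUc⟩ := intermediate_value_Icc' hlt.le (hS α).continuous.continuousOn
    ⟨hneg.le, (hpos r₂ ⟨hr₂, le_rfl⟩).le⟩
  have hle := (hS α).antitoneOn_radialEnergy hn hF hr₂ (hr₂.trans hc.1) hc.1
  have hnonneg : 0 ≤ radialEnergy F (U α) (V α) c := by
    rw [radialEnergy, hUc, hF0, add_zero]
    positivity
  linarith

end Family

variable {a b c : ℝ} {n : ℕ} {U V : ℝ → ℝ}

theorem IsRadialSol.nls_deriv_neg (hn : 1 ≤ n) (hb : 0 < b)
    (h : IsRadialSol (nlsForce a b) n U V) (hpos : ∀ r, 0 ≤ r → 0 < U r) (h0 : U 0 < π / 2)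
    (henergy : ∀ r, 0 ≤ r → (∀ t ∈ Set.Icc 0 r, V t ≤ 0) →
      0 ≤ radialEnergy (nlsPotential a b) U V r) {r : ℝ} (hr : 0 < r) : V r < 0 := by
  refine h.deriv_neg hn (fun s hs hV hVs => ?_) hr
  have hmem : U s ∈ Set.Ioo 0 (π / 2) := ⟨hpos s hs,
    (h.antitoneOn_Icc hV (Set.left_mem_Icc.2 hs) (Set.right_mem_Icc.2 hs) hs).trans_lt h0⟩
  refine nlsForce_pos hmem (lt_mul_sin_sq_of_nlsPotential_nonneg hb hmem ?_)
  simpa [radialEnergy, hVs] using henergy s hs hV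

theorem exists_tendsto_atTop_of_antitoneOn {g : ℝ → ℝ} (hg : AntitoneOn g (Set.Ici 0))
    (hc : ∀ r, 0 ≤ r → c ≤ g r) : ∃ L ∈ Set.Icc c (g 0), Tendsto g atTop (nhds L) := by
  have hanti : Antitone fun r => g (max r 0) := fun r s hrs =>
    hg (le_max_right r 0) (le_max_right s 0) (max_le_max_right 0 hrs)
  have hbdd : BddBelow (Set.range fun r => g (max r 0)) :=
    ⟨c, Set.forall_mem_range.2 fun r => hc _ (le_max_right r 0)⟩
  have hlim : Tendsto g atTop (nhds (⨅ r, g (max r 0))) := by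
    refine (tendsto_atTop_ciInf hanti hbdd).congr' ?_
    filter_upwards [eventually_ge_atTop 0] with r hr
    rw [max_eq_left hr]
  refine ⟨_, ⟨ge_of_tendsto hlim ?_, le_of_tendsto hlim ?_⟩, hlim⟩
  · filter_upwards [eventually_ge_atTop 0] with r hr using hc r hr
  · filter_upwards [eventually_ge_atTop 0] with r hr using hg Set.self_mem_Ici hr hr

theorem IsRadialSol.abs_nls_deriv_le (hn : 1 ≤ n) (ha : 0 ≤ a) (hb : 0 ≤ b)
    (h : IsRadialSol (nlsForce a b) n U V) {r : ℝ} (hr : 0 ≤ r) :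
    |V r| ≤ √(2 * (a - -b / 2)) :=
  h.abs_deriv_le hn (hasDerivAt_nlsPotential a b) (neg_div_two_le_nlsPotential ha hb)
    (nlsPotential_le ha hb) hr

theorem IsRadialSol.nls_tendsto_zero (hn : 1 ≤ n) (ha : 0 ≤ a) (hb : 0 < b)
    (h : IsRadialSol (nlsForce a b) n U V) (hpos : ∀ r, 0 ≤ r → 0 < U r) (h0 : U 0 < π / 2)
    (hV : ∀ r, 0 < r → V r < 0) (hc : 0 ≤ c)
    (henergy : ∀ r, 0 ≤ r → c ≤ radialEnergy (nlsPotential a b) U V r) :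
    Tendsto U atTop (nhds 0) ∧ c ≤ 0 := by
  obtain ⟨L, hL, hlim⟩ := exists_tendsto_atTop_of_antitoneOn (h.strictAntiOn hV).antitoneOn
    fun r hr => (hpos r hr).le
  have hcL := h.le_of_tendsto_of_le_radialEnergy (continuous_nlsPotential a b) hlim henergy
  have hforce := h.force_eq_zero_of_tendsto (continuous_nlsForce a b) hlim fun r hr =>
    h.abs_nls_deriv_le hn ha hb.le hr
  rcases hL.1.eq_or_lt with rfl | hL0
  · exact ⟨hlim, by simpa [nlsPotential] using hcL⟩
  · have hmem : L ∈ Set.Ioo 0 (π / 2) := ⟨hL0, hL.2.trans_lt h0⟩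
    exact absurd hforce
      (nlsForce_pos hmem (lt_mul_sin_sq_of_nlsPotential_nonneg hb hmem (hc.trans hcL))).ne'

/-- If `U` stays nonnegative, most of the energy present at the radius `R` survives for ever,
whereas a positive profile must lose all of it. -/
theorem IsRadialSol.exists_neg_of_radialEnergy (hn : 1 ≤ n) (ha : 0 ≤ a) (hb : 0 < b)
    (h : IsRadialSol (nlsForce a b) n U V) (h0 : U 0 ∈ Set.Ioo 0 (π / 2)) {R : ℝ} (hR : 0 < R)
    (henergy : ((n : ℝ) - 1) / R * √(2 * (a - -b / 2)) * (π / 2) + c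
      ≤ radialEnergy (nlsPotential a b) U V R) (hc : 0 < c) : ∃ r, 0 ≤ r ∧ U r < 0 := by
  obtain ⟨K, hf⟩ := lipschitzWith_nlsForce a b
  by_contra! hnonneg
  have hpos (r : ℝ) (hr : 0 ≤ r) : 0 < U r :=
    h.pos_of_nonneg hn hf (by simp [nlsForce]) h0.1 hnonneg hr
  have hκ : 0 ≤ ((n : ℝ) - 1) / R * √(2 * (a - -b / 2)) :=
    mul_nonneg (dim_sub_one_div_nonneg hn hR.le) (sqrt_nonneg _)
  have hkeep (r : ℝ) (hr : 0 ≤ r) (hV : ∀ t ∈ Set.Icc 0 r, V t ≤ 0) :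
      c ≤ radialEnergy (nlsPotential a b) U V r := by
    rcases le_total r R with hrR | hRr
    · have := h.antitoneOn_radialEnergy hn (hasDerivAt_nlsPotential a b) hr hR.le hrR
      linarith [mul_nonneg hκ (by positivity : 0 ≤ π / 2)]
    · have hloss := h.radialEnergy_sub_le hn (hasDerivAt_nlsPotential a b) hR hRr
        (fun t ht => hV t ⟨hR.le.trans ht.1, ht.2⟩)
        fun t ht => h.abs_nls_deriv_le hn ha hb.le (hR.le.trans ht.1)
      have hUR : U R - U r ≤ π / 2 := by
        have := h.antitoneOn_Icc hV (Set.left_mem_Icc.2 hr) ⟨hR.le, hRr⟩ hR.le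
        linarith [hpos r hr, h0.2]
      linarith [mul_le_mul_of_nonneg_left hUR hκ]
  have hV (r : ℝ) (hr : 0 < r) : V r < 0 :=
    h.nls_deriv_neg hn hb hpos h0.2 (fun s hs hVs => hc.le.trans (hkeep s hs hVs)) hr
  have hV' (t : ℝ) (ht : 0 ≤ t) : V t ≤ 0 := ht.eq_or_lt.elim
    (fun ht0 => by rw [← ht0, h.deriv_zero]) fun ht0 => (hV t ht0).le
  exact (h.nls_tendsto_zero hn ha hb hpos h0.2 hV hc.le
    fun r hr => hkeep r hr fun t ht => hV' t ht.1).2.not_gt hc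

theorem IsGroundState.of_not_mem (hn : 1 ≤ n) (ha : 0 ≤ a) (hb : 0 < b) {U V : ℝ → ℝ → ℝ} {α : ℝ}
    (h : IsRadialSol (nlsForce a b) n (U α) (V α)) (h0 : U α 0 ∈ Set.Ioo 0 (π / 2))
    (hcross : α ∉ crossingHeights U) (htrap : α ∉ trappedHeights (nlsPotential a b) U V) :
    IsGroundState (nlsForce a b) n (U α) (V α) := by
  obtain ⟨K, hf⟩ := lipschitzWith_nlsForce a b
  have hpos (r : ℝ) (hr : 0 ≤ r) : 0 < U α r :=
    h.pos_of_nonneg hn hf (by simp [nlsForce]) h0.1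
      (fun s hs => not_lt.1 fun hlt => hcross ⟨s, hs, hlt⟩) hr
  have henergy (r : ℝ) (hr : 0 ≤ r) : 0 ≤ radialEnergy (nlsPotential a b) (U α) (V α) r :=
    not_lt.1 fun hlt => htrap ⟨r, hr, fun s hs => hpos s hs.1, hlt⟩
  have hV (r : ℝ) (hr : 0 < r) : V α r < 0 :=
    h.nls_deriv_neg hn hb hpos h0.2 (fun s hs _ => henergy s hs) hr
  exact ⟨h, hpos,
    fun r hr => ((h.strictAntiOn hV).antitoneOn Set.self_mem_Ici hr hr).trans_lt h0.2,
    (h.nls_tendsto_zero hn ha hb hpos h0.2 hV le_rfl henergy).1⟩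

theorem exists_nlsPotential_neg (a : ℝ) (hb : 0 < b) :
    ∃ α ∈ Set.Ioo 0 (π / 2), nlsPotential a b α < 0 := by
  have hsmall : ∀ᶠ x in nhdsWithin (0 : ℝ) (Set.Ioi 0), a * sin x ^ 2 < b := by
    have hcont : Continuous fun x => a * sin x ^ 2 := by fun_prop
    exact nhdsWithin_le_nhds (hcont.continuousAt.eventually_lt_const (by simpa using hb))
  obtain ⟨α, hα, hmem⟩ := (hsmall.and (Ioo_mem_nhdsGT (div_pos pi_pos two_pos))).exists
  have hα0 := hmem.1
  refine ⟨α, hmem, (nlsPotential_le_neg_mul_sq hb (Set.Ioo_subset_Icc_self hmem) hα.le).trans_lt ?_⟩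
  rw [neg_mul]
  exact neg_neg_of_pos (by positivity)

/-- The constant `π / 2` is a solution with positive energy `a / 4 - b / 2`. -/
theorem eventually_mem_crossingHeights (hn : 1 ≤ n) (hb : 0 < b) (hab : 2 * b < a)
    {U V : ℝ → ℝ → ℝ} (hS : ∀ α, IsRadialSol (nlsForce a b) n (U α) (V α)) (h0 : ∀ α, U α 0 = α) :
    ∀ᶠ α in nhdsWithin (π / 2) (Set.Iio (π / 2)), α ∈ crossingHeights U := by
  obtain ⟨K, hf⟩ := lipschitzWith_nlsForce a b
  have ha : 0 ≤ a := by linarith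
  set η := a / 4 - b / 2 with hη
  have hη0 : 0 < η := by linarith
  obtain ⟨R, hsmall, hR⟩ : ∃ R,
      ((n : ℝ) - 1) / R * √(2 * (a - -b / 2)) * (π / 2) < η / 4 ∧ 0 < R := by
    have hlim : Tendsto (fun R => ((n : ℝ) - 1) / R * √(2 * (a - -b / 2)) * (π / 2)) atTop
        (nhds 0) := by
      simpa using ((tendsto_id.const_div_atTop ((n : ℝ) - 1)).mul_const _).mul_const (π / 2)
    exact ((hlim.eventually (gt_mem_nhds (by positivity))).and (eventually_gt_atTop 0)).exists
  have henergy : radialEnergy (nlsPotential a b) (U (π / 2)) (V (π / 2)) R = η := by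
    have hle := (hS (π / 2)).abs_sub_le hn hf
      (IsRadialSol.const n (x := π / 2) (by simp [nlsForce])) hR.le
    simp only [h0, sub_self, abs_zero, mul_zero, abs_nonpos_iff, sub_zero, sub_eq_zero] at hle
    simp [radialEnergy, hle.1, hle.2, nlsPotential, hη]
  have hcont := continuous_radialEnergy_family hn hf (continuous_nlsPotential a b) hS h0 hR.le
  have hclose := hcont.continuousAt.eventually_const_lt
    (show η / 2 < radialEnergy (nlsPotential a b) (U (π / 2)) (V (π / 2)) R by linarith)
  filter_upwards [nhdsWithin_le_nhds hclose,
    Ioo_mem_nhdsLT (div_pos pi_pos two_pos)] with α hα hmem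
  exact (hS α).exists_neg_of_radialEnergy hn ha hb (by rwa [h0]) hR (c := η / 4)
    (by linarith) (by positivity)

theorem exists_isGroundState (hn : 1 ≤ n) (hb : 0 < b) (hab : 2 * b < a) :
    ∃ U V, IsGroundState (nlsForce a b) n U V := by
  obtain ⟨K, hf⟩ := lipschitzWith_nlsForce a b
  have ha : 0 ≤ a := by linarith
  choose U V hS h0 using fun α => exists_isRadialSol hn hf (abs_nlsForce_le a b) α
  obtain ⟨α₁, hα₁, hneg⟩ := exists_nlsPotential_neg a hb
  obtain ⟨α₂, hcross, hα₂⟩ := ((eventually_mem_crossingHeights hn hb hab hS h0).and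
    (Ioo_mem_nhdsLT hα₁.2)).exists
  have htrap : α₁ ∈ trappedHeights (nlsPotential a b) U V := by
    refine ⟨0, le_rfl, fun s hs => ?_, ?_⟩
    · rw [Set.Icc_self] at hs
      rw [hs, h0]
      exact hα₁.1
    · simpa [radialEnergy, h0, (hS α₁).deriv_zero] using hneg
  obtain ⟨α, hα, hmem⟩ : ∃ α ∈ Set.Icc α₁ α₂,
      α ∉ crossingHeights U ∪ trappedHeights (nlsPotential a b) U V := by
    by_contra! hcover
    obtain ⟨x, -, hx⟩ := isPreconnected_Icc (a := α₁) (b := α₂) _ _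
      (isOpen_crossingHeights hn hf hS h0)
      (isOpen_trappedHeights hn hf (continuous_nlsPotential a b) hS h0) hcover
      ⟨α₂, Set.right_mem_Icc.2 hα₂.1.le, hcross⟩ ⟨α₁, Set.left_mem_Icc.2 hα₂.1.le, htrap⟩
    exact Set.disjoint_left.1 (disjoint_crossingHeights_trappedHeights hn
      (hasDerivAt_nlsPotential a b) (by simp [nlsPotential]) hS) hx.1 hx.2
  rw [Set.mem_union, not_or] at hmem
  exact ⟨U α, V α, IsGroundState.of_not_mem hn ha hb (hS α)
    (by rw [h0]; exact ⟨hα₁.1.trans_le hα.1, hα.2.trans_lt hα₂.2⟩) hmem.1 hmem.2⟩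

end GroundStateExistence

section Laplacian

open InnerProductSpace Laplacian

variable {E : Type*} [NormedAddCommGroup E] [InnerProductSpace ℝ E] {u : E → ℝ} {x y : E}

theorem hasDerivAt_comp_line (hu : Differentiable ℝ u) (x v : E) (t : ℝ) :
    HasDerivAt (fun s : ℝ => u (x + s • v)) (fderiv ℝ u (x + t • v) v) t := by
  have hline : HasDerivAt (fun s : ℝ => x + s • v) v t := by
    simpa using ((hasDerivAt_id t).smul_const v).const_add x
  exact (hu (x + t • v)).hasFDerivAt.comp_hasDerivAt t hline

theorem hasDerivAt_fderiv_comp_line (hu : ContDiff ℝ 2 u) (x v w : E) (t : ℝ) :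
    HasDerivAt (fun s : ℝ => fderiv ℝ u (x + s • v) w)
      (fderiv ℝ (fderiv ℝ u) (x + t • v) v w) t := by
  have hdiff : Differentiable ℝ (fderiv ℝ u) :=
    (hu.fderiv_right (m := 1) (by norm_num)).differentiable (by norm_num)
  have heval : Differentiable ℝ (fun y => fderiv ℝ u y w) := fun y =>
    (hdiff y).clm_apply (differentiableAt_const w)
  refine (hasDerivAt_comp_line heval x v t).congr_deriv ?_
  simp [fderiv_clm_apply (hdiff _) (differentiableAt_const w)]

/-- The inner product of a real inner product space as a bilinear map: the conjugate-linear type of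
`innerSL ℝ` does not let its values be added to other bilinear maps. -/
def realInnerL (E : Type*) [NormedAddCommGroup E] [InnerProductSpace ℝ E] :
    E →L[ℝ] E →L[ℝ] ℝ := innerSL ℝ

@[simp]
theorem realInnerL_apply (v w : E) : realInnerL E v w = inner ℝ v w := rfl

theorem hasFDerivAt_comp_norm_sub {U : ℝ → ℝ} {c : ℝ} (hx : x ≠ y)
    (hU : HasDerivAt U c ‖x - y‖) :
    HasFDerivAt (fun z => U ‖z - y‖) ((c / ‖x - y‖) • realInnerL E (x - y)) x := by
  have hne : ‖x - y‖ ≠ 0 := norm_ne_zero_iff.2 (sub_ne_zero.2 hx)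
  have hsub : HasFDerivAt (fun z => z - y) (ContinuousLinearMap.id ℝ E) x :=
    (hasFDerivAt_id x).sub_const y
  have hnorm := (hsub.norm_sq).sqrt (pow_ne_zero 2 hne)
  simp only [Real.sqrt_sq (norm_nonneg _)] at hnorm
  refine (hU.comp_hasFDerivAt x hnorm).congr_fderiv ?_
  ext v
  simp only [one_div, mul_inv_rev, map_sub, ContinuousLinearMap.comp_id, smul_apply, sub_apply,
    coe_innerSL_apply, nsmul_eq_mul, Nat.cast_ofNat, smul_eq_mul, realInnerL_apply]
  field_simp

theorem hasFDerivAt_fderiv_comp_norm_sub {U V : ℝ → ℝ} {c : ℝ} (hx : x ≠ y)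
    (hU : ∀ᶠ r in nhds ‖x - y‖, HasDerivAt U (V r) r) (hV : HasDerivAt V c ‖x - y‖) :
    HasFDerivAt (fderiv ℝ fun z => U ‖z - y‖)
      ((V ‖x - y‖ / ‖x - y‖) • realInnerL E +
        (((c - V ‖x - y‖ / ‖x - y‖) / ‖x - y‖ ^ 2) • realInnerL E (x - y)).smulRight
          (realInnerL E (x - y))) x := by
  have hne : ‖x - y‖ ≠ 0 := norm_ne_zero_iff.2 (sub_ne_zero.2 hx)
  have hnorm : Tendsto (fun z => ‖z - y‖) (nhds x) (nhds ‖x - y‖) :=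
    (by fun_prop : Continuous fun z => ‖z - y‖).tendsto x
  have hfderiv : (fderiv ℝ fun z => U ‖z - y‖) =ᶠ[nhds x]
      fun z => (V ‖z - y‖ / ‖z - y‖) • realInnerL E (z - y) := by
    filter_upwards [hnorm.eventually hU, eventually_ne_nhds hx] with z hz hzy
    exact (hasFDerivAt_comp_norm_sub hzy hz).fderiv
  have hcoef := hasFDerivAt_comp_norm_sub (U := fun r => V r / r) hx
    (hV.div (hasDerivAt_id _) hne)
  have hlin : HasFDerivAt (fun z => realInnerL E (z - y)) (realInnerL E) x :=
    (realInnerL E).hasFDerivAt.comp x ((hasFDerivAt_id x).sub_const y)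
  refine ((hcoef.smul hlin).congr_of_eventuallyEq hfderiv).congr_fderiv ?_
  ext v w
  simp only [mul_one, map_sub, add_apply, smul_apply, ContinuousLinearMap.smulRight_apply,
    sub_apply, realInnerL_apply, smul_eq_mul, add_right_inj, mul_eq_mul_right_iff]
  field_simp
  simp

variable [FiniteDimensional ℝ E]

theorem laplacian_eq_sum_fderiv_fderiv {ι : Type*} [Fintype ι] (v : OrthonormalBasis ι ℝ E)
    (u : E → ℝ) (x : E) : Δ u x = ∑ i, fderiv ℝ (fderiv ℝ u) x (v i) (v i) := by
  simp [laplacian_eq_iteratedFDeriv_orthonormalBasis u v, iteratedFDeriv_two_apply]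

theorem laplacian_nonneg_of_isLocalMin (hu : ContDiff ℝ 2 u) (hmin : IsLocalMin u x) :
    0 ≤ Δ u x := by
  rw [laplacian_eq_sum_fderiv_fderiv (stdOrthonormalBasis ℝ E)]
  refine Finset.sum_nonneg fun i _ => ?_
  set v := stdOrthonormalBasis ℝ E i
  have hline : Tendsto (fun s : ℝ => x + s • v) (nhds 0) (nhds x) := by
    simpa using (by fun_prop : Continuous fun s : ℝ => x + s • v).tendsto 0
  have hsecond := hasDerivAt_fderiv_comp_line hu x v v 0
  rw [zero_smul, add_zero] at hsecond
  refine second_deriv_nonneg_of_isLocalMin (g := fun s : ℝ => u (x + s • v)) (x := 0) ?_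
    (Eventually.of_forall (hasDerivAt_comp_line (hu.differentiable (by norm_num)) x v)) hsecond
  simpa [IsLocalMin, IsMinFilter] using hline.eventually hmin

theorem laplacian_comp_linearIsometryEquiv_add {F : Type*} [NormedAddCommGroup F]
    [InnerProductSpace ℝ F] [FiniteDimensional ℝ F] (u : F → ℝ) (L : E ≃ₗᵢ[ℝ] F) (c : F) (x : E) :
    Δ (fun z => u (L z + c)) x = Δ u (L x + c) := by
  have hcomp : iteratedFDeriv ℝ 2 (fun z => u (L z + c)) x =
      (iteratedFDeriv ℝ 2 u (L x + c)).compContinuousLinearMap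
        fun _ => L.toContinuousLinearEquiv := by
    have := L.toContinuousLinearEquiv.iteratedFDerivWithin_comp_right (fun z => u (z + c))
      uniqueDiffOn_univ (Set.mem_univ (L x)) 2
    simpa [iteratedFDerivWithin_univ, iteratedFDeriv_comp_add_right, Function.comp_def] using this
  rw [laplacian_eq_iteratedFDeriv_orthonormalBasis _ (stdOrthonormalBasis ℝ E),
    laplacian_eq_iteratedFDeriv_orthonormalBasis _ ((stdOrthonormalBasis ℝ E).map L)]
  simp only [hcomp]
  refine Finset.sum_congr rfl fun i _ => ?_
  rw [ContinuousMultilinearMap.compContinuousLinearMap_apply]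
  congr 1
  ext j
  fin_cases j <;> rfl

theorem laplacian_comp_norm_sub {U V : ℝ → ℝ} {c : ℝ} (hx : x ≠ y)
    (hU : ∀ᶠ r in nhds ‖x - y‖, HasDerivAt U (V r) r) (hV : HasDerivAt V c ‖x - y‖) :
    Δ (fun z => U ‖z - y‖) x =
      c + ((Module.finrank ℝ E : ℝ) - 1) / ‖x - y‖ * V ‖x - y‖ := by
  have hne : ‖x - y‖ ≠ 0 := norm_ne_zero_iff.2 (sub_ne_zero.2 hx)
  set v := stdOrthonormalBasis ℝ E
  have hsum : ∑ i, inner ℝ (x - y) (v i) ^ 2 = ‖x - y‖ ^ 2 := by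
    simpa [sq_abs] using v.sum_sq_norm_inner_left (x - y)
  rw [laplacian_eq_sum_fderiv_fderiv v, (hasFDerivAt_fderiv_comp_norm_sub hx hU hV).fderiv]
  set q := V ‖x - y‖ / ‖x - y‖
  calc _ = ∑ i, (q + (c - q) / ‖x - y‖ ^ 2 * inner ℝ (x - y) (v i) ^ 2) := by
        refine Finset.sum_congr rfl fun i _ => ?_
        simp only [map_sub, add_apply, smul_apply, ContinuousLinearMap.smulRight_apply, sub_apply,
          realInnerL_apply, smul_eq_mul, inner_self_eq_norm_sq_to_K, OrthonormalBasis.norm_eq_one,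
          ringHom_apply, one_pow, mul_one, inner_sub_left, add_right_inj]
        ring
    _ = Module.finrank ℝ E * q + (c - q) := by
        rw [Finset.sum_add_distrib, ← Finset.mul_sum, hsum, div_mul_cancel₀ _ (pow_ne_zero 2 hne)]
        simp
    _ = _ := by ring

end Laplacian

section MaximumPrinciple

open InnerProductSpace Laplacian

theorem exists_touching_ball {X : Type*} [MetricSpace X] [ProperSpace X] {Z : Set X}
    {z : X} {ε : ℝ} (hZ : IsClosed Z) (hz : z ∈ Z) (hnhds : Z ∉ nhds z) (hε : 0 < ε) :
    ∃ y ∈ Metric.ball z ε, ∃ p ∈ Z, 0 < dist p y ∧ dist p y < ε ∧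
      Disjoint (Metric.ball y (dist p y)) Z := by
  obtain ⟨y, hyZ, hyz⟩ : ∃ y, y ∉ Z ∧ y ∈ Metric.ball z ε :=
    ((not_eventually.1 hnhds).and_eventually (Metric.ball_mem_nhds z hε)).exists
  obtain ⟨p, hpZ, hp⟩ := hZ.exists_infDist_eq_dist ⟨z, hz⟩ y
  rw [dist_comm] at hp
  refine ⟨y, hyz, p, hpZ, dist_pos.2 fun h => hyZ (h ▸ hpZ), ?_,
    hp ▸ Metric.disjoint_ball_infDist⟩
  exact hp ▸ (Metric.infDist_le_dist_of_mem hz).trans_lt hyz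

variable {E : Type*} [NormedAddCommGroup E]

/-- Hopf's comparison function for the ball of radius `R` about `y`: a Gaussian with decay rate `A`,
shifted to vanish on the sphere. -/
def gaussianBarrier (A R : ℝ) (y x : E) : ℝ := exp (-(A * ‖x - y‖ ^ 2)) - exp (-(A * R ^ 2))

theorem gaussianBarrier_le_one {A : ℝ} (hA : 0 ≤ A) (R : ℝ) (y x : E) :
    gaussianBarrier A R y x ≤ 1 := by
  have hexp : exp (-(A * ‖x - y‖ ^ 2)) ≤ 1 := exp_le_one_iff.2 (neg_nonpos.2 (by positivity))
  linarith [gaussianBarrier.eq_def A R y x, exp_pos (-(A * R ^ 2))]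

theorem gaussianBarrier_of_norm_sub_eq (A : ℝ) {R : ℝ} {y x : E} (hx : ‖x - y‖ = R) :
    gaussianBarrier A R y x = 0 := by
  rw [gaussianBarrier, hx, sub_self]

theorem hasDerivAt_exp_neg_mul_sq (A r : ℝ) :
    HasDerivAt (fun s : ℝ => exp (-(A * s ^ 2))) (exp (-(A * r ^ 2)) * -(2 * A * r)) r := by
  have hexponent : HasDerivAt (fun s : ℝ => -(A * s ^ 2)) (-(2 * A * r)) r :=
    ((hasDerivAt_pow 2 r).const_mul A).fun_neg.congr_deriv (by push_cast; ring)
  exact hexponent.exp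

variable [InnerProductSpace ℝ E]

theorem contDiff_gaussianBarrier (A R : ℝ) (y : E) {n : WithTop ℕ∞} :
    ContDiff ℝ n (gaussianBarrier A R y) := by
  unfold gaussianBarrier
  exact ((contDiff_const.mul ((contDiff_id.sub contDiff_const).norm_sq ℝ)).neg.exp).sub
    contDiff_const

theorem fderiv_gaussianBarrier_sub {A R : ℝ} {y p : E} (hR : 0 < R) (hp : ‖p - y‖ = R) :
    fderiv ℝ (gaussianBarrier A R y) p (p - y) = -(2 * A * R ^ 2 * exp (-(A * R ^ 2))) := by
  have hpy : p ≠ y := fun h => hR.ne' (by rw [← hp, h, sub_self, norm_zero])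
  have hU := (hasDerivAt_exp_neg_mul_sq A ‖p - y‖).sub_const (exp (-(A * R ^ 2)))
  have hfderiv : HasFDerivAt (gaussianBarrier A R y) _ p := hasFDerivAt_comp_norm_sub hpy hU
  rw [hfderiv.fderiv, smul_apply, realInnerL_apply, real_inner_self_eq_norm_sq,
    hp, smul_eq_mul]
  field_simp

variable [FiniteDimensional ℝ E] {w : E → ℝ} {y p : E} {R K : ℝ}

theorem laplacian_gaussianBarrier (A R : ℝ) {y x : E} (hx : x ≠ y) :
    Δ (gaussianBarrier A R y) x =
      exp (-(A * ‖x - y‖ ^ 2)) * (4 * A ^ 2 * ‖x - y‖ ^ 2 - 2 * A * Module.finrank ℝ E) := by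
  have hne : ‖x - y‖ ≠ 0 := norm_ne_zero_iff.2 (sub_ne_zero.2 hx)
  have hlin : HasDerivAt (fun r : ℝ => -(2 * A * r)) (-(2 * A)) ‖x - y‖ := by
    simpa using ((hasDerivAt_id ‖x - y‖).const_mul (2 * A)).fun_neg
  have hU : ∀ᶠ r in nhds ‖x - y‖, HasDerivAt (fun s => exp (-(A * s ^ 2)) - exp (-(A * R ^ 2)))
      (exp (-(A * r ^ 2)) * -(2 * A * r)) r :=
    Eventually.of_forall fun r => (hasDerivAt_exp_neg_mul_sq A r).sub_const _
  have hV := (hasDerivAt_exp_neg_mul_sq A ‖x - y‖).fun_mul hlin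
  refine (laplacian_comp_norm_sub hx hU hV).trans ?_
  generalize exp (-(A * ‖x - y‖ ^ 2)) = q
  field_simp
  ring

theorem exists_mul_gaussianBarrier_lt_laplacian (E : Type*) [NormedAddCommGroup E]
    [InnerProductSpace ℝ E] [FiniteDimensional ℝ E] {R K : ℝ} (hR : 0 < R) (hK : 0 ≤ K) :
    ∃ A, 0 < A ∧ ∀ y x : E, R / 2 ≤ ‖x - y‖ →
      K * gaussianBarrier A R y x < Δ (gaussianBarrier A R y) x := by
  set n : ℝ := (Module.finrank ℝ E : ℝ)
  set A := (2 * n + K + 1) / R ^ 2 + 1 with hA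
  have hn : 0 ≤ n := Nat.cast_nonneg _
  have hA1 : 1 ≤ A := le_add_of_nonneg_left (by positivity)
  have hAR : A * R ^ 2 = 2 * n + K + 1 + R ^ 2 := by rw [hA]; field_simp
  refine ⟨A, one_pos.trans_le hA1, fun y x hx => ?_⟩
  have hxy : x ≠ y := fun h => by
    rw [h, sub_self, norm_zero] at hx
    linarith
  have hrate : K < 4 * A ^ 2 * ‖x - y‖ ^ 2 - 2 * A * n := by
    have hsq : R ^ 2 ≤ 4 * ‖x - y‖ ^ 2 := by nlinarith
    calc K < K + 1 + R ^ 2 := by nlinarith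
      _ ≤ A * (K + 1 + R ^ 2) := le_mul_of_one_le_left (by positivity) hA1
      _ = A * (A * R ^ 2 - 2 * n) := by rw [hAR]; ring
      _ ≤ A * (A * (4 * ‖x - y‖ ^ 2) - 2 * n) := by gcongr
      _ = _ := by ring
  rw [laplacian_gaussianBarrier A R hxy]
  calc K * gaussianBarrier A R y x ≤ K * exp (-(A * ‖x - y‖ ^ 2)) :=
        mul_le_mul_of_nonneg_left (sub_le_self _ (exp_pos _).le) hK
    _ < exp (-(A * ‖x - y‖ ^ 2)) * (4 * A ^ 2 * ‖x - y‖ ^ 2 - 2 * A * n) := by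
        rw [mul_comm]
        exact mul_lt_mul_of_pos_left hrate (exp_pos _)

theorem nonneg_of_laplacian_neg {S : Set E} (hS : IsCompact S) (hw : ContDiff ℝ 2 w)
    (hfrontier : ∀ x ∈ frontier S, 0 ≤ w x) (hlap : ∀ x ∈ interior S, w x < 0 → Δ w x < 0) :
    ∀ x ∈ S, 0 ≤ w x := by
  intro x₁ hx₁
  obtain ⟨x, hx, hmin⟩ := hS.exists_isMinOn ⟨x₁, hx₁⟩ hw.continuous.continuousOn
  suffices 0 ≤ w x from this.trans (hmin hx₁)
  by_cases hint : x ∈ interior S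
  · by_contra! hneg
    have hlocal : IsLocalMin w x := hmin.isLocalMin (mem_interior_iff_mem_nhds.1 hint)
    exact (hlap x hint hneg).not_ge (laplacian_nonneg_of_isLocalMin hw hlocal)
  · exact hfrontier x ⟨subset_closure hx, hint⟩

theorem gaussianBarrier_le_of_laplacian_le {A m : ℝ} (hA : 0 ≤ A)
    (hbarrier : ∀ x : E, R / 2 ≤ ‖x - y‖ →
      K * gaussianBarrier A R y x < Δ (gaussianBarrier A R y) x)
    (hK : 0 ≤ K) (hw : ContDiff ℝ 2 w) (hm : 0 < m)
    (hinner : ∀ x ∈ Metric.closedBall y (R / 2), m ≤ w x)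
    (hnonneg : ∀ x ∈ Metric.closedBall y R, 0 ≤ w x)
    (hlap : ∀ x ∈ Metric.ball y R, Δ w x ≤ K * w x) :
    ∀ x ∈ Metric.closedBall y R \ Metric.ball y (R / 2), m * gaussianBarrier A R y x ≤ w x := by
  set S := Metric.closedBall y R \ Metric.ball y (R / 2)
  set h := gaussianBarrier A R y
  have hh : ContDiff ℝ 2 (m • h) := (contDiff_gaussianBarrier A R y).const_smul m
  have hS : IsCompact S := (isCompact_closedBall y R).diff Metric.isOpen_ball
  have hmem : ∀ {x}, x ∈ S ↔ ‖x - y‖ ≤ R ∧ R / 2 ≤ ‖x - y‖ := by simp [S, dist_eq_norm]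
  have hsphere : ∀ x ∈ S, ‖x - y‖ = R → 0 ≤ (w - m • h) x := fun x hx hxR => by
    simpa [h, gaussianBarrier_of_norm_sub_eq A hxR] using hnonneg x hx.1
  have hfrontier : ∀ x ∈ frontier S, 0 ≤ (w - m • h) x := by
    rw [hS.isClosed.frontier_eq]
    rintro x ⟨hxS, hint⟩
    by_cases hxR : ‖x - y‖ = R
    · exact hsphere x hxS hxR
    have hx : x ∈ Metric.closedBall y (R / 2) := by
      contrapose! hint
      refine mem_interior.2 ⟨Metric.ball y R \ Metric.closedBall y (R / 2),
        Set.sdiff_subset_sdiff Metric.ball_subset_closedBall Metric.ball_subset_closedBall,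
        Metric.isOpen_ball.sdiff Metric.isClosed_closedBall, ?_, hint⟩
      exact mem_ball_iff_norm.2 ((hmem.1 hxS).1.lt_of_ne hxR)
    exact sub_nonneg.2 ((mul_le_of_le_one_right hm.le (gaussianBarrier_le_one hA R y x)).trans
      (hinner x hx))
  have hinterior : ∀ x ∈ interior S, w x - m * h x < 0 → Δ (w - m • h) x < 0 := by
    intro x hint hneg
    have hxS := hmem.1 (interior_subset hint)
    have hball : ‖x - y‖ < R := hxS.1.lt_of_ne fun hxR =>
      hneg.not_ge (hsphere x (interior_subset hint) hxR)
    rw [hw.contDiffAt.laplacian_sub hh.contDiffAt,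
      laplacian_smul m (contDiff_gaussianBarrier A R y).contDiffAt, smul_eq_mul, sub_neg]
    calc Δ w x ≤ K * w x := hlap x (mem_ball_iff_norm.2 hball)
      _ ≤ K * (m * h x) := mul_le_mul_of_nonneg_left (sub_neg.1 hneg).le hK
      _ = m * (K * h x) := by ring
      _ < m * Δ h x := mul_lt_mul_of_pos_left (hbarrier x hxS.2) hm
  intro x hx
  simpa using nonneg_of_laplacian_neg hS (hw.sub hh) hfrontier hinterior x hx

theorem fderiv_sub_neg_of_laplacian_le (hR : 0 < R) (hK : 0 ≤ K) (hw : ContDiff ℝ 2 w)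
    (hp : p ∈ Metric.sphere y R) (hwp : w p = 0) (hpos : ∀ x ∈ Metric.ball y R, 0 < w x)
    (hnonneg : ∀ x ∈ Metric.closedBall y R, 0 ≤ w x)
    (hlap : ∀ x ∈ Metric.ball y R, Δ w x ≤ K * w x) :
    fderiv ℝ w p (p - y) < 0 := by
  obtain ⟨A, hA, hbarrier⟩ := exists_mul_gaussianBarrier_lt_laplacian E hR hK
  obtain ⟨q, hq, hmin⟩ := (isCompact_closedBall y (R / 2)).exists_isMinOn
    (Metric.nonempty_closedBall.2 (half_pos hR).le) hw.continuous.continuousOn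
  have hm : 0 < w q := hpos q (Metric.closedBall_subset_ball (half_lt_self hR) hq)
  have hle := gaussianBarrier_le_of_laplacian_le hA.le (hbarrier y) hK hw hm hmin hnonneg hlap
  have hpR : ‖p - y‖ = R := mem_sphere_iff_norm.1 hp
  set h := gaussianBarrier A R y
  set S := Metric.closedBall y R \ Metric.ball y (R / 2)
  have hlocal : IsLocalMinOn (w - w q • h) S p := by
    filter_upwards [self_mem_nhdsWithin] with x hx
    simpa [h, hwp, gaussianBarrier_of_norm_sub_eq A hpR] using hle x hx
  have hsegment : segment ℝ p (p + (1 / 2 : ℝ) • (y - p)) ⊆ S := by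
    rw [segment_eq_image']
    rintro _ ⟨t, ⟨ht0, ht1⟩, rfl⟩
    have hnorm : dist (p + t • (p + (1 / 2 : ℝ) • (y - p) - p)) y = (1 - t / 2) * R := by
      rw [dist_eq_norm, ← hpR, ← abs_of_nonneg (by linarith : 0 ≤ 1 - t / 2), ← Real.norm_eq_abs,
        ← norm_smul]
      congr 1
      module
    rw [Set.mem_sdiff, Metric.mem_closedBall, Metric.mem_ball, hnorm]
    constructor <;> nlinarith
  have hdiff := (hw.differentiable two_ne_zero p).hasFDerivAt.sub
    (((contDiff_gaussianBarrier A R y).differentiable one_ne_zero p).hasFDerivAt.const_smul (w q))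
  have hinward := hlocal.hasFDerivWithinAt_nonneg hdiff.hasFDerivWithinAt
    (mem_posTangentConeAt_of_segment_subset hsegment)
  rw [sub_apply, smul_apply, ← neg_sub p y, map_smul, map_smul, map_neg, map_neg,
    fderiv_gaussianBarrier_sub hR hpR] at hinward
  have hslope : 0 < w q * (2 * A * R ^ 2 * exp (-(A * R ^ 2))) := by positivity
  simp only [smul_eq_mul] at hinward
  linarith

theorem eventually_eq_zero_of_laplacian_le {S : Set E} {z : E} (hS : S ∈ nhds z) (hK : 0 ≤ K)
    (hw : ContDiff ℝ 2 w) (hnonneg : ∀ x ∈ S, 0 ≤ w x) (hlap : ∀ x ∈ S, Δ w x ≤ K * w x)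
    (hz : w z = 0) : ∀ᶠ x in nhds z, w x = 0 := by
  by_contra hfreq
  obtain ⟨η, hη, hball⟩ := Metric.mem_nhds_iff.1 hS
  have hclosed : IsClosed {x | w x = 0} := isClosed_eq hw.continuous continuous_const
  obtain ⟨y, hyz, p, hwp, hR, hRη, hdisj⟩ :=
    exists_touching_ball hclosed hz hfreq (half_pos hη)
  have hsub : Metric.closedBall y (dist p y) ⊆ Metric.ball z η := fun x hx => by
    rw [Metric.mem_ball] at hyz ⊢
    linarith [dist_triangle x y z, Metric.mem_closedBall.1 hx]
  have hnonneg' : ∀ x ∈ Metric.closedBall y (dist p y), 0 ≤ w x := fun x hx =>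
    hnonneg x (hball (hsub hx))
  have hpos : ∀ x ∈ Metric.ball y (dist p y), 0 < w x := fun x hx =>
    (hnonneg' x (Metric.ball_subset_closedBall hx)).lt_of_ne'
      fun h => Set.disjoint_left.1 hdisj hx h
  have hhopf := fderiv_sub_neg_of_laplacian_le hR hK hw (Metric.mem_sphere.2 rfl) hwp hpos hnonneg'
    fun x hx => hlap x (hball (hsub (Metric.ball_subset_closedBall hx)))
  have hmin : IsLocalMin w p := by
    filter_upwards [Metric.isOpen_ball.mem_nhds (hsub (Metric.mem_closedBall.2 le_rfl))] with x hx
    exact (Set.mem_ofPred.1 hwp).trans_le (hnonneg x (hball hx))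
  rw [hmin.fderiv_eq_zero] at hhopf
  exact lt_irrefl _ hhopf

theorem eqOn_zero_of_laplacian_le {S : Set E} {z : E} (hSo : IsOpen S) (hSc : IsPreconnected S)
    (hK : 0 ≤ K) (hw : ContDiff ℝ 2 w) (hnonneg : ∀ x ∈ S, 0 ≤ w x)
    (hlap : ∀ x ∈ S, Δ w x ≤ K * w x) (hzS : z ∈ S) (hz : w z = 0) : Set.EqOn w 0 S := by
  set Z := {x | w x = 0}
  have hclosed : IsClosed Z := isClosed_eq hw.continuous continuous_const
  have hopen : ∀ x ∈ S, w x = 0 → x ∈ interior Z := fun x hx hwx => mem_interior_iff_mem_nhds.2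
    (eventually_eq_zero_of_laplacian_le (hSo.mem_nhds hx) hK hw hnonneg hlap hwx)
  have hsub : S ⊆ interior Z := hSc.subset_of_closure_inter_subset isOpen_interior
    ⟨z, hzS, hopen z hzS hz⟩ fun x hx =>
      hopen x hx.2 (closure_minimal interior_subset hclosed hx.1)
  exact hsub.trans interior_subset

end MaximumPrinciple

section MovingPlanes

open InnerProductSpace Laplacian

variable {E : Type*} [NormedAddCommGroup E] [InnerProductSpace ℝ E] {e : E} {u : E → ℝ} {l : ℝ}

/-- The reflection of `x` in the hyperplane `⟪e, z⟫ = l`, for a unit vector `e`. -/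
def planeReflect (e : E) (l : ℝ) (x : E) : E := x + (2 * (l - inner ℝ e x)) • e

theorem continuous_planeReflect (e : E) :
    Continuous fun p : ℝ × E => planeReflect e p.1 p.2 := by
  unfold planeReflect
  fun_prop

theorem planeReflect_of_inner_eq {x : E} (hx : inner ℝ e x = l) : planeReflect e l x = x := by
  simp [planeReflect, hx]

theorem inner_planeReflect (he : ‖e‖ = 1) (l : ℝ) (x : E) :
    inner ℝ e (planeReflect e l x) = 2 * l - inner ℝ e x := by
  rw [planeReflect, inner_add_right, real_inner_smul_right, real_inner_self_eq_norm_sq, he]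
  ring

theorem planeReflect_involutive (he : ‖e‖ = 1) (l : ℝ) :
    Function.Involutive (planeReflect e l) := fun x => by
  rw [planeReflect, inner_planeReflect he, planeReflect]
  module

theorem planeReflect_neg (e : E) (l : ℝ) (x : E) :
    planeReflect (-e) (-l) x = planeReflect e l x := by
  rw [planeReflect, planeReflect, inner_neg_left]
  module

theorem planeReflect_eq_reflection_add (he : ‖e‖ = 1) (l : ℝ) :
    planeReflect e l = fun x => (ℝ ∙ e)ᗮ.reflection x + (2 * l) • e := by
  ext x
  rw [planeReflect, Submodule.reflection_orthogonal_apply, Submodule.reflection_singleton_apply]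
  simp only [he, RCLike.ofReal_real_eq_id, id_eq, one_pow, div_one]
  module

theorem contDiff_planeReflect (e : E) (l : ℝ) {n : WithTop ℕ∞} :
    ContDiff ℝ n (planeReflect e l) := by
  unfold planeReflect
  exact contDiff_id.add ((contDiff_const.mul
    (contDiff_const.sub (contDiff_const.inner ℝ contDiff_id))).smul contDiff_const)

theorem tendsto_planeReflect_cocompact (he : ‖e‖ = 1) (l : ℝ) :
    Tendsto (planeReflect e l) (cocompact E) (cocompact E) := by
  have hcont : Continuous (planeReflect e l) := (contDiff_planeReflect e l (n := 0)).continuous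
  exact (Homeomorph.mk (planeReflect_involutive he l).toPerm hcont
    hcont).isClosedEmbedding.tendsto_cocompact

theorem fderiv_comp_planeReflect (hu : Differentiable ℝ u) (he : ‖e‖ = 1) (l : ℝ) (x : E) :
    fderiv ℝ (fun z => u (planeReflect e l z)) x e = -fderiv ℝ u (planeReflect e l x) e := by
  have hline : HasDerivAt (fun t : ℝ => u (planeReflect e l (x + t • e)))
      (fderiv ℝ u (planeReflect e l x) (-e)) 0 := by
    convert hasDerivAt_comp_line hu (planeReflect e l x) (-e) 0 using 1
    · ext t
      rw [planeReflect, planeReflect, inner_add_right, real_inner_smul_right,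
        real_inner_self_eq_norm_sq, he]
      congr 1
      module
    · rw [zero_smul, add_zero]
  have hcomp : Differentiable ℝ fun z => u (planeReflect e l z) :=
    hu.comp ((contDiff_planeReflect e l (n := 1)).differentiable one_ne_zero)
  have hchain := hasDerivAt_comp_line hcomp x e 0
  rw [zero_smul, add_zero] at hchain
  rw [hchain.unique hline, map_neg]

theorem exists_planeReflect_eq {x₀ x y : E} (hxy : ‖x - x₀‖ = ‖y - x₀‖) (hne : x ≠ y) :
    ∃ e : E, ‖e‖ = 1 ∧ planeReflect e (inner ℝ e x₀) x = y := by
  have hnorm : ‖x - y‖ ≠ 0 := norm_ne_zero_iff.2 (sub_ne_zero.2 hne)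
  have hinner : inner ℝ (x - y) (x₀ - x) = -(‖x - y‖ ^ 2 / 2) := by
    have hexpand := norm_sub_sq_real (x - x₀) (x - y)
    rw [sub_sub_sub_cancel_left, ← hxy] at hexpand
    rw [← neg_sub x x₀, inner_neg_right, real_inner_comm]
    linarith
  refine ⟨‖x - y‖⁻¹ • (x - y), norm_smul_inv_norm (sub_ne_zero.2 hne), ?_⟩
  rw [planeReflect, ← inner_sub_right, real_inner_smul_left, hinner, smul_smul,
    show 2 * (‖x - y‖⁻¹ * -(‖x - y‖ ^ 2 / 2)) * ‖x - y‖⁻¹ = -1 by field_simp]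
  module

theorem laplacian_comp_planeReflect [FiniteDimensional ℝ E] (u : E → ℝ) (he : ‖e‖ = 1) (l : ℝ)
    (x : E) : Δ (fun z => u (planeReflect e l z)) x = Δ u (planeReflect e l x) := by
  rw [planeReflect_eq_reflection_add he]
  exact laplacian_comp_linearIsometryEquiv_add u _ _ x

/-- A positive `C²` solution of `-Δu = f(u)` on the whole space that vanishes at infinity. -/
structure IsDecayingSol [FiniteDimensional ℝ E] (f : ℝ → ℝ) (u : E → ℝ) : Prop where
  contDiff : ContDiff ℝ 2 u
  pos : ∀ x, 0 < u x
  tendsto_zero : Tendsto u (cocompact E) (nhds 0)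
  laplacian_eq : ∀ x, Δ u x = -f (u x)

/-- The gap between `u` and its reflection in the plane `⟪e, z⟫ = l`, whose sign on the half-space
`⟪e, z⟫ ≤ l` the method of moving planes controls. -/
def reflectionGap (u : E → ℝ) (e : E) (l : ℝ) (x : E) : ℝ := u x - u (planeReflect e l x)

/-- The pairs `(l, z)` that obstruct moving the plane `⟪e, ·⟫ = l` further down: `z` lies beyond the
plane, `u` is at least `δ` there, and at the mirror image of `z` the reflection gap is nonpositive
and stationary in the direction `e`. Written in terms of `z`, these are closed conditions. -/
def criticalPairs (u : E → ℝ) (e : E) (δ : ℝ) : Set (ℝ × E) :=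
  {p | p.1 ≤ inner ℝ e p.2 ∧ δ ≤ u p.2 ∧ u (planeReflect e p.1 p.2) ≤ u p.2 ∧
    fderiv ℝ u (planeReflect e p.1 p.2) e + fderiv ℝ u p.2 e = 0}

theorem reflectionGap_of_inner_eq {x : E} (hx : inner ℝ e x = l) : reflectionGap u e l x = 0 := by
  rw [reflectionGap, planeReflect_of_inner_eq hx, sub_self]

theorem contDiff_reflectionGap {n : WithTop ℕ∞} (hu : ContDiff ℝ n u) (e : E) (l : ℝ) :
    ContDiff ℝ n (reflectionGap u e l) := hu.sub (hu.comp (contDiff_planeReflect e l))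

theorem fderiv_reflectionGap (hu : Differentiable ℝ u) (he : ‖e‖ = 1) (l : ℝ) (x : E) :
    fderiv ℝ (reflectionGap u e l) x e =
      fderiv ℝ u (planeReflect e l x) e + fderiv ℝ u x e := by
  have hcomp : Differentiable ℝ fun z => u (planeReflect e l z) :=
    hu.comp ((contDiff_planeReflect e l (n := 1)).differentiable one_ne_zero)
  have hgap : fderiv ℝ (reflectionGap u e l) x = _ := fderiv_fun_sub (hu x) (hcomp x)
  rw [hgap, sub_apply, fderiv_comp_planeReflect hu he]
  ring

theorem reflectionGap_nonneg_of_forall_gt {x : E} (hu : Continuous u)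
    (h : ∀ l' > l, 0 ≤ reflectionGap u e l' x) : 0 ≤ reflectionGap u e l x := by
  have hcont : Continuous fun l' => reflectionGap u e l' x :=
    continuous_const.sub (hu.comp ((continuous_planeReflect e).comp (Continuous.prodMk_left x)))
  refine ge_of_tendsto (hcont.tendsto l |>.mono_left nhdsWithin_le_nhds : Tendsto _
    (nhdsWithin l (Set.Ioi l)) _) ?_
  exact eventually_mem_nhdsWithin.mono h

theorem mem_criticalPairs_of_forall_le {δ : ℝ} {z : E} (hl : l ≤ inner ℝ e z) (hδ : δ ≤ u z)
    (hz : ∀ y, u y ≤ u z) (heq : u (planeReflect e l z) = u z) : (l, z) ∈ criticalPairs u e δ := by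
  have hfderiv : ∀ y, u y = u z → fderiv ℝ u y = 0 := fun y hy =>
    IsLocalMax.fderiv_eq_zero (Eventually.of_forall fun t => (hz t).trans_eq hy.symm)
  exact ⟨hl, hδ, heq.le, by simp [hfderiv _ heq, hfderiv z rfl]⟩

namespace IsDecayingSol

variable [FiniteDimensional ℝ E] {f : ℝ → ℝ} {δ : ℝ}

theorem laplacian_reflectionGap (h : IsDecayingSol f u) (he : ‖e‖ = 1) (l : ℝ) (x : E) :
    Δ (reflectionGap u e l) x = f (u (planeReflect e l x)) - f (u x) := by
  have hcomp : ContDiff ℝ 2 fun z => u (planeReflect e l z) :=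
    h.contDiff.comp (contDiff_planeReflect e l)
  have hgap : Δ (reflectionGap u e l) x = _ :=
    h.contDiff.contDiffAt.laplacian_sub hcomp.contDiffAt
  rw [hgap, laplacian_comp_planeReflect u he, h.laplacian_eq, h.laplacian_eq]
  ring

theorem laplacian_reflectionGap_le {K : NNReal} (h : IsDecayingSol f u) (hf : LipschitzWith K f)
    (he : ‖e‖ = 1) {x : E} (hx : 0 ≤ reflectionGap u e l x) :
    Δ (reflectionGap u e l) x ≤ K * reflectionGap u e l x := by
  have hlip := hf.dist_le_mul (u (planeReflect e l x)) (u x)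
  rw [Real.dist_eq, dist_comm, Real.dist_eq, ← reflectionGap, abs_of_nonneg hx] at hlip
  exact (h.laplacian_reflectionGap he l x).trans_le ((le_abs_self _).trans hlip)

theorem tendsto_reflectionGap (h : IsDecayingSol f u) (he : ‖e‖ = 1) (l : ℝ) :
    Tendsto (reflectionGap u e l) (cocompact E) (nhds 0) := by
  have hgap : Tendsto (reflectionGap u e l) (cocompact E) (nhds (0 - 0)) :=
    h.tendsto_zero.sub (h.tendsto_zero.comp (tendsto_planeReflect_cocompact he l))
  rwa [sub_zero] at hgap

theorem exists_mem_criticalPairs (h : IsDecayingSol f u) (hf : StrictAntiOn f (Set.Icc 0 δ))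
    (he : ‖e‖ = 1) {x₁ : E} (hx₁ : inner ℝ e x₁ ≤ l) (hneg : reflectionGap u e l x₁ < 0) :
    ∃ z, (l, z) ∈ criticalPairs u e δ := by
  set w := reflectionGap u e l
  have hw : ContDiff ℝ 2 w := contDiff_reflectionGap h.contDiff e l
  have hclosed : IsClosed {x : E | inner ℝ e x ≤ l} := isClosed_le (by fun_prop) continuous_const
  obtain ⟨x, hx, hmin⟩ := hw.continuous.continuousOn.exists_isMinOn' hclosed hx₁ <|
    (((h.tendsto_reflectionGap he l).eventually_const_lt hneg).filter_mono inf_le_left).mono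
      fun _ => le_of_lt
  have hwx : w x < 0 := (hmin hx₁).trans_lt hneg
  have hxl : inner ℝ e x < l := lt_of_le_of_ne hx fun heq =>
    hwx.ne (reflectionGap_of_inner_eq heq)
  have hlocal : IsLocalMin w x := hmin.isLocalMin <|
    (continuous_const.inner continuous_id).continuousAt.eventually_le_const hxl
  have hstationary := fderiv_reflectionGap (h.contDiff.differentiable two_ne_zero) he l x
  rw [hlocal.fderiv_eq_zero] at hstationary
  have hlap := laplacian_nonneg_of_isLocalMin hw hlocal
  rw [h.laplacian_reflectionGap he, sub_nonneg] at hlap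
  have hlt : u x < u (planeReflect e l x) := sub_neg.1 hwx
  refine ⟨planeReflect e l x, ?_, ?_, ?_, ?_⟩
  · simp only
    rw [inner_planeReflect he]
    linarith
  · by_contra! hδ
    exact (hf ⟨(h.pos x).le, (hlt.trans hδ).le⟩ ⟨(h.pos _).le, hδ.le⟩ hlt).not_ge hlap
  · simpa only [planeReflect_involutive he l x] using hlt.le
  · simp only [planeReflect_involutive he l x]
    rw [add_comm]
    exact hstationary.symm

theorem isCompact_criticalPairs_inter (h : IsDecayingSol f u) (hδ : 0 < δ) (e : E) (l : ℝ) :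
    IsCompact (criticalPairs u e δ ∩ {p | l ≤ p.1}) := by
  have hu : Continuous u := h.contDiff.continuous
  have hdu : Continuous (fderiv ℝ u) := h.contDiff.continuous_fderiv two_ne_zero
  have hreflect := continuous_planeReflect e
  have hsuper : IsCompact {z | δ ≤ u z} := by
    obtain ⟨T, hT, hTsub⟩ := mem_cocompact.1 (h.tendsto_zero.eventually_lt_const hδ)
    refine hT.of_isClosed_subset (isClosed_le continuous_const hu) fun z hz => ?_
    by_contra hzT
    exact (hTsub hzT).not_ge (Set.mem_ofPred.1 hz)
  obtain ⟨R, hR⟩ := hsuper.bddAbove_image (f := fun z => inner ℝ e z) (by fun_prop)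
  have hclosed : IsClosed (criticalPairs u e δ) := by
    simp only [criticalPairs, Set.ofPred_and]
    exact (isClosed_le (by fun_prop) (by fun_prop)).inter <|
      (isClosed_le (by fun_prop) (by fun_prop)).inter <|
        (isClosed_le (by fun_prop) (by fun_prop)).inter (isClosed_eq (by fun_prop) (by fun_prop))
  refine (isCompact_Icc.prod hsuper).of_isClosed_subset (s := Set.Icc l R ×ˢ {z | δ ≤ u z})
    (hclosed.inter (isClosed_le (by fun_prop) (by fun_prop))) ?_
  rintro ⟨l', z⟩ ⟨⟨hlz, hδz, -⟩, hl⟩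
  exact ⟨⟨hl, hlz.trans (hR ⟨z, hδz, rfl⟩)⟩, hδz⟩

theorem exists_last_criticalPair (h : IsDecayingSol f u) (hδ : 0 < δ) {p : ℝ × E}
    (hp : p ∈ criticalPairs u e δ) :
    ∃ L z, p.1 ≤ L ∧ (L, z) ∈ criticalPairs u e δ ∧ ∀ q ∈ criticalPairs u e δ, q.1 ≤ L := by
  obtain ⟨⟨L, z⟩, ⟨hmem, -⟩, hmax⟩ := (h.isCompact_criticalPairs_inter hδ e p.1).exists_isMaxOn
    ⟨p, hp, le_refl p.1⟩ continuous_fst.continuousOn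
  have hpL : p.1 ≤ L := hmax ⟨hp, le_refl p.1⟩
  exact ⟨L, z, hpL, hmem, fun q hq => (le_total p.1 q.1).elim (fun hpq => hmax ⟨hq, hpq⟩)
    fun hqp => hqp.trans hpL⟩

section Touching

variable {K : NNReal} {z : E}

theorem exists_reflectionGap_eq_zero (h : IsDecayingSol f u) (hf : LipschitzWith K f)
    (he : ‖e‖ = 1) (hgap : ∀ x, inner ℝ e x ≤ l → 0 ≤ reflectionGap u e l x)
    (hz : (l, z) ∈ criticalPairs u e δ) : ∃ x, inner ℝ e x < l ∧ reflectionGap u e l x = 0 := by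
  obtain ⟨hlz, -, hle, hstationary⟩ := hz
  rcases hlz.lt_or_eq with hlt | heq
  · have hside : inner ℝ e (planeReflect e l z) < l := by
      rw [inner_planeReflect he]
      linarith
    refine ⟨planeReflect e l z, hside, le_antisymm ?_ (hgap _ hside.le)⟩
    rw [reflectionGap, planeReflect_involutive he l z]
    exact sub_nonpos.2 hle
  · by_contra! hne
    have hside : ∀ x, inner ℝ e x ≤ l + (dist x (z - e) - 1) := fun x => by
      have hcs := real_inner_le_norm e (x - (z - e))
      rw [inner_sub_right, inner_sub_right, ← heq, real_inner_self_eq_norm_sq, he] at hcs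
      rw [dist_eq_norm]
      linarith
    have hball : ∀ x ∈ Metric.ball (z - e) 1, inner ℝ e x < l := fun x hx => by
      linarith [hside x, Metric.mem_ball.1 hx]
    have hclosedBall : ∀ x ∈ Metric.closedBall (z - e) 1, inner ℝ e x ≤ l := fun x hx => by
      linarith [hside x, Metric.mem_closedBall.1 hx]
    have hhopf := fderiv_sub_neg_of_laplacian_le one_pos K.coe_nonneg
      (contDiff_reflectionGap h.contDiff e l) (by simp [he] : z ∈ Metric.sphere (z - e) 1)
      (reflectionGap_of_inner_eq heq.symm)
      (fun x hx => (hgap x (hball x hx).le).lt_of_ne' (hne x (hball x hx)))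
      (fun x hx => hgap x (hclosedBall x hx))
      fun x hx => h.laplacian_reflectionGap_le hf he (hgap x (hball x hx).le)
    rw [sub_sub_cancel, fderiv_reflectionGap (h.contDiff.differentiable two_ne_zero) he] at hhopf
    exact hhopf.ne hstationary

theorem reflectionGap_eqOn_zero (h : IsDecayingSol f u) (hf : LipschitzWith K f)
    (he : ‖e‖ = 1) (hgap : ∀ x, inner ℝ e x ≤ l → 0 ≤ reflectionGap u e l x)
    (hz : (l, z) ∈ criticalPairs u e δ) :
    Set.EqOn (reflectionGap u e l) 0 {x | inner ℝ e x < l} := by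
  obtain ⟨x, hx, hzero⟩ := h.exists_reflectionGap_eq_zero hf he hgap hz
  have hconvex : Convex ℝ {x : E | inner ℝ e x < l} :=
    convex_halfSpace_lt (innerSL ℝ e).isLinear l
  exact eqOn_zero_of_laplacian_le (isOpen_lt (by fun_prop) continuous_const)
    hconvex.isPreconnected K.coe_nonneg (contDiff_reflectionGap h.contDiff e l)
    (fun y hy => hgap y (le_of_lt hy))
    (fun y hy => h.laplacian_reflectionGap_le hf he (hgap y (le_of_lt hy))) hx hzero

end Touching

section Symmetry

variable {K : NNReal} {x₀ : E}

theorem reflectionGap_nonneg (h : IsDecayingSol f u) (hf : LipschitzWith K f) (hδ : 0 < δ)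
    (hanti : StrictAntiOn f (Set.Icc 0 δ)) (hmax : ∀ x, u x ≤ u x₀) (hx₀ : δ ≤ u x₀)
    (he : ‖e‖ = 1) (hl : inner ℝ e x₀ < l) {x : E} (hx : inner ℝ e x ≤ l) :
    0 ≤ reflectionGap u e l x := by
  by_contra! hneg
  obtain ⟨z, hz⟩ := h.exists_mem_criticalPairs hanti he hx hneg
  obtain ⟨L, z, hlL, hLz, hlast⟩ := h.exists_last_criticalPair hδ hz
  have habove : ∀ l' > L, ∀ y, inner ℝ e y ≤ l' → 0 ≤ reflectionGap u e l' y := by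
    intro l' hl' y hy
    by_contra! hneg'
    obtain ⟨z', hz'⟩ := h.exists_mem_criticalPairs hanti he hy hneg'
    exact (hlast _ hz').not_gt hl'
  have hgap : ∀ y, inner ℝ e y ≤ L → 0 ≤ reflectionGap u e L y := fun y hy =>
    reflectionGap_nonneg_of_forall_gt h.contDiff.continuous fun l' hl' =>
      habove l' hl' y (hy.trans (le_of_lt hl'))
  have hx₀L : inner ℝ e x₀ < L := hl.trans_le hlL
  -- The mirror image of the maximum point in the plane at `L` is a second maximum point, beyond the
  -- plane; it yields a critical pair for a slightly larger `l'`.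
  set q := planeReflect e L x₀
  have hq : u x₀ = u q := sub_eq_zero.1 (h.reflectionGap_eqOn_zero hf he hgap hLz hx₀L)
  obtain ⟨l', hLl', hl'q⟩ : ∃ l', L < l' ∧ l' < inner ℝ e q := exists_between <| by
    rw [inner_planeReflect he]
    linarith
  have hmirror : u q ≤ u (planeReflect e l' q) := by
    have hgap' := habove l' hLl' (planeReflect e l' q) <| by
      rw [inner_planeReflect he]
      linarith
    rwa [reflectionGap, planeReflect_involutive he l' q, sub_nonneg] at hgap'
  have hmaxq : ∀ y, u y ≤ u q := fun y => hq ▸ hmax y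
  exact (hlast _ (mem_criticalPairs_of_forall_le hl'q.le (hx₀.trans_eq hq) hmaxq
    (hmirror.antisymm' (hmaxq _)))).not_gt hLl'

theorem apply_planeReflect_eq (h : IsDecayingSol f u) (hf : LipschitzWith K f) (hδ : 0 < δ)
    (hanti : StrictAntiOn f (Set.Icc 0 δ)) (hmax : ∀ x, u x ≤ u x₀) (hx₀ : δ ≤ u x₀)
    (he : ‖e‖ = 1) (x : E) : u (planeReflect e (inner ℝ e x₀) x) = u x := by
  have hhalf : ∀ e : E, ‖e‖ = 1 → ∀ x, inner ℝ e x ≤ inner ℝ e x₀ →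
      u (planeReflect e (inner ℝ e x₀) x) ≤ u x := fun e he x hx =>
    sub_nonneg.1 <| reflectionGap_nonneg_of_forall_gt h.contDiff.continuous fun l' hl' =>
      h.reflectionGap_nonneg hf hδ hanti hmax hx₀ he hl' (hx.trans (le_of_lt hl'))
  have hle : ∀ x, u (planeReflect e (inner ℝ e x₀) x) ≤ u x := by
    intro x
    rcases le_total (inner ℝ e x) (inner ℝ e x₀) with hx | hx
    · exact hhalf e he x hx
    · have hopposite := hhalf (-e) (by rwa [norm_neg]) x (by simpa using hx)
      rwa [inner_neg_left, planeReflect_neg] at hopposite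
  refine (hle x).antisymm ?_
  simpa only [planeReflect_involutive he _ x] using hle (planeReflect e (inner ℝ e x₀) x)

theorem radial (h : IsDecayingSol f u) (hf : LipschitzWith K f) (hδ : 0 < δ)
    (hanti : StrictAntiOn f (Set.Icc 0 δ)) (hmax : ∀ x, u x ≤ u x₀) (hx₀ : δ ≤ u x₀)
    {x y : E} (hxy : ‖x - x₀‖ = ‖y - x₀‖) : u x = u y := by
  rcases eq_or_ne x y with rfl | hne
  · rfl
  obtain ⟨e, he, rfl⟩ := exists_planeReflect_eq hxy hne
  exact (h.apply_planeReflect_eq hf hδ hanti hmax hx₀ he x).symm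

end Symmetry

end IsDecayingSol

end MovingPlanes

section RadialProfile

open InnerProductSpace Laplacian

variable {E : Type*} [NormedAddCommGroup E] [InnerProductSpace ℝ E]
  {u : E → ℝ} {x₀ o : E} {f : ℝ → ℝ}

theorem norm_add_smul_sub_of_norm_eq_one {v : E} (hv : ‖v‖ = 1) (x₀ : E) (r : ℝ) :
    ‖x₀ + r • v - x₀‖ = |r| := by
  rw [add_sub_cancel_left, norm_smul, hv, mul_one, Real.norm_eq_abs]

variable [FiniteDimensional ℝ E]

theorem laplacian_center_of_radial (hu : ContDiff ℝ 2 u)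
    (hrad : ∀ x y, ‖x - x₀‖ = ‖y - x₀‖ → u x = u y) (ho : ‖o‖ = 1) :
    Δ u x₀ = Module.finrank ℝ E * fderiv ℝ (fderiv ℝ u) x₀ o o := by
  have hdiff := hu.differentiable two_ne_zero
  have hsecond : ∀ v : E, HasDerivAt (fun s : ℝ => fderiv ℝ u (x₀ + s • v) v)
      (fderiv ℝ (fderiv ℝ u) x₀ v v) 0 := fun v => by
    simpa using hasDerivAt_fderiv_comp_line hu x₀ v v 0
  have hpure : ∀ v : E, ‖v‖ = 1 →
      fderiv ℝ (fderiv ℝ u) x₀ v v = fderiv ℝ (fderiv ℝ u) x₀ o o := by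
    intro v hv
    have hline : (fun s : ℝ => u (x₀ + s • v)) = fun s => u (x₀ + s • o) := funext fun s =>
      hrad _ _ (by simp only [norm_add_smul_sub_of_norm_eq_one, hv, ho])
    have hslope : ∀ s : ℝ, fderiv ℝ u (x₀ + s • v) v = fderiv ℝ u (x₀ + s • o) o := fun s =>
      (hline ▸ hasDerivAt_comp_line hdiff x₀ v s).unique (hasDerivAt_comp_line hdiff x₀ o s)
    exact (funext hslope ▸ hsecond v).unique (hsecond o)
  rw [laplacian_eq_sum_fderiv_fderiv (stdOrthonormalBasis ℝ E),
    Finset.sum_congr rfl fun i _ => hpure _ ((stdOrthonormalBasis ℝ E).norm_eq_one i)]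
  simp

theorem isRadialSol_of_laplacian_eq (hu : ContDiff ℝ 2 u)
    (hrad : ∀ x y, ‖x - x₀‖ = ‖y - x₀‖ → u x = u y) (hlap : ∀ x, Δ u x = -f (u x))
    (ho : ‖o‖ = 1) :
    IsRadialSol f (Module.finrank ℝ E) (fun r => u (x₀ + r • o))
      fun r => fderiv ℝ u (x₀ + r • o) o := by
  set U : ℝ → ℝ := fun r => u (x₀ + r • o)
  set V : ℝ → ℝ := fun r => fderiv ℝ u (x₀ + r • o) o
  have hnorm := norm_add_smul_sub_of_norm_eq_one ho x₀
  have hU : ∀ r, HasDerivAt U (V r) r :=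
    hasDerivAt_comp_line (hu.differentiable two_ne_zero) x₀ o
  have hV : ∀ r, HasDerivAt V (fderiv ℝ (fderiv ℝ u) (x₀ + r • o) o o) r :=
    hasDerivAt_fderiv_comp_line hu x₀ o o
  have hprofile : u = fun x => U ‖x - x₀‖ := funext fun x =>
    hrad _ _ (by rw [hnorm, abs_norm])
  refine ⟨hU, fun r hr => ?_, ?_, ?_⟩
  · have hne : x₀ + r • o ≠ x₀ := fun h => hr.ne' <| by
      rw [← abs_of_pos hr, ← hnorm r, h, sub_self, norm_zero]
    have hr' : ‖x₀ + r • o - x₀‖ = r := by rw [hnorm, abs_of_pos hr]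
    have hpolar := laplacian_comp_norm_sub hne (Eventually.of_forall hU) (hr'.symm ▸ hV r)
    rw [← hprofile, hlap, hr'] at hpolar
    exact (hV r).congr_deriv (by linarith)
  · have hcenter := laplacian_center_of_radial hu hrad ho
    rw [hlap] at hcenter
    have : Nontrivial E := nontrivial_of_ne o 0 (norm_ne_zero_iff.1 (ho ▸ one_ne_zero))
    have hdim : (Module.finrank ℝ E : ℝ) ≠ 0 := Nat.cast_ne_zero.2 Module.finrank_pos.ne'
    refine (hV 0).congr_deriv ?_
    simp only [U, zero_smul, add_zero]
    field_simp
    linarith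
  · have heven : U ∘ Neg.neg = U := funext fun r =>
      hrad _ _ (by rw [hnorm, hnorm, abs_neg])
    have hneg := (hU (-0)).scomp 0 (hasDerivAt_neg 0)
    rw [neg_zero, neg_one_smul] at hneg
    linarith [(hU 0).unique (by rwa [heven] at hneg)]

theorem IsDecayingSol.exists_isGroundState [Nontrivial E] {K : NNReal} {δ : ℝ}
    (h : IsDecayingSol f u) (hf : LipschitzWith K f) (hδ : 0 < δ)
    (hanti : StrictAntiOn f (Set.Icc 0 δ)) (hmax : ∀ x, u x ≤ u x₀) (hx₀ : δ ≤ u x₀)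
    (hlt : ∀ x, u x < π / 2) :
    ∃ U V, IsGroundState f (Module.finrank ℝ E) U V ∧ ∀ x, u x = U ‖x - x₀‖ := by
  obtain ⟨o, ho⟩ := exists_norm_eq E zero_le_one
  have hrad : ∀ x y, ‖x - x₀‖ = ‖y - x₀‖ → u x = u y := fun x y =>
    h.radial hf hδ hanti hmax hx₀
  have hray : Tendsto (fun r : ℝ => x₀ + r • o) atTop (cocompact E) := by
    rw [← Metric.cobounded_eq_cocompact, ← tendsto_norm_atTop_iff_cobounded]
    refine tendsto_atTop_mono (fun r => ?_) (tendsto_atTop_add_const_right _ (-‖x₀‖) tendsto_id)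
    have := norm_sub_le (x₀ + r • o) x₀
    rw [norm_add_smul_sub_of_norm_eq_one ho] at this
    simp only [id]
    linarith [le_abs_self r]
  refine ⟨_, _, ⟨isRadialSol_of_laplacian_eq h.contDiff hrad h.laplacian_eq ho,
    fun r _ => h.pos _, fun r _ => hlt _, h.tendsto_zero.comp hray⟩, fun x => hrad _ _ ?_⟩
  rw [norm_add_smul_sub_of_norm_eq_one ho, abs_norm]

end RadialProfile

section RadialSolutionsInSpace

open InnerProductSpace Laplacian

variable {E : Type*} [NormedAddCommGroup E] [InnerProductSpace ℝ E] {U V f : ℝ → ℝ} {n : ℕ}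

theorem hasFDerivAt_comp_norm_zero (hU : HasDerivAt U 0 0) :
    HasFDerivAt (fun x : E => U ‖x‖) (0 : E →L[ℝ] ℝ) 0 := by
  have hnorm : Tendsto (fun x : E => ‖x‖) (nhds 0) (nhds 0) := tendsto_norm_zero
  have hlittle : (fun r => U r - U 0) =o[nhds 0] fun r => r := by simpa using hU.isLittleO
  refine HasFDerivAt.of_isLittleO ?_
  rw [← Asymptotics.isLittleO_norm_right]
  simpa [Function.comp_def] using hlittle.comp_tendsto hnorm

theorem IsRadialSol.hasFDerivAt_comp_norm (h : IsRadialSol f n U V) (x : E) :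
    HasFDerivAt (fun z : E => U ‖z‖) ((V ‖x‖ / ‖x‖) • realInnerL E x) x := by
  rcases eq_or_ne x 0 with rfl | hx
  · have hU := h.hasDerivAt 0
    rw [h.deriv_zero] at hU
    simpa using hasFDerivAt_comp_norm_zero (E := E) hU
  · simpa using hasFDerivAt_comp_norm_sub hx (h.hasDerivAt ‖x - 0‖)

theorem IsRadialSol.hasFDerivAt_fderiv_comp_norm_zero (h : IsRadialSol f n U V) :
    HasFDerivAt (fderiv ℝ fun z : E => U ‖z‖) (-(f (U 0) / n) • realInnerL E) 0 := by
  have hnorm : Tendsto (fun x : E => ‖x‖) (nhds 0) (nhds 0) := tendsto_norm_zero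
  have hlittle := (h.hasDerivAt_deriv_zero.isLittleO.comp_tendsto hnorm).norm_left.norm_right
  refine HasFDerivAt.of_isLittleO ?_
  rw [← Asymptotics.isLittleO_norm_left, ← Asymptotics.isLittleO_norm_right]
  refine hlittle.congr (fun x => ?_) fun x => by simp
  rw [(h.hasFDerivAt_comp_norm x).fderiv, (h.hasFDerivAt_comp_norm 0).fderiv]
  rcases eq_or_ne x 0 with rfl | hx
  · simp
  have hnx : ‖x‖ ≠ 0 := norm_ne_zero_iff.2 hx
  have hBx : ‖realInnerL E x‖ = ‖x‖ := innerSL_apply_norm ℝ x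
  set c := -(f (U 0) / n)
  calc ‖V ‖x‖ - V 0 - (‖x‖ - 0) • c‖ = |(V ‖x‖ / ‖x‖ - c) * ‖x‖| := by
        rw [h.deriv_zero, sub_mul, div_mul_cancel₀ _ hnx, sub_zero, sub_zero, smul_eq_mul,
          mul_comm, Real.norm_eq_abs]
    _ = ‖(V ‖x‖ / ‖x‖ - c) • realInnerL E x‖ := by
        rw [norm_smul, hBx, abs_mul, abs_norm, Real.norm_eq_abs]
    _ = _ := by
        rw [sub_smul (V ‖x‖ / ‖x‖) c (realInnerL E x), map_zero, smul_zero, sub_zero, sub_zero]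
        rfl

theorem IsRadialSol.differentiable_fderiv_comp_norm
    (h : IsRadialSol f n U V) : Differentiable ℝ (fderiv ℝ fun z : E => U ‖z‖) := by
  intro x
  rcases eq_or_ne x 0 with rfl | hx
  · exact h.hasFDerivAt_fderiv_comp_norm_zero.differentiableAt
  · have hV := h.hasDerivAt_deriv ‖x - 0‖ (norm_pos_iff.2 (sub_ne_zero.2 hx))
    simpa using (hasFDerivAt_fderiv_comp_norm_sub hx
      (Eventually.of_forall h.hasDerivAt) hV).differentiableAt

variable [FiniteDimensional ℝ E]

theorem IsRadialSol.laplacian_comp_norm [Nontrivial E]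
    (h : IsRadialSol f (Module.finrank ℝ E) U V) (x : E) :
    Δ (fun z : E => U ‖z‖) x = -f (U ‖x‖) := by
  rcases eq_or_ne x 0 with rfl | hx
  · have hdim : (Module.finrank ℝ E : ℝ) ≠ 0 := Nat.cast_ne_zero.2 Module.finrank_pos.ne'
    rw [laplacian_eq_sum_fderiv_fderiv (stdOrthonormalBasis ℝ E),
      h.hasFDerivAt_fderiv_comp_norm_zero.fderiv]
    simp [field]
  · have hV := h.hasDerivAt_deriv ‖x - 0‖ (norm_pos_iff.2 (sub_ne_zero.2 hx))
    have hpolar := laplacian_comp_norm_sub hx (Eventually.of_forall h.hasDerivAt) hV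
    simp only [sub_zero] at hpolar
    linarith

end RadialSolutionsInSpace

section NuclearChart

open InnerProductSpace Laplacian

variable {d : ℕ} {a b : ℝ} {u : EuclideanSpace ℝ (Fin d) → ℝ} {x : EuclideanSpace ℝ (Fin d)}

theorem laplacian_eq_sum_pd_pd (hu : DifferentiableAt ℝ (fderiv ℝ u) x) :
    Δ u x = ∑ i, pd i (pd i u) x := by
  rw [laplacian_eq_sum_fderiv_fderiv (EuclideanSpace.basisFun (Fin d) ℝ)]
  refine Finset.sum_congr rfl fun i _ => ?_
  rw [pd, show pd i u = fun y => fderiv ℝ u y (EuclideanSpace.single i 1) from rfl,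
    fderiv_clm_apply hu (differentiableAt_const _)]
  simp

theorem pd_sin_comp (hu : DifferentiableAt ℝ u x) (i : Fin d) :
    pd i (fun y => sin (u y)) x = cos (u x) * pd i u x := by
  rw [pd, hu.hasFDerivAt.sin.fderiv]
  rfl

theorem pd_sin_comp_div (hu : DifferentiableAt ℝ u x) (hcos : cos (u x) ≠ 0) (i : Fin d) :
    pd i (fun y => sin (u y)) x / (1 - sin (u x) ^ 2) = pd i u x / cos (u x) := by
  rw [pd_sin_comp hu, ← cos_sq']
  field_simp

theorem pd_div_cos_comp {v : EuclideanSpace ℝ (Fin d) → ℝ} (hu : DifferentiableAt ℝ u x)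
    (hv : DifferentiableAt ℝ v x) (hcos : cos (u x) ≠ 0) (i : Fin d) :
    pd i (fun y => v y / cos (u y)) x =
      pd i v x / cos (u x) + sin (u x) / cos (u x) ^ 2 * (v x * pd i u x) := by
  have hinv : HasFDerivAt (fun y => (cos (u y))⁻¹) _ x :=
    (hasDerivAt_inv hcos).comp_hasFDerivAt x hu.hasFDerivAt.cos
  simp only [div_eq_mul_inv]
  rw [pd, (hv.hasFDerivAt.fun_mul hinv).fderiv]
  simp only [pd, add_apply, smul_apply, smul_eq_mul]
  field_simp
  ring

theorem nuclearNLS_sin_comp_iff (hu : Differentiable ℝ u)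
    (hu' : Differentiable ℝ (fderiv ℝ u)) (hcos : ∀ x, cos (u x) ≠ 0) :
    NuclearNLS d a b (fun x => sin (u x)) ↔ ∀ x, Δ u x = -nlsForce a b (u x) := by
  refine forall_congr' fun x => ?_
  have hpd : ∀ i, DifferentiableAt ℝ (pd i u) x := fun i =>
    (hu' x).clm_apply (differentiableAt_const _)
  have hflux : ∀ i, (fun y => pd i (fun z => sin (u z)) y / (1 - sin (u y) ^ 2)) =
      fun y => pd i u y / cos (u y) := fun i => funext fun y => pd_sin_comp_div (hu y) (hcos y) i
  simp only [hflux, pd_div_cos_comp (hu x) (hpd _) (hcos x), pd_sin_comp (hu x)]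
  simp only [← cos_sq', laplacian_eq_sum_pd_pd (hu' x), Finset.sum_add_distrib,
    ← Finset.sum_div, ← Finset.mul_sum, mul_pow, ← sq]
  set S := ∑ i, pd i (pd i u) x
  set T := ∑ i, pd i u x ^ 2
  have hne := hcos x
  have hfactor : -(S / cos (u x) + sin (u x) / cos (u x) ^ 2 * T) +
      cos (u x) ^ 2 * T / (cos (u x) ^ 2) ^ 2 * sin (u x) - a * sin (u x) ^ 3 + b * sin (u x) =
      -(S + nlsForce a b (u x)) / cos (u x) := by
    rw [nlsForce]
    field_simp
    ring
  rw [hfactor, div_eq_zero_iff, or_iff_left hne, neg_eq_zero, add_eq_zero_iff_eq_neg]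

end NuclearChart

section NuclearGroundState

open InnerProductSpace Laplacian

variable {d : ℕ} {a b : ℝ} {U V : ℝ → ℝ}

theorem nontrivial_euclideanSpace (hd : 1 ≤ d) : Nontrivial (EuclideanSpace ℝ (Fin d)) :=
  Module.nontrivial_of_finrank_pos (R := ℝ) (by rwa [finrank_euclideanSpace_fin])

theorem IsGroundState.nuclearNLS_sin (hd : 1 ≤ d) (h : IsGroundState (nlsForce a b) d U V) :
    NuclearNLS d a b fun x => sin (U ‖x‖) := by
  have := nontrivial_euclideanSpace hd
  have hsol : IsRadialSol (nlsForce a b) (Module.finrank ℝ (EuclideanSpace ℝ (Fin d))) U V := by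
    simpa using h.toIsRadialSol
  refine (nuclearNLS_sin_comp_iff (fun x => (hsol.hasFDerivAt_comp_norm x).differentiableAt)
    hsol.differentiable_fderiv_comp_norm fun x => ?_).2 hsol.laplacian_comp_norm
  exact (cos_pos_of_mem_Ioo_pi_div_two
    ⟨h.pos _ (norm_nonneg x), h.lt_pi_div_two _ (norm_nonneg x)⟩).ne'

theorem IsGroundState.sin_pos_and_lt_one {f : ℝ → ℝ} {n : ℕ} (h : IsGroundState f n U V) {r : ℝ}
    (hr : 0 ≤ r) : 0 < sin (U r) ∧ sin (U r) < 1 := by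
  have hU : U r ∈ Set.Ioo 0 (π / 2) := ⟨h.pos r hr, h.lt_pi_div_two r hr⟩
  refine ⟨sin_pos_of_mem_Ioo_pi_div_two hU, ?_⟩
  rw [← sin_pi_div_two]
  exact sin_lt_sin_of_lt_of_le_pi_div_two (by linarith [hU.1, pi_pos]) le_rfl hU.2

theorem IsGroundState.strictAntiOn_sin (hd : 1 ≤ d) (hb : 0 < b)
    (h : IsGroundState (nlsForce a b) d U V) : StrictAntiOn (fun r => sin (U r)) (Set.Ici 0) := by
  intro r hr s hs hrs
  refine sin_lt_sin_of_lt_of_le_pi_div_two ?_ (h.lt_pi_div_two r hr).le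
    (h.strictAntiOn hd hb hr hs hrs)
  linarith [h.pos s hs, pi_pos]

theorem IsGroundState.tendsto_sin_norm {E : Type*} [NormedAddCommGroup E] [ProperSpace E]
    {f : ℝ → ℝ} {n : ℕ} (h : IsGroundState f n U V) :
    Tendsto (fun x : E => sin (U ‖x‖)) (cocompact E) (nhds 0) := by
  simpa [Function.comp_def] using
    (continuous_sin.tendsto 0).comp (h.tendsto_zero.comp tendsto_norm_cocompact_atTop)

variable {φ : EuclideanSpace ℝ (Fin d) → ℝ}

theorem isDecayingSol_arcsin_of_nuclearNLS (hφ : ContDiff ℝ 2 φ) (hval : ∀ x, 0 < φ x ∧ φ x < 1)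
    (hlim : Tendsto φ (cocompact _) (nhds 0)) (hnls : NuclearNLS d a b φ) :
    IsDecayingSol (nlsForce a b) fun x => arcsin (φ x) := by
  have hu : ContDiff ℝ 2 fun x => arcsin (φ x) := contDiff_iff_contDiffAt.2 fun x =>
    (contDiffAt_arcsin (by linarith [hval x]) (hval x).2.ne).comp x hφ.contDiffAt
  have hsin : (fun x => sin (arcsin (φ x))) = φ := funext fun x =>
    sin_arcsin (by linarith [hval x]) (hval x).2.le
  refine ⟨hu, fun x => arcsin_pos.2 (hval x).1, ?_, ?_⟩
  · simpa [Function.comp_def] using (continuous_arcsin.tendsto 0).comp hlim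
  · refine (nuclearNLS_sin_comp_iff (hu.differentiable two_ne_zero)
      ((hu.fderiv_right (m := 1) (by norm_num)).differentiable one_ne_zero) fun x => ?_).1
      (by rwa [hsin])
    exact (cos_pos_of_mem_Ioo_pi_div_two
      ⟨arcsin_pos.2 (hval x).1, arcsin_lt_pi_div_two.2 (hval x).2⟩).ne'

theorem exists_isGroundState_eq_sin_of_nuclearNLS (hd : 1 ≤ d) (hb : 0 < b)
    (hφ : ContDiff ℝ 2 φ) (hval : ∀ x, 0 < φ x ∧ φ x < 1)
    (hlim : Tendsto φ (cocompact _) (nhds 0)) (hnls : NuclearNLS d a b φ) :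
    ∃ U V x₀, IsGroundState (nlsForce a b) d U V ∧ ∀ x, φ x = sin (U ‖x - x₀‖) := by
  have := nontrivial_euclideanSpace hd
  have hsol := isDecayingSol_arcsin_of_nuclearNLS hφ hval hlim hnls
  obtain ⟨x₀, hmax⟩ : ∃ x₀, ∀ x, arcsin (φ x) ≤ arcsin (φ x₀) := by
    refine hsol.contDiff.continuous.exists_forall_ge' 0 ?_
    filter_upwards [hsol.tendsto_zero.eventually_lt_const (hsol.pos 0)] with x hx using hx.le
  obtain ⟨δ, hδ, hδx₀, hanti⟩ := exists_strictAntiOn_nlsForce a hb (hsol.pos x₀)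
  obtain ⟨K, hK⟩ := lipschitzWith_nlsForce a b
  obtain ⟨U, V, hUV, hrad⟩ := hsol.exists_isGroundState hK hδ hanti hmax hδx₀.le
    fun x => arcsin_lt_pi_div_two.2 (hval x).2
  refine ⟨U, V, x₀, by simpa using hUV, fun x => ?_⟩
  rw [← hrad, sin_arcsin (by linarith [hval x]) (hval x).2.le]

end NuclearGroundState

theorem uniqueness_up_to_translation (d : ℕ) (hd : 1 ≤ d) (a b : ℝ)
    (hb : 0 < b) (hab : 2 * b < a) :
    ∃ φ₀ : EuclideanSpace ℝ (Fin d) → ℝ,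
      NuclearNLS d a b φ₀ ∧
      (∀ x, 0 < φ₀ x ∧ φ₀ x < 1) ∧
      (∃ ρ : ℝ → ℝ, StrictAntiOn ρ (Set.Ici 0) ∧ ∀ x, φ₀ x = ρ ‖x‖) ∧
      Tendsto φ₀ (cocompact (EuclideanSpace ℝ (Fin d))) (nhds 0) ∧
      ∀ φ : EuclideanSpace ℝ (Fin d) → ℝ,
        ContDiff ℝ 2 φ →
        (∀ x, 0 < φ x ∧ φ x < 1) →
        Tendsto φ (cocompact (EuclideanSpace ℝ (Fin d))) (nhds 0) →
        NuclearNLS d a b φ →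
        ∃ x₀ : EuclideanSpace ℝ (Fin d), ∀ x, φ x = φ₀ (x - x₀) := by
  obtain ⟨U, V, h⟩ := exists_isGroundState hd hb hab
  refine ⟨fun x => sin (U ‖x‖), h.nuclearNLS_sin hd, fun x => h.sin_pos_and_lt_one (norm_nonneg x),
    ⟨fun r => sin (U r), h.strictAntiOn_sin hd hb, fun _ => rfl⟩, h.tendsto_sin_norm, ?_⟩
  intro φ hφ hval hlim hnls
  obtain ⟨U', V', x₀, h', hφ'⟩ :=
    exists_isGroundState_eq_sin_of_nuclearNLS hd hb hφ hval hlim hnls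
  have heq : Set.EqOn U' U (Set.Ici 0) := h'.unique hd (by linarith) hb h
  exact ⟨x₀, fun x => (hφ' x).trans (congrArg sin (heq (norm_nonneg (x - x₀))))⟩
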